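/- Theorem 1.4. Let α ∈ (0,1), d₁, d₂ > 0 and c₁, c₂ ∈ ℝ with c₁ ≠ c₂. Assume f₁, f₂, g₁, g₂ : ℝ² → ℝ are C^{2,α} and there exist constants C₀ > 1 and r₀ > 0 such that for all |u|, |v| ≤ r₀: |f₁(u,v)| ≤ C₀(|u|⁴ + |u||v| + |v|⁴), |g₁(u,v)| ≤ C₀(|u|² + |u||v| + |v|³), |f₂(u,v)| ≤ C₀(|v|⁴ + |u||v| + |u|⁴), |g₂(u,v)| ≤ C₀(|v|² + |u||v| + |u|³). Then there exists M₀ ≥ 1 such that for every M ≥ M₀ and every ε > 0 there exists δ > 0 with the following property: for every pair (u₀, v₀) of bounded, α-Hölder continuous functions ℝ → ℝ satisfying |u₀(x)| e^{x²/M} < δ and |v₀(x)| e^{x²/M} < δ for all x ∈ ℝ, there exists a global classical solution (u,v) of system (GRD) with initial data (u₀, v₀) such that for all t ≥ 0: sup_{x∈ℝ}(|u(x,t)| + |v(x,t)|) ≤ ε/√(1+t) and ∫_ℝ (|u(x,t)| + |v(x,t)|) dx ≤ ε. -/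

import Mathlib

open MeasureTheory Set

noncomputable section

/-- `f` is `α`-Hölder continuous. -/
def HolderCont (α : ℝ) (f : ℝ → ℝ) : Prop :=
  ∃ C : ℝ, ∀ x y : ℝ, |f x - f y| ≤ C * |x - y| ^ α

/-- `h : ℝ² → ℝ` is `C^{2,α}`: twice continuously differentiable with `α`-Hölder
continuous second-order derivatives. -/
def IsC2Holder (α : ℝ) (h : ℝ × ℝ → ℝ) : Prop :=
  ContDiff ℝ 2 h ∧
    ∃ C : ℝ, ∀ x y : ℝ × ℝ,
      ‖iteratedFDeriv ℝ 2 h x - iteratedFDeriv ℝ 2 h y‖ ≤ C * ‖x - y‖ ^ α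

/-- A classical solution of the reaction-diffusion-advection system (GRD)
`u_t = d₁ u_xx + c₁ u_x + f₁(u,v) + ∂_x(g₁(u,v))`,
`v_t = d₂ v_xx + c₂ v_x + f₂(u,v) + ∂_x(g₂(u,v))`
on `ℝ × [0,T)` with initial data `(u₀, v₀)`: jointly continuous, bounded in `x` on
each compact time interval, once continuously differentiable in `t` and twice
continuously differentiable in `x` on `ℝ × (0,T)`, satisfying both equations
pointwise there, and attaining the initial data at `t = 0`. -/
def IsClassicalSolution (d₁ d₂ c₁ c₂ : ℝ) (f₁ f₂ g₁ g₂ : ℝ × ℝ → ℝ)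
    (T : ENNReal) (u₀ v₀ : ℝ → ℝ) (u v : ℝ → ℝ → ℝ) : Prop :=
  (∀ x : ℝ, u x 0 = u₀ x) ∧ (∀ x : ℝ, v x 0 = v₀ x) ∧
  ContinuousOn (fun p : ℝ × ℝ => (u p.1 p.2, v p.1 p.2))
    {p : ℝ × ℝ | 0 ≤ p.2 ∧ ENNReal.ofReal p.2 < T} ∧
  (∀ t₁ : ℝ, 0 ≤ t₁ → ENNReal.ofReal t₁ < T →
    ∃ K : ℝ, ∀ x t : ℝ, 0 ≤ t → t ≤ t₁ → |u x t| + |v x t| ≤ K) ∧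
  ∃ ut vt ux vx uxx vxx gx hx : ℝ → ℝ → ℝ,
    (∀ x t : ℝ, 0 < t → ENNReal.ofReal t < T →
      HasDerivAt (fun τ => u x τ) (ut x t) t ∧
      HasDerivAt (fun ξ => u ξ t) (ux x t) x ∧
      HasDerivAt (fun ξ => ux ξ t) (uxx x t) x ∧
      HasDerivAt (fun ξ => g₁ (u ξ t, v ξ t)) (gx x t) x ∧
      HasDerivAt (fun τ => v x τ) (vt x t) t ∧
      HasDerivAt (fun ξ => v ξ t) (vx x t) x ∧
      HasDerivAt (fun ξ => vx ξ t) (vxx x t) x ∧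
      HasDerivAt (fun ξ => g₂ (u ξ t, v ξ t)) (hx x t) x ∧
      ut x t = d₁ * uxx x t + c₁ * ux x t + f₁ (u x t, v x t) + gx x t ∧
      vt x t = d₂ * vxx x t + c₂ * vx x t + f₂ (u x t, v x t) + hx x t) ∧
    ContinuousOn (fun p : ℝ × ℝ =>
        (ut p.1 p.2, ux p.1 p.2, uxx p.1 p.2, vt p.1 p.2, vx p.1 p.2, vxx p.1 p.2))
      {p : ℝ × ℝ | 0 < p.2 ∧ ENNReal.ofReal p.2 < T}

/-!
Each component is compared with an algebraic envelope of width `√(1 + t)` and constant mass that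
moves with the speed of that component. Because `c₁ ≠ c₂`, the two envelopes separate, and their
product is smaller than their sum by the integrable factor `(1 + s) ^ (-5/4)`; the quartic reaction
terms gain at least as much. The quadratic and cubic flux terms gain less, but there the
`x`-derivative may be moved to the heat kernel. What is produced in the place of the other envelope
does not accumulate, since that envelope passes a given position in bounded time.

Hence the Duhamel map preserves the functions below a small multiple of their envelopes whose
`x`-derivatives are of size `1 + t ^ (-1/2)`. On them it contracts distances in norms with the
weight `exp (-lam t)`, so the Picard iterates converge. At the fixed point the source is Hölder
continuous in `x`, which makes the integral for the second derivatives converge and the solution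
classical.
-/

namespace GRD

open Filter Topology

/-! ### Averages against Gaussian kernels -/

/-- The standard Gaussian density. -/
def gauss (y : ℝ) : ℝ := (√(2 * Real.pi))⁻¹ * Real.exp (-(y ^ 2 / 2))

/-- The `j`-th derivative of the standard Gaussian density up to the sign `(-1) ^ j`, as the
product of the `j`-th Hermite polynomial with the density. -/
def gaussDeriv (j : ℕ) (y : ℝ) : ℝ := Polynomial.aeval y (Polynomial.hermite j) * gauss y

lemma gaussDeriv_zero (y : ℝ) : gaussDeriv 0 y = gauss y := by simp [gaussDeriv]

lemma gaussDeriv_one (y : ℝ) : gaussDeriv 1 y = y * gauss y := by simp [gaussDeriv]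

lemma gaussDeriv_two (y : ℝ) : gaussDeriv 2 y = (y ^ 2 - 1) * gauss y := by
  simp [gaussDeriv, Polynomial.hermite_succ, sq]

lemma gauss_pos (y : ℝ) : 0 < gauss y := by unfold gauss; positivity

lemma gauss_le (y : ℝ) : gauss y ≤ 48 * ((1 + y ^ 2) ^ 3)⁻¹ := by
  have h_norm : (√(2 * Real.pi))⁻¹ ≤ 1 := by
    refine inv_le_one_of_one_le₀ (Real.one_le_sqrt.2 ?_)
    linarith [Real.pi_gt_three]
  have h_cube : (1 + y ^ 2) ^ 3 ≤ 48 * Real.exp (y ^ 2 / 2) := by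
    have h := Real.sum_le_exp_of_nonneg (by positivity : 0 ≤ y ^ 2 / 2) 4
    simp only [Finset.sum_range_succ, Finset.sum_range_zero, Nat.factorial] at h
    push_cast at h
    nlinarith [pow_nonneg (sq_nonneg y) 2, pow_nonneg (sq_nonneg y) 3]
  calc gauss y ≤ 1 * (Real.exp (y ^ 2 / 2))⁻¹ := by
        rw [gauss, Real.exp_neg]; gcongr
    _ ≤ 48 * ((1 + y ^ 2) ^ 3)⁻¹ := by
        rw [one_mul, ← div_eq_mul_inv, inv_le_comm₀ (Real.exp_pos _) (by positivity), inv_div]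
        linarith

lemma abs_le_one_add_sq (y : ℝ) : |y| ≤ 1 + y ^ 2 := by
  nlinarith [sq_abs y, sq_nonneg (|y| - 1), abs_nonneg y]

lemma abs_gaussDeriv_le {j : ℕ} (hj : j ≤ 2) (y : ℝ) :
    |gaussDeriv j y| ≤ 48 * ((1 + y ^ 2) ^ 2)⁻¹ := by
  have h_poly : |gaussDeriv j y| ≤ (1 + y ^ 2) * gauss y := by
    have hg := gauss_pos y
    interval_cases j
    · rw [gaussDeriv_zero, abs_of_pos hg]
      nlinarith [sq_nonneg y]
    · rw [gaussDeriv_one, abs_mul, abs_of_pos hg]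
      gcongr
      exact abs_le_one_add_sq y
    · rw [gaussDeriv_two, abs_mul, abs_of_pos hg]
      gcongr
      exact abs_le.2 ⟨by linarith [sq_nonneg y], by linarith⟩
  calc |gaussDeriv j y| ≤ (1 + y ^ 2) * (48 * ((1 + y ^ 2) ^ 3)⁻¹) :=
        h_poly.trans (by gcongr; exact gauss_le y)
    _ = 48 * ((1 + y ^ 2) ^ 2)⁻¹ := by field_simp

lemma inv_one_add_sq_sq_le (y : ℝ) : ((1 + y ^ 2) ^ 2)⁻¹ ≤ (1 + y ^ 2)⁻¹ :=
  inv_anti₀ (by positivity) (by nlinarith [sq_nonneg y])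

lemma abs_gaussDeriv_le_cauchy {j : ℕ} (hj : j ≤ 2) (y : ℝ) :
    |gaussDeriv j y| ≤ 48 * (1 + y ^ 2)⁻¹ :=
  (abs_gaussDeriv_le hj y).trans (by gcongr 48 * ?_; exact inv_one_add_sq_sq_le y)

lemma continuous_gaussDeriv (j : ℕ) : Continuous (gaussDeriv j) := by
  unfold gaussDeriv gauss
  fun_prop

lemma hasDerivAt_gauss (y : ℝ) : HasDerivAt gauss (-(y * gauss y)) y := by
  have h : HasDerivAt (fun y : ℝ => -(y ^ 2 / 2)) (-y) y :=
    ((hasDerivAt_pow 2 y).div_const 2).fun_neg.congr_deriv (by push_cast; ring)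
  exact (h.exp.const_mul (√(2 * Real.pi))⁻¹).congr_deriv (by unfold gauss; ring)

lemma hasDerivAt_gaussDeriv (j : ℕ) (y : ℝ) :
    HasDerivAt (gaussDeriv j) (-gaussDeriv (j + 1) y) y := by
  refine (((Polynomial.hermite j).hasDerivAt_aeval y).mul (hasDerivAt_gauss y)).congr_deriv ?_
  simp only [gaussDeriv, Polynomial.hermite_succ, map_sub, map_mul, Polynomial.aeval_X]
  ring

lemma integrable_cauchy_const_mul (C : ℝ) : Integrable fun y : ℝ => C * (1 + y ^ 2)⁻¹ :=
  integrable_inv_one_add_sq.const_mul C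

lemma integrable_of_abs_le_cauchy {F : ℝ → ℝ} (hF : Continuous F) {C : ℝ}
    (hC : ∀ y, |F y| ≤ C * (1 + y ^ 2)⁻¹) : Integrable F :=
  (integrable_cauchy_const_mul C).mono' hF.aestronglyMeasurable (ae_of_all _ hC)

lemma integrable_gaussDeriv {j : ℕ} (hj : j ≤ 2) : Integrable (gaussDeriv j) :=
  integrable_of_abs_le_cauchy (continuous_gaussDeriv j) (abs_gaussDeriv_le_cauchy hj)

lemma integral_gauss : ∫ y, gauss y = 1 := by
  have h : ∀ y : ℝ, Real.exp (-(y ^ 2 / 2)) = Real.exp (-(1 / 2) * y ^ 2) := fun y => by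
    congr 1; ring
  simp only [gauss, h]
  rw [integral_const_mul, integral_gaussian, div_div_eq_mul_div, div_one, mul_comm Real.pi]
  exact inv_mul_cancel₀ (by positivity)

lemma integral_gaussDeriv_two : ∫ y, gaussDeriv 2 y = 0 := by
  have h := integral_eq_zero_of_hasDerivAt_of_integrable (hasDerivAt_gaussDeriv 1)
    (integrable_gaussDeriv le_rfl).neg (integrable_gaussDeriv one_le_two)
  rwa [integral_neg, neg_eq_zero] at h

lemma abs_gaussDeriv_mul_le {j : ℕ} (hj : j ≤ 2) {b B : ℝ} (hb : |b| ≤ B) (y : ℝ) :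
    |gaussDeriv j y * b| ≤ 48 * B * (1 + y ^ 2)⁻¹ := by
  rw [abs_mul]
  calc |gaussDeriv j y| * |b| ≤ 48 * (1 + y ^ 2)⁻¹ * B := by
        gcongr; exact abs_gaussDeriv_le_cauchy hj y
    _ = 48 * B * (1 + y ^ 2)⁻¹ := by ring

lemma integrable_gaussDeriv_mul {j : ℕ} (hj : j ≤ 2) {φ : ℝ → ℝ} (hφ : AEStronglyMeasurable φ)
    {B : ℝ} (hB : ∀ y, |φ y| ≤ B) : Integrable fun y => gaussDeriv j y * φ y :=
  (integrable_gaussDeriv hj).mul_bdd hφ (ae_of_all _ hB)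

lemma abs_integral_le_of_cauchy {F : ℝ → ℝ} {C : ℝ} (hF : ∀ y, |F y| ≤ C * (1 + y ^ 2)⁻¹) :
    |∫ y, F y| ≤ C * Real.pi := by
  have h := norm_integral_le_of_norm_le (f := F)
    (integrable_cauchy_const_mul C) (ae_of_all _ hF)
  rwa [integral_const_mul, integral_univ_inv_one_add_sq] at h

lemma integral_mul_comp_affine (k φ : ℝ → ℝ) (X : ℝ) {σ : ℝ} (hσ : 0 < σ) :
    ∫ y, k y * φ (X + σ * y) = ∫ z, σ⁻¹ * k ((z - X) / σ) * φ z := by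
  set F : ℝ → ℝ := fun z => k ((z - X) / σ) * φ z
  have h_comp : ∀ y, k y * φ (X + σ * y) = F (X + σ * y) := fun y => by
    simp only [F]; congr 2; field_simp; ring
  simp only [h_comp, mul_assoc]
  rw [Measure.integral_comp_mul_left (fun w => F (X + w)) σ, integral_add_left_eq_self F X,
    abs_of_pos (inv_pos.2 hσ), smul_eq_mul, integral_const_mul]

lemma hasFDerivAt_rescaled {k k' : ℝ → ℝ} (hk : ∀ y, HasDerivAt k (k' y) y) (b z : ℝ)
    {p : ℝ × ℝ} (hp : 0 < p.2) :
    HasFDerivAt (fun p : ℝ × ℝ => p.2⁻¹ * k ((z - p.1) / p.2) * b)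
      ((-p.2⁻¹ * (p.2⁻¹ * k' ((z - p.1) / p.2) * b)) • ContinuousLinearMap.fst ℝ ℝ ℝ +
        (-p.2⁻¹ * (p.2⁻¹ * (k ((z - p.1) / p.2) +
          (z - p.1) / p.2 * k' ((z - p.1) / p.2)) * b)) • ContinuousLinearMap.snd ℝ ℝ ℝ) p := by
  have h_inv := (hasDerivAt_inv hp.ne').comp_hasFDerivAt p
    (hasFDerivAt_snd : HasFDerivAt _ (ContinuousLinearMap.snd ℝ ℝ ℝ) p)
  have h_arg := ((hasFDerivAt_fst (𝕜 := ℝ) (p := p)).const_sub z).mul h_inv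
  refine ((h_inv.mul ((hk _).comp_hasFDerivAt p h_arg)).mul_const b).congr_fderiv ?_
  ext
  · simp [div_eq_mul_inv]
    ring
  · simp [div_eq_mul_inv]
    field_simp
    ring

lemma inv_one_add_sq_rescaled_le {X₀ X σ₀ σ : ℝ} (hX : |X - X₀| ≤ 1) (hσ : 0 < σ)
    (hσ₀ : σ ≤ 2 * σ₀) (z : ℝ) :
    (1 + ((z - X) / σ) ^ 2)⁻¹ ≤ (3 + 8 * σ₀ ^ 2) * (1 + (z - X₀) ^ 2)⁻¹ := by
  have h_sq : (X - X₀) ^ 2 ≤ 1 := (sq_le_one_iff_abs_le_one _).2 hX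
  have h_num : (z - X) ^ 2 ≤ 4 * σ₀ ^ 2 * ((z - X) / σ) ^ 2 := by
    calc (z - X) ^ 2 = σ ^ 2 * ((z - X) / σ) ^ 2 := by field_simp
      _ ≤ (2 * σ₀) ^ 2 * ((z - X) / σ) ^ 2 := by gcongr
      _ = 4 * σ₀ ^ 2 * ((z - X) / σ) ^ 2 := by ring
  rw [← div_eq_mul_inv, inv_le_comm₀ (by positivity) (by positivity), inv_div,
    div_le_iff₀ (by positivity)]
  nlinarith [sq_nonneg ((z - X) - (X - X₀)), sq_nonneg ((z - X) / σ), sq_nonneg σ₀]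

lemma integrable_rescaled {κ φ : ℝ → ℝ} (hκ : Integrable κ) (hφ : Continuous φ) {B : ℝ}
    (hB : ∀ y, |φ y| ≤ B) (X : ℝ) {σ : ℝ} (hσ : σ ≠ 0) :
    Integrable fun z => σ⁻¹ * κ ((z - X) / σ) * φ z :=
  (((hκ.comp_div hσ).comp_sub_right X).const_mul _).mul_bdd hφ.aestronglyMeasurable
    (ae_of_all _ hB)

/-- A kernel `k` with derivative `k'` whose Gaussian-type tails are controlled algebraically, as
needed to differentiate averages against `k` in position and scale. -/
structure IsDecayingKernel (C : ℝ) (k k' : ℝ → ℝ) : Prop where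
  hasDerivAt : ∀ y, HasDerivAt k (k' y) y
  continuous_deriv : Continuous k'
  abs_le : ∀ y, |k y| ≤ C * (1 + y ^ 2)⁻¹
  abs_deriv_le : ∀ y, |k' y| ≤ C * ((1 + y ^ 2) ^ 2)⁻¹

namespace IsDecayingKernel

variable {C : ℝ} {k k' : ℝ → ℝ} (hk : IsDecayingKernel C k k')
include hk

lemma continuous : Continuous k :=
  continuous_iff_continuousAt.2 fun y => (hk.hasDerivAt y).continuousAt

lemma const_nonneg : 0 ≤ C := by simpa using (abs_nonneg _).trans (hk.abs_le 0)

lemma abs_deriv_le_cauchy (y : ℝ) : |k' y| ≤ C * (1 + y ^ 2)⁻¹ :=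
  (hk.abs_deriv_le y).trans
    (mul_le_mul_of_nonneg_left (inv_one_add_sq_sq_le y) hk.const_nonneg)

lemma abs_scale_deriv_le (y : ℝ) : |k y + y * k' y| ≤ 2 * C * (1 + y ^ 2)⁻¹ := by
  have h_mul : |y * k' y| ≤ C * (1 + y ^ 2)⁻¹ := by
    rw [abs_mul]
    calc |y| * |k' y| ≤ (1 + y ^ 2) * (C * ((1 + y ^ 2) ^ 2)⁻¹) :=
          mul_le_mul (abs_le_one_add_sq y) (hk.abs_deriv_le y) (abs_nonneg _) (by positivity)
      _ = C * (1 + y ^ 2)⁻¹ := by field_simp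
  linarith [abs_add_le (k y) (y * k' y), hk.abs_le y]

lemma integrable : Integrable k := integrable_of_abs_le_cauchy hk.continuous hk.abs_le

lemma integrable_deriv : Integrable k' :=
  integrable_of_abs_le_cauchy hk.continuous_deriv hk.abs_deriv_le_cauchy

lemma integrable_scale_deriv : Integrable fun y => k y + y * k' y :=
  integrable_of_abs_le_cauchy (hk.continuous.add (continuous_id.mul hk.continuous_deriv))
    hk.abs_scale_deriv_le

lemma norm_fderiv_rescaled_le {φ : ℝ → ℝ} {B : ℝ} (hB : ∀ y, |φ y| ≤ B) {X₀ σ₀ : ℝ}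
    {p : ℝ × ℝ} (hσ₀ : 0 < σ₀) (hp : |p.1 - X₀| ≤ 1) (hlo : σ₀ / 2 ≤ p.2) (hhi : p.2 ≤ 2 * σ₀)
    (z : ℝ) :
    ‖(-p.2⁻¹ * (p.2⁻¹ * k' ((z - p.1) / p.2) * φ z)) • ContinuousLinearMap.fst ℝ ℝ ℝ +
        (-p.2⁻¹ * (p.2⁻¹ * (k ((z - p.1) / p.2) +
          (z - p.1) / p.2 * k' ((z - p.1) / p.2)) * φ z)) • ContinuousLinearMap.snd ℝ ℝ ℝ‖ ≤
      3 * C * (σ₀ / 2)⁻¹ ^ 2 * B * (3 + 8 * σ₀ ^ 2) * (1 + (z - X₀) ^ 2)⁻¹ := by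
  have hp2 : 0 < p.2 := (half_pos hσ₀).trans_le hlo
  have h_inv : p.2⁻¹ ≤ (σ₀ / 2)⁻¹ := inv_anti₀ (half_pos hσ₀) hlo
  have h_cauchy := inv_one_add_sq_rescaled_le hp hp2 hhi z
  have hC := hk.const_nonneg
  have hB0 : 0 ≤ B := (abs_nonneg _).trans (hB 0)
  set w := (z - p.1) / p.2
  have h_coeff : ∀ {a A : ℝ}, |a| ≤ A * (1 + w ^ 2)⁻¹ → 0 ≤ A → |-p.2⁻¹ * (p.2⁻¹ * a * φ z)| ≤
      A * (σ₀ / 2)⁻¹ ^ 2 * B * ((3 + 8 * σ₀ ^ 2) * (1 + (z - X₀) ^ 2)⁻¹) := by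
    intro a A ha hA
    have h_decay : |a| ≤ A * ((3 + 8 * σ₀ ^ 2) * (1 + (z - X₀) ^ 2)⁻¹) :=
      ha.trans (mul_le_mul_of_nonneg_left h_cauchy hA)
    calc |-p.2⁻¹ * (p.2⁻¹ * a * φ z)| = p.2⁻¹ ^ 2 * |φ z| * |a| := by
          simp only [abs_mul, abs_neg, abs_of_pos (inv_pos.2 hp2)]; ring
      _ ≤ (σ₀ / 2)⁻¹ ^ 2 * B * (A * ((3 + 8 * σ₀ ^ 2) * (1 + (z - X₀) ^ 2)⁻¹)) := by
          gcongr; exact hB z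
      _ = _ := by ring
  refine (norm_add_le _ _).trans ?_
  rw [norm_smul, norm_smul, ContinuousLinearMap.norm_fst, ContinuousLinearMap.norm_snd, mul_one,
    mul_one, Real.norm_eq_abs, Real.norm_eq_abs]
  linarith [h_coeff (hk.abs_deriv_le_cauchy w) hC,
    h_coeff (hk.abs_scale_deriv_le w) (by positivity)]

/-- Moving the position and the scale from `φ` to the kernel by an affine change of variables makes
the average differentiable for merely continuous bounded `φ`. -/
lemma hasFDerivAt_average {φ : ℝ → ℝ} (hφ : Continuous φ) {B : ℝ} (hB : ∀ y, |φ y| ≤ B) (X : ℝ)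
    {σ : ℝ} (hσ : 0 < σ) :
    HasFDerivAt (fun p : ℝ × ℝ => ∫ y, k y * φ (p.1 + p.2 * y))
      ((-σ⁻¹ * ∫ y, k' y * φ (X + σ * y)) • ContinuousLinearMap.fst ℝ ℝ ℝ +
        (-σ⁻¹ * ∫ y, (k y + y * k' y) * φ (X + σ * y)) • ContinuousLinearMap.snd ℝ ℝ ℝ)
      (X, σ) := by
  have hkc := hk.continuous
  have hk'c := hk.continuous_deriv
  have h_nhds : ∀ᶠ p : ℝ × ℝ in 𝓝 (X, σ), |p.1 - X| ≤ 1 ∧ σ / 2 ≤ p.2 ∧ p.2 ≤ 2 * σ := by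
    have h_fst : ∀ᶠ x in 𝓝 X, |x - X| ≤ 1 := Metric.closedBall_mem_nhds X one_pos
    have h_snd : ∀ᶠ s in 𝓝 σ, σ / 2 ≤ s ∧ s ≤ 2 * σ :=
      Icc_mem_nhds (half_lt_self hσ) (by linarith)
    exact h_fst.prod_nhds h_snd
  have h_diff := hasFDerivAt_integral_of_dominated_of_fderiv_le h_nhds
    (F := fun (p : ℝ × ℝ) z => p.2⁻¹ * k ((z - p.1) / p.2) * φ z)
    (.of_forall fun p => (by fun_prop : Continuous _).aestronglyMeasurable)
    (integrable_rescaled hk.integrable hφ hB X hσ.ne')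
    (by
      refine Continuous.aestronglyMeasurable ?_
      fun_prop)
    (ae_of_all _ fun z p hp => hk.norm_fderiv_rescaled_le hB hσ hp.1 hp.2.1 hp.2.2 z)
    ((integrable_inv_one_add_sq.comp_sub_right X).const_mul _)
    (ae_of_all _ fun z p hp => hasFDerivAt_rescaled hk.hasDerivAt (φ z) z
      ((half_pos hσ).trans_le hp.2.1))
  have h_int' := integrable_rescaled hk.integrable_deriv hφ hB X hσ.ne'
  have h_int_scale := integrable_rescaled hk.integrable_scale_deriv hφ hB X hσ.ne'
  rw [integral_add ((h_int'.const_mul _).smul_const _) ((h_int_scale.const_mul _).smul_const _),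
    integral_smul_const, integral_smul_const, integral_const_mul, integral_const_mul] at h_diff
  rw [integral_mul_comp_affine _ _ _ hσ, integral_mul_comp_affine _ _ _ hσ]
  refine h_diff.congr_of_eventuallyEq ?_
  filter_upwards [h_nhds] with p hp
  exact integral_mul_comp_affine k φ p.1 ((half_pos hσ).trans_le hp.2.1)

end IsDecayingKernel

lemma isDecayingKernel_gaussDeriv {j : ℕ} (hj : j ≤ 1) :
    IsDecayingKernel 48 (gaussDeriv j) (fun y => -gaussDeriv (j + 1) y) where
  hasDerivAt := hasDerivAt_gaussDeriv j
  continuous_deriv := (continuous_gaussDeriv _).neg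
  abs_le := abs_gaussDeriv_le_cauchy (by lia)
  abs_deriv_le y := by rw [abs_neg]; exact abs_gaussDeriv_le (by lia) y

/-! ### The heat semigroup with drift -/

/-- The standard deviation at time `θ` of the heat kernel with diffusivity `d`. -/
def heatScale (d θ : ℝ) : ℝ := √(2 * d * θ)

/-- The `j`-th `x`-derivative of the solution at time `θ` of `u_t = d u_xx + c u_x` with initial
data `φ`. For `j = 0` it is meaningful at `θ = 0`; for `0 < j` the value at `θ = 0` is junk. -/
def heatOp (j : ℕ) (d c θ : ℝ) (φ : ℝ → ℝ) (x : ℝ) : ℝ :=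
  (heatScale d θ)⁻¹ ^ j * ∫ y, gaussDeriv j y * φ (x + c * θ + heatScale d θ * y)

/-- The constant of the sup-norm smoothing estimates for `heatOp`. -/
def heatConst (d : ℝ) : ℝ := 48 * Real.pi * (1 + (√(2 * d))⁻¹) ^ 2

lemma heatConst_pos (d : ℝ) : 0 < heatConst d := by unfold heatConst; positivity

lemma heatScale_pos {d θ : ℝ} (hd : 0 < d) (hθ : 0 < θ) : 0 < heatScale d θ := by
  unfold heatScale; positivity

lemma heatScale_nonneg (d θ : ℝ) : 0 ≤ heatScale d θ := Real.sqrt_nonneg _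

lemma one_le_one_add_inv_sqrt (d : ℝ) : 1 ≤ 1 + (√(2 * d))⁻¹ :=
  le_add_of_nonneg_right (by positivity)

lemma inv_heatScale_rpow_le {d θ p : ℝ} (hd : 0 < d) (hθ : 0 ≤ θ) (hp : 0 ≤ p) (hp2 : p ≤ 2) :
    (heatScale d θ)⁻¹ ^ p ≤ (1 + (√(2 * d))⁻¹) ^ 2 * θ ^ (-p / 2) := by
  have h_scale : (heatScale d θ)⁻¹ = (√(2 * d))⁻¹ * θ ^ (-(1 / 2) : ℝ) := by
    rw [heatScale, Real.sqrt_mul (by positivity), mul_inv, Real.sqrt_eq_rpow θ, Real.rpow_neg hθ]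
  have h_const : (√(2 * d))⁻¹ ^ p ≤ (1 + (√(2 * d))⁻¹) ^ 2 := by
    calc (√(2 * d))⁻¹ ^ p ≤ (1 + (√(2 * d))⁻¹) ^ p := by gcongr; linarith
      _ ≤ (1 + (√(2 * d))⁻¹) ^ (2 : ℝ) :=
          Real.rpow_le_rpow_of_exponent_le (one_le_one_add_inv_sqrt d) hp2
      _ = (1 + (√(2 * d))⁻¹) ^ 2 := Real.rpow_two _
  rw [h_scale, Real.mul_rpow (by positivity) (by positivity), ← Real.rpow_mul hθ,
    show -(1 / 2) * p = -p / 2 by ring]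
  gcongr

lemma hasDerivAt_heatScale {d θ : ℝ} (hd : 0 < d) (hθ : 0 < θ) :
    HasDerivAt (heatScale d) (d / heatScale d θ) θ := by
  have h := ((hasDerivAt_id θ).const_mul (2 * d)).sqrt (by simp only [id]; positivity)
  refine h.congr_deriv ?_
  simp only [id, heatScale, mul_one]
  field_simp

section BoundedData

variable {d c θ B : ℝ} {φ : ℝ → ℝ}

lemma abs_heatOp_le {j : ℕ} (hj : j ≤ 2) (hd : 0 < d) (hθ : 0 ≤ θ) (hB : ∀ y, |φ y| ≤ B)
    (x : ℝ) : |heatOp j d c θ φ x| ≤ heatConst d * θ ^ (-(j : ℝ) / 2) * B := by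
  have h_average := abs_integral_le_of_cauchy fun y =>
    abs_gaussDeriv_mul_le hj (hB (x + c * θ + heatScale d θ * y)) y
  have h_scale := inv_heatScale_rpow_le hd hθ (Nat.cast_nonneg j) (by exact_mod_cast hj)
  rw [Real.rpow_natCast] at h_scale
  rw [heatOp, abs_mul, abs_of_nonneg (by have := heatScale_nonneg d θ; positivity)]
  calc _ ≤ (1 + (√(2 * d))⁻¹) ^ 2 * θ ^ (-(j : ℝ) / 2) * (48 * B * Real.pi) := by gcongr
    _ = heatConst d * θ ^ (-(j : ℝ) / 2) * B := by unfold heatConst; ring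

lemma integrable_heatOp_integrand {j : ℕ} (hj : j ≤ 2) (hφ : Continuous φ)
    (hB : ∀ y, |φ y| ≤ B) (X σ : ℝ) : Integrable fun y => gaussDeriv j y * φ (X + σ * y) :=
  integrable_gaussDeriv_mul hj
    (by fun_prop : Continuous fun y => φ (X + σ * y)).aestronglyMeasurable fun _ => hB _

lemma heatOp_add {j : ℕ} (hj : j ≤ 2) (hφ : Continuous φ) (hB : ∀ y, |φ y| ≤ B) {ψ : ℝ → ℝ}
    (hψ : Continuous ψ) {B' : ℝ} (hB' : ∀ y, |ψ y| ≤ B') (x : ℝ) :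
    heatOp j d c θ (fun y => φ y + ψ y) x = heatOp j d c θ φ x + heatOp j d c θ ψ x := by
  simp only [heatOp, mul_add]
  rw [integral_add (integrable_heatOp_integrand hj hφ hB _ _)
    (integrable_heatOp_integrand hj hψ hB' _ _), mul_add]

lemma heatOp_sub {j : ℕ} (hj : j ≤ 2) (hφ : Continuous φ) (hB : ∀ y, |φ y| ≤ B) {ψ : ℝ → ℝ}
    (hψ : Continuous ψ) {B' : ℝ} (hB' : ∀ y, |ψ y| ≤ B') (x : ℝ) :
    heatOp j d c θ (fun y => φ y - ψ y) x = heatOp j d c θ φ x - heatOp j d c θ ψ x := by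
  simp only [heatOp, mul_sub]
  rw [integral_sub (integrable_heatOp_integrand hj hφ hB _ _)
    (integrable_heatOp_integrand hj hψ hB' _ _), mul_sub]

/-- Since `gaussDeriv 2` has mean zero, the value of `φ` at the centre may be subtracted. -/
lemma integral_gaussDeriv_two_mul_sub (hφ : Continuous φ) (hB : ∀ y, |φ y| ≤ B) (X σ : ℝ) :
    ∫ y, gaussDeriv 2 y * (φ (X + σ * y) - φ X) = ∫ y, gaussDeriv 2 y * φ (X + σ * y) := by
  simp only [mul_sub]
  rw [integral_sub (integrable_heatOp_integrand le_rfl hφ hB X σ)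
    ((integrable_gaussDeriv le_rfl).mul_const _), integral_mul_const, integral_gaussDeriv_two,
    zero_mul, sub_zero]

lemma abs_gaussDeriv_two_mul_sub_le {H : ℝ} (hH : ∀ a b, |φ a - φ b| ≤ H * √|a - b|) (X : ℝ)
    {σ : ℝ} (hσ : 0 ≤ σ) (y : ℝ) :
    |gaussDeriv 2 y * (φ (X + σ * y) - φ X)| ≤ 48 * H * √σ * (1 + y ^ 2)⁻¹ := by
  have hH0 : 0 ≤ H := by simpa using (abs_nonneg _).trans (hH 1 0)
  have h_sqrt : √|y| ≤ 1 + y ^ 2 := by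
    rw [Real.sqrt_le_left (by positivity)]
    nlinarith [abs_le_one_add_sq y, sq_nonneg y]
  have h_incr : |φ (X + σ * y) - φ X| ≤ H * (√σ * (1 + y ^ 2)) := by
    refine (hH _ _).trans ?_
    rw [add_sub_cancel_left, abs_mul, abs_of_nonneg hσ, Real.sqrt_mul hσ]
    gcongr
  rw [abs_mul]
  calc _ ≤ 48 * ((1 + y ^ 2) ^ 2)⁻¹ * (H * (√σ * (1 + y ^ 2))) := by
        gcongr; exact abs_gaussDeriv_le le_rfl y
    _ = 48 * H * √σ * (1 + y ^ 2)⁻¹ := by field_simp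

lemma abs_heatOp_two_le_of_holder (hd : 0 < d) (hθ : 0 ≤ θ) (hφ : Continuous φ)
    (hB : ∀ y, |φ y| ≤ B) {H : ℝ} (hH : ∀ a b, |φ a - φ b| ≤ H * √|a - b|) (x : ℝ) :
    |heatOp 2 d c θ φ x| ≤ heatConst d * θ ^ (-(3 / 4) : ℝ) * H := by
  have hH0 : 0 ≤ H := by simpa using (abs_nonneg _).trans (hH 1 0)
  have hσ := heatScale_nonneg d θ
  have h_average := abs_integral_le_of_cauchy
    (abs_gaussDeriv_two_mul_sub_le hH (x + c * θ) hσ)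
  rw [integral_gaussDeriv_two_mul_sub hφ hB] at h_average
  have h_scale : (heatScale d θ)⁻¹ ^ 2 * √(heatScale d θ) ≤
      (1 + (√(2 * d))⁻¹) ^ 2 * θ ^ (-(3 / 4) : ℝ) := by
    have h_pow : (heatScale d θ)⁻¹ ^ 2 * √(heatScale d θ) = (heatScale d θ)⁻¹ ^ (3 / 2 : ℝ) := by
      rcases hσ.eq_or_lt with h0 | hpos
      · simp [← h0]
      · rw [Real.sqrt_eq_rpow, ← Real.rpow_natCast, Real.inv_rpow hσ, Real.inv_rpow hσ,
          ← Real.rpow_neg hσ, ← Real.rpow_neg hσ, ← Real.rpow_add hpos]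
        norm_num
    rw [h_pow]
    convert inv_heatScale_rpow_le hd hθ (by norm_num : (0 : ℝ) ≤ 3 / 2) (by norm_num) using 3
    norm_num
  rw [heatOp, abs_mul, abs_of_nonneg (by positivity)]
  calc _ ≤ (heatScale d θ)⁻¹ ^ 2 * (48 * H * √(heatScale d θ) * Real.pi) := by gcongr
    _ = (heatScale d θ)⁻¹ ^ 2 * √(heatScale d θ) * (48 * H * Real.pi) := by ring
    _ ≤ (1 + (√(2 * d))⁻¹) ^ 2 * θ ^ (-(3 / 4) : ℝ) * (48 * H * Real.pi) := by gcongr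
    _ = heatConst d * θ ^ (-(3 / 4) : ℝ) * H := by unfold heatConst; ring

lemma hasDerivAt_heatOp {j : ℕ} (hj : j ≤ 1) (hd : 0 < d) (hθ : 0 < θ) (hφ : Continuous φ)
    (hB : ∀ y, |φ y| ≤ B) (x : ℝ) :
    HasDerivAt (heatOp j d c θ φ) (heatOp (j + 1) d c θ φ x) x := by
  have h_average := (isDecayingKernel_gaussDeriv hj).hasFDerivAt_average hφ hB (x + c * θ)
    (heatScale_pos hd hθ)
  have h_curve : HasDerivAt (fun x => (x + c * θ, heatScale d θ)) ((1 : ℝ), (0 : ℝ)) x :=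
    ((hasDerivAt_id x).add_const _).prodMk (hasDerivAt_const x _)
  refine ((h_average.comp_hasDerivAt x h_curve).const_mul
    ((heatScale d θ)⁻¹ ^ j)).congr_deriv ?_
  simp only [_root_.add_apply, _root_.smul_apply,
    ContinuousLinearMap.coe_fst', ContinuousLinearMap.coe_snd', smul_eq_mul, mul_one, mul_zero,
    add_zero, neg_mul, integral_neg, heatOp]
  ring

lemma hasDerivAt_heatOp_time (hd : 0 < d) (hθ : 0 < θ) (hφ : Continuous φ)
    (hB : ∀ y, |φ y| ≤ B) (x : ℝ) :
    HasDerivAt (fun θ => heatOp 0 d c θ φ x)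
      (d * heatOp 2 d c θ φ x + c * heatOp 1 d c θ φ x) θ := by
  have h_average := (isDecayingKernel_gaussDeriv zero_le_one).hasFDerivAt_average hφ hB
    (x + c * θ) (heatScale_pos hd hθ)
  have h_curve : HasDerivAt (fun θ => (x + c * θ, heatScale d θ)) (c, d / heatScale d θ) θ :=
    (((hasDerivAt_id θ).const_mul c).const_add x).prodMk (hasDerivAt_heatScale hd hθ)
      |>.congr_deriv (by simp)
  have h_kernel : ∀ y, gaussDeriv 0 y + y * -gaussDeriv (0 + 1) y = -gaussDeriv 2 y := fun y => by
    rw [zero_add, gaussDeriv_zero, gaussDeriv_one, gaussDeriv_two]; ring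
  have h_zero : (fun θ => heatOp 0 d c θ φ x) =
      fun θ => ∫ y, gaussDeriv 0 y * φ (x + c * θ + heatScale d θ * y) := by
    ext θ; rw [heatOp, pow_zero, one_mul]
  rw [h_zero]
  refine (h_average.comp_hasDerivAt θ h_curve).congr_deriv ?_
  simp only [h_kernel, _root_.add_apply, _root_.smul_apply,
    ContinuousLinearMap.coe_fst', ContinuousLinearMap.coe_snd', smul_eq_mul, neg_mul,
    integral_neg, heatOp, zero_add]
  ring

lemma le_sqrt_mul {a b m : ℝ} (hm : 0 ≤ m) (ha : m ≤ a) (hb : m ≤ b) : m ≤ √(a * b) :=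
  Real.le_sqrt_of_sq_le (by rw [sq]; exact mul_le_mul ha hb hm (hm.trans ha))

/-- Interpolation between the sup bound of `heatOp 1` and its Lipschitz bound. -/
lemma abs_heatOp_one_sub_le (hd : 0 < d) (hθ : 0 < θ) (hφ : Continuous φ)
    (hB : ∀ y, |φ y| ≤ B) (x x' : ℝ) :
    |heatOp 1 d c θ φ x - heatOp 1 d c θ φ x'| ≤
      2 * heatConst d * θ ^ (-(3 / 4) : ℝ) * B * √|x - x'| := by
  have hB0 : 0 ≤ B := (abs_nonneg _).trans (hB 0)
  have hC := heatConst_pos d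
  have h_sup : |heatOp 1 d c θ φ x - heatOp 1 d c θ φ x'| ≤
      2 * (heatConst d * θ ^ (-(1 / 2) : ℝ) * B) := by
    have h := fun y => abs_heatOp_le (j := 1) one_le_two hd hθ.le hB y (c := c)
    simp only [Nat.cast_one, neg_div] at h
    linarith [abs_sub (heatOp 1 d c θ φ x) (heatOp 1 d c θ φ x'), h x, h x']
  have h_lip : |heatOp 1 d c θ φ x - heatOp 1 d c θ φ x'| ≤
      heatConst d * θ ^ (-1 : ℝ) * B * |x - x'| := by
    refine convex_univ.norm_image_sub_le_of_norm_hasDerivWithin_le (f := heatOp 1 d c θ φ)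
      (fun y _ => (hasDerivAt_heatOp le_rfl hd hθ hφ hB y).hasDerivWithinAt) (fun y _ => ?_)
      trivial trivial
    simpa using abs_heatOp_le (j := 2) le_rfl hd hθ.le hB y (c := c)
  have h_rpow : (θ ^ (-(3 / 4) : ℝ)) ^ 2 = θ ^ (-(1 / 2) : ℝ) * θ ^ (-1 : ℝ) := by
    rw [← Real.rpow_add hθ, ← Real.rpow_mul_natCast hθ.le]; norm_num
  refine (le_sqrt_mul (abs_nonneg _) h_sup h_lip).trans (Real.sqrt_le_iff.2 ⟨by positivity, ?_⟩)
  have h_nonneg : 0 ≤ heatConst d ^ 2 * (θ ^ (-(3 / 4) : ℝ)) ^ 2 * B ^ 2 * |x - x'| := by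
    positivity
  simp only [mul_pow, Real.sq_sqrt (abs_nonneg _)]
  rw [h_rpow] at h_nonneg ⊢
  linarith

lemma heatOp_zero_deriv (hd : 0 < d) (hθ : 0 < θ) {φ' : ℝ → ℝ} (hφ' : Continuous φ')
    (hB : ∀ y, |φ y| ≤ B) {B' : ℝ} (hB' : ∀ y, |φ' y| ≤ B')
    (hder : ∀ y, HasDerivAt φ (φ' y) y) (x : ℝ) :
    heatOp 0 d c θ φ' x = heatOp 1 d c θ φ x := by
  have hφ : Continuous φ := continuous_iff_continuousAt.2 fun y => (hder y).continuousAt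
  have h_kernel := hasDerivAt_heatOp (j := 0) zero_le_one hd hθ hφ hB x (c := c)
  have h_data : HasDerivAt (heatOp 0 d c θ φ) (heatOp 0 d c θ φ' x) x := by
    refine ((hasDerivAt_integral_of_dominated_loc_of_deriv_le (s := univ) univ_mem
      (F := fun x y => gaussDeriv 0 y * φ (x + c * θ + heatScale d θ * y))
      (F' := fun x y => gaussDeriv 0 y * φ' (x + c * θ + heatScale d θ * y))
      (.of_forall fun r => (integrable_heatOp_integrand zero_le_two hφ hB _ _).1)
      (integrable_heatOp_integrand zero_le_two hφ hB _ _)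
      (integrable_heatOp_integrand zero_le_two hφ' hB' _ _).1
      (ae_of_all _ fun y r _ => abs_gaussDeriv_mul_le zero_le_two (hB' _) y)
      (integrable_cauchy_const_mul _)
      (ae_of_all _ fun y r _ => ?_)).2.const_mul ((heatScale d θ)⁻¹ ^ 0))
    have h_arg : HasDerivAt (fun r => r + c * θ + heatScale d θ * y) 1 r :=
      ((hasDerivAt_id r).add_const _).add_const _
    simpa using ((hder _).comp r h_arg).const_mul (gaussDeriv 0 y)
  exact h_data.unique h_kernel

lemma continuousWithinAt_gaussDeriv_average {j : ℕ} (hj : j ≤ 2) {Y : Type*} [TopologicalSpace Y]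
    [FirstCountableTopology Y] {Φ : Y → ℝ → ℝ} {S : Set Y} {p₀ : Y}
    (hΦ : ∀ᶠ p in 𝓝[S] p₀, Continuous (Φ p)) (hB : ∀ᶠ p in 𝓝[S] p₀, ∀ y, |Φ p y| ≤ B)
    (h_lim : ∀ y, ContinuousWithinAt (fun p => Φ p y) S p₀) :
    ContinuousWithinAt (fun p => ∫ y, gaussDeriv j y * Φ p y) S p₀ := by
  refine continuousWithinAt_of_dominated ?_ ?_ (integrable_cauchy_const_mul (48 * B))
    (ae_of_all _ fun y => continuousWithinAt_const.mul (h_lim y))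
  · filter_upwards [hΦ] with p hp
    exact ((continuous_gaussDeriv j).mul hp).aestronglyMeasurable
  · filter_upwards [hB] with p hp
    exact ae_of_all _ fun y => abs_gaussDeriv_mul_le hj (hp y) y

end BoundedData

/-! ### The envelope -/

/-- The decay profile of the solutions in the frame `z = x + c t` moving with a component: it is of
size `(1 + t) ^ (-1 / 2)`, has mass independent of `t`, and decays like `|z| ^ (-3 / 2)` outside the
diffusive zone, slowly enough to survive convolution with the heat kernel. -/
def envelope (z t : ℝ) : ℝ := (1 + t) ^ (1 / 4 : ℝ) * (1 + t + z ^ 2) ^ (-(3 / 4) : ℝ)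

lemma envelope_pos {t : ℝ} (ht : 0 ≤ t) (z : ℝ) : 0 < envelope z t := by
  unfold envelope; positivity

lemma continuous_envelope {t : ℝ} (ht : 0 ≤ t) : Continuous fun z => envelope z t := by
  unfold envelope
  exact continuous_const.mul ((by fun_prop : Continuous fun z : ℝ => 1 + t + z ^ 2).rpow_const
    fun z => Or.inl (by positivity))

lemma envelope_le_rpow {t : ℝ} (ht : 0 ≤ t) (z : ℝ) :
    envelope z t ≤ (1 + t) ^ (-(1 / 2) : ℝ) := by
  calc envelope z t ≤ (1 + t) ^ (1 / 4 : ℝ) * (1 + t) ^ (-(3 / 4) : ℝ) := by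
        unfold envelope
        gcongr ?_ * ?_
        exact Real.rpow_le_rpow_of_nonpos (by positivity) (by linarith [sq_nonneg z])
          (by norm_num)
    _ = (1 + t) ^ (-(1 / 2) : ℝ) := by rw [← Real.rpow_add (by positivity)]; norm_num

lemma envelope_le_one {t : ℝ} (ht : 0 ≤ t) (z : ℝ) : envelope z t ≤ 1 :=
  (envelope_le_rpow ht z).trans
    (Real.rpow_le_one_of_one_le_of_nonpos (by linarith) (by norm_num))

lemma rpow_mul_rpow_le_envelope {z t m κ : ℝ} (ht : 0 ≤ t) (hκ : 0 < κ) (hm : 0 < m)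
    (h : 1 + t + z ^ 2 ≤ κ * m) :
    (1 + t) ^ (1 / 4 : ℝ) * m ^ (-(3 / 4) : ℝ) ≤ κ ^ (3 / 4 : ℝ) * envelope z t := by
  have h_rpow : κ ^ (-(3 / 4) : ℝ) * m ^ (-(3 / 4) : ℝ) ≤ (1 + t + z ^ 2) ^ (-(3 / 4) : ℝ) := by
    rw [← Real.mul_rpow hκ.le hm.le]
    exact Real.rpow_le_rpow_of_nonpos (by positivity) h (by norm_num)
  have h_cancel : κ ^ (3 / 4 : ℝ) * κ ^ (-(3 / 4) : ℝ) = 1 := by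
    rw [← Real.rpow_add hκ]; norm_num
  calc (1 + t) ^ (1 / 4 : ℝ) * m ^ (-(3 / 4) : ℝ)
      = κ ^ (3 / 4 : ℝ) * ((1 + t) ^ (1 / 4 : ℝ) * (κ ^ (-(3 / 4) : ℝ) * m ^ (-(3 / 4) : ℝ))) := by
        linear_combination -((1 + t) ^ (1 / 4 : ℝ) * m ^ (-(3 / 4) : ℝ)) * h_cancel
    _ ≤ κ ^ (3 / 4 : ℝ) * envelope z t := by unfold envelope; gcongr

lemma envelope_le_of_weight_le {z z' s t : ℝ} (hs : 0 ≤ s) (hst : s ≤ t)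
    (h : 1 + t + z ^ 2 ≤ 4 * (1 + s + z' ^ 2)) : envelope z' s ≤ 4 * envelope z t := by
  have ht : 0 ≤ t := hs.trans hst
  have h_four : (4 : ℝ) ^ (3 / 4 : ℝ) ≤ 4 := by
    simpa using Real.rpow_le_rpow_of_exponent_le (x := 4) (by norm_num)
      (by norm_num : (3 / 4 : ℝ) ≤ 1)
  calc envelope z' s ≤ (1 + t) ^ (1 / 4 : ℝ) * (1 + s + z' ^ 2) ^ (-(3 / 4) : ℝ) := by
        unfold envelope; gcongr
    _ ≤ 4 ^ (3 / 4 : ℝ) * envelope z t :=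
        rpow_mul_rpow_le_envelope ht (by norm_num) (by positivity) h
    _ ≤ 4 * envelope z t := by gcongr; exact (envelope_pos ht z).le

/-- The constant of the pointwise bound for the convolution of the heat kernel with the
envelope. -/
def convConst (d : ℝ) : ℝ := (1 / d + 4) ^ (3 / 4 : ℝ) * (2 * d) ^ (1 / 4 : ℝ) + 4

lemma convConst_pos {d : ℝ} (hd : 0 < d) : 0 < convConst d := by unfold convConst; positivity

lemma heatScale_sq {d θ : ℝ} (hd : 0 < d) (hθ : 0 < θ) : heatScale d θ ^ 2 = 2 * d * θ :=
  Real.sq_sqrt (by positivity)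

lemma inv_one_add_sq_sq_le_of_far {d s θ z y : ℝ} (hd : 0 < d) (hs : 0 ≤ s) (hθ : 0 < θ)
    (h_far : 4 * (1 + s + (z + heatScale d θ * y) ^ 2) < 1 + (s + θ) + z ^ 2) :
    ((1 + y ^ 2) ^ 2)⁻¹ ≤ convConst d * envelope z (s + θ) * heatScale d θ := by
  have hσ := heatScale_pos hd hθ
  have hσ2 := heatScale_sq hd hθ
  set σ := heatScale d θ
  have h_weight : 1 + (s + θ) + z ^ 2 ≤ (1 / d + 4) * (σ ^ 2 * (1 + y ^ 2)) := by
    have h_expand : (1 / d + 4) * (σ ^ 2 * (1 + y ^ 2)) =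
        2 * θ * (1 + y ^ 2) + 4 * (σ ^ 2 * (1 + y ^ 2)) := by rw [hσ2]; field_simp
    rw [h_expand]
    nlinarith [sq_nonneg (z + σ * y + σ * y), sq_nonneg σ, mul_nonneg hθ.le (sq_nonneg y)]
  have h_env := rpow_mul_rpow_le_envelope (by linarith) (by positivity) (by positivity) h_weight
  have h_split : (σ ^ 2 * (1 + y ^ 2)) ^ (-(3 / 4) : ℝ) * (σ ^ (1 / 2 : ℝ) * σ) =
      (1 + y ^ 2) ^ (-(3 / 4) : ℝ) := by
    rw [Real.mul_rpow (by positivity) (by positivity), ← Real.rpow_natCast σ 2,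
      ← Real.rpow_mul hσ.le, ← Real.rpow_add_one hσ.ne', mul_right_comm, ← Real.rpow_add hσ]
    norm_num
  have h_decay : ((1 + y ^ 2) ^ 2)⁻¹ ≤ (1 + y ^ 2) ^ (-(3 / 4) : ℝ) := by
    rw [← Real.rpow_natCast, ← Real.rpow_neg (by positivity)]
    exact Real.rpow_le_rpow_of_exponent_le (by linarith [sq_nonneg y]) (by norm_num)
  have h_sqrt : σ ^ (1 / 2 : ℝ) ≤ (2 * d) ^ (1 / 4 : ℝ) * (1 + (s + θ)) ^ (1 / 4 : ℝ) := by
    rw [← Real.mul_rpow (by positivity) (by positivity),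
      show (1 / 2 : ℝ) = (2 : ℕ) * (1 / 4 : ℝ) by norm_num, Real.rpow_mul hσ.le,
      Real.rpow_natCast, hσ2]
    gcongr
    linarith
  calc ((1 + y ^ 2) ^ 2)⁻¹ ≤ (σ ^ 2 * (1 + y ^ 2)) ^ (-(3 / 4) : ℝ) * (σ ^ (1 / 2 : ℝ) * σ) := by
        rwa [h_split]
    _ ≤ (σ ^ 2 * (1 + y ^ 2)) ^ (-(3 / 4) : ℝ) *
        ((2 * d) ^ (1 / 4 : ℝ) * (1 + (s + θ)) ^ (1 / 4 : ℝ) * σ) := by gcongr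
    _ = (2 * d) ^ (1 / 4 : ℝ) * σ *
        ((1 + (s + θ)) ^ (1 / 4 : ℝ) * (σ ^ 2 * (1 + y ^ 2)) ^ (-(3 / 4) : ℝ)) := by ring
    _ ≤ (2 * d) ^ (1 / 4 : ℝ) * σ * ((1 / d + 4) ^ (3 / 4 : ℝ) * envelope z (s + θ)) := by gcongr
    _ = (convConst d - 4) * envelope z (s + θ) * σ := by unfold convConst; ring
    _ ≤ convConst d * envelope z (s + θ) * σ := by
        have := envelope_pos (by linarith : 0 ≤ s + θ) z
        gcongr
        linarith

/-- Either `z + σ y` is as far out as `z`, and the envelope already has the right size there, or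
`|y|` is so large that the kernel itself supplies the decay. -/
lemma inv_one_add_sq_sq_mul_envelope_le {d s θ : ℝ} (hd : 0 < d) (hs : 0 ≤ s) (hθ : 0 < θ)
    (z y : ℝ) :
    ((1 + y ^ 2) ^ 2)⁻¹ * envelope (z + heatScale d θ * y) s ≤ convConst d * envelope z (s + θ) *
      ((1 + y ^ 2)⁻¹ + heatScale d θ * envelope (z + heatScale d θ * y) s) := by
  have h_target := envelope_pos (by linarith : 0 ≤ s + θ) z
  have h_source := envelope_pos hs (z + heatScale d θ * y)
  have h_const := convConst_pos hd
  have hσ := heatScale_pos hd hθ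
  rw [mul_add]
  by_cases h_near : 1 + (s + θ) + z ^ 2 ≤ 4 * (1 + s + (z + heatScale d θ * y) ^ 2)
  · have h_le : envelope (z + heatScale d θ * y) s ≤ convConst d * envelope z (s + θ) := by
      refine (envelope_le_of_weight_le hs (by linarith) h_near).trans ?_
      gcongr
      exact le_add_of_nonneg_left (by positivity)
    refine le_add_of_le_of_nonneg ?_ (by positivity)
    rw [mul_comm]
    exact mul_le_mul h_le (inv_one_add_sq_sq_le y) (by positivity) (by positivity)
  · refine le_add_of_nonneg_of_le (by positivity) ?_
    rw [← mul_assoc]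
    gcongr
    exact inv_one_add_sq_sq_le_of_far hd hs hθ (not_le.1 h_near)

/-- The mass of the envelope, which is independent of time. -/
def envelopeMass : ℝ := ∫ v : ℝ, (1 + v ^ 2) ^ (-(3 / 4) : ℝ)

lemma integrable_one_add_sq_rpow : Integrable fun v : ℝ => (1 + v ^ 2) ^ (-(3 / 4) : ℝ) := by
  have h := integrable_rpow_neg_one_add_norm_sq (E := ℝ) (μ := volume) (r := 3 / 2) (by norm_num)
  simp only [Real.norm_eq_abs, sq_abs] at h
  convert h using 3
  norm_num

lemma envelopeMass_nonneg : 0 ≤ envelopeMass := integral_nonneg fun v => by positivity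

lemma envelope_eq_rescaled {t : ℝ} (ht : 0 ≤ t) (w : ℝ) :
    envelope w t = (√(1 + t))⁻¹ * (1 + ((√(1 + t))⁻¹ * w) ^ 2) ^ (-(3 / 4) : ℝ) := by
  have h1t : (0 : ℝ) < 1 + t := by linarith
  have h_factor : 1 + t + w ^ 2 = (1 + t) * (1 + ((√(1 + t))⁻¹ * w) ^ 2) := by
    rw [mul_pow, inv_pow, Real.sq_sqrt h1t.le]; field_simp
  rw [envelope, h_factor, Real.mul_rpow h1t.le (by positivity), ← mul_assoc,
    ← Real.rpow_add h1t, Real.sqrt_eq_rpow, ← Real.rpow_neg h1t.le]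
  norm_num

lemma integrable_envelope {t : ℝ} (ht : 0 ≤ t) : Integrable fun w => envelope w t := by
  simp only [envelope_eq_rescaled ht]
  exact (integrable_one_add_sq_rpow.comp_mul_left' (by positivity)).const_mul _

lemma integral_envelope {t : ℝ} (ht : 0 ≤ t) : ∫ w, envelope w t = envelopeMass := by
  have h_pos : 0 < √(1 + t) := by positivity
  simp only [envelope_eq_rescaled ht]
  rw [integral_const_mul,
    Measure.integral_comp_mul_left fun v : ℝ => (1 + v ^ 2) ^ (-(3 / 4) : ℝ),
    inv_inv, abs_of_pos h_pos, smul_eq_mul, inv_mul_cancel_left₀ h_pos.ne', envelopeMass]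

lemma integrable_envelope_line {b t : ℝ} (ht : 0 ≤ t) (hb : b ≠ 0) (z : ℝ) :
    Integrable fun s => envelope (z + b * s) t :=
  ((integrable_envelope ht).comp_add_left z).comp_mul_left' hb

lemma integral_envelope_line {t : ℝ} (ht : 0 ≤ t) (z b : ℝ) :
    ∫ s, envelope (z + b * s) t = |b⁻¹| * envelopeMass := by
  rw [Measure.integral_comp_mul_left (fun w => envelope (z + w) t) b,
    integral_add_left_eq_self (fun w => envelope w t) z, integral_envelope ht, smul_eq_mul]

lemma abs_integral_gaussDeriv_mul_le_envelope {d s θ z B : ℝ} {j : ℕ} (hj : j ≤ 2) (hd : 0 < d)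
    (hs : 0 ≤ s) (hθ : 0 < θ) (hB : 0 ≤ B) {φ : ℝ → ℝ}
    (hφ : ∀ y, |φ y| ≤ B * envelope (z + heatScale d θ * y) s) :
    |∫ y, gaussDeriv j y * φ y| ≤
      48 * convConst d * (Real.pi + envelopeMass) * B * envelope z (s + θ) := by
  have hσ := heatScale_pos hd hθ
  have h_line := (integrable_envelope_line hs hσ.ne' z).const_mul (heatScale d θ)
  have h_pointwise : ∀ y, ‖gaussDeriv j y * φ y‖ ≤ 48 * convConst d * B * envelope z (s + θ) *
      ((1 + y ^ 2)⁻¹ + heatScale d θ * envelope (z + heatScale d θ * y) s) := fun y => by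
    rw [Real.norm_eq_abs, abs_mul]
    calc |gaussDeriv j y| * |φ y|
        ≤ 48 * ((1 + y ^ 2) ^ 2)⁻¹ * (B * envelope (z + heatScale d θ * y) s) :=
          mul_le_mul (abs_gaussDeriv_le hj y) (hφ y) (abs_nonneg _) (by positivity)
      _ = 48 * B * (((1 + y ^ 2) ^ 2)⁻¹ * envelope (z + heatScale d θ * y) s) := by ring
      _ ≤ 48 * B * (convConst d * envelope z (s + θ) *
          ((1 + y ^ 2)⁻¹ + heatScale d θ * envelope (z + heatScale d θ * y) s)) :=
          mul_le_mul_of_nonneg_left (inv_one_add_sq_sq_mul_envelope_le hd hs hθ z y)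
            (by positivity)
      _ = _ := by ring
  have h_sum : Integrable fun y =>
      (1 + y ^ 2)⁻¹ + heatScale d θ * envelope (z + heatScale d θ * y) s :=
    integrable_inv_one_add_sq.add h_line
  refine (norm_integral_le_of_norm_le (h_sum.const_mul _) (ae_of_all _ h_pointwise)).trans_eq ?_
  rw [integral_const_mul, integral_add integrable_inv_one_add_sq h_line, integral_const_mul,
    integral_envelope_line hs, integral_univ_inv_one_add_sq, abs_of_pos (inv_pos.2 hσ),
    mul_inv_cancel_left₀ hσ.ne']
  ring

/-- The constant of the product estimate for envelopes drifting apart at relative speed `b`. -/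
def productConst (b : ℝ) : ℝ := min (1 / 2) (b ^ 2 / 8) ^ (-(3 / 4) : ℝ)

lemma productConst_nonneg (b : ℝ) : 0 ≤ productConst b := by unfold productConst; positivity

lemma envelope_le_of_ballistic {b s w : ℝ} (hs : 0 ≤ s) (hb : b ≠ 0)
    (hw : (b * s) ^ 2 ≤ 4 * w ^ 2) :
    envelope w s ≤ productConst b * (1 + s) ^ (-(5 / 4) : ℝ) := by
  unfold productConst
  set κ := min (1 / 2) (b ^ 2 / 8)
  have hκ : 0 < κ := lt_min (by norm_num) (by positivity)
  have h_weight : κ * (1 + s) ^ 2 ≤ 1 + s + w ^ 2 := by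
    have h_half : κ ≤ 1 / 2 := min_le_left _ _
    have h_lin : κ * s ≤ 1 / 2 * s := by gcongr
    have h_quad : κ * s ^ 2 ≤ b ^ 2 / 8 * s ^ 2 := by gcongr; exact min_le_right _ _
    nlinarith
  have h_rpow : (1 + s + w ^ 2) ^ (-(3 / 4) : ℝ) ≤
      κ ^ (-(3 / 4) : ℝ) * (1 + s) ^ (2 * (-(3 / 4)) : ℝ) := by
    refine (Real.rpow_le_rpow_of_nonpos (by positivity) h_weight (by norm_num)).trans_eq ?_
    rw [Real.mul_rpow hκ.le (by positivity), ← Real.rpow_natCast_mul (by positivity),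
      Nat.cast_ofNat]
  calc envelope w s
      ≤ (1 + s) ^ (1 / 4 : ℝ) * (κ ^ (-(3 / 4) : ℝ) * (1 + s) ^ (2 * (-(3 / 4)) : ℝ)) := by
        unfold envelope; gcongr
    _ = κ ^ (-(3 / 4) : ℝ) * (1 + s) ^ (-(5 / 4) : ℝ) := by
        rw [mul_left_comm, ← Real.rpow_add (by positivity)]; norm_num

/-- At each point one of the two moving coordinates is at least `|b| s / 2`. -/
lemma envelope_mul_envelope_le {z s b : ℝ} (hs : 0 ≤ s) (hb : b ≠ 0) :
    envelope z s * envelope (z + b * s) s ≤ productConst b * (1 + s) ^ (-(5 / 4) : ℝ) *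
      (envelope z s + envelope (z + b * s) s) := by
  have h_left := envelope_pos hs z
  have h_right := envelope_pos hs (z + b * s)
  have h_const := productConst_nonneg b
  have h_far : (b * s) ^ 2 ≤ 4 * z ^ 2 ∨ (b * s) ^ 2 ≤ 4 * (z + b * s) ^ 2 := by
    by_contra! h
    nlinarith [sq_nonneg (z + (z + b * s))]
  rw [mul_add]
  rcases h_far with h | h
  · refine le_add_of_nonneg_of_le (by positivity) ?_
    gcongr
    exact envelope_le_of_ballistic hs hb h
  · refine le_add_of_le_of_nonneg ?_ (by positivity)
    rw [mul_comm]
    gcongr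
    exact envelope_le_of_ballistic hs hb h

/-! ### Reproduction of the envelope under time integration -/

/-- An integrable majorant of the beta-type weight `s ↦ (t - s) ^ (-a) * s ^ (-b)` on `(0, t)`:
one of the two singular factors is frozen at the midpoint. -/
def betaMajorant (a b t s : ℝ) : ℝ := (t / 2) ^ (-a) * s ^ (-b) + (t / 2) ^ (-b) * (t - s) ^ (-a)

lemma le_betaMajorant {a b t s : ℝ} (ha : 0 ≤ a) (hb : 0 ≤ b) (hs : 0 < s) (hst : s < t) :
    (t - s) ^ (-a) * s ^ (-b) ≤ betaMajorant a b t s := by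
  have : 0 < t - s := sub_pos.2 hst
  have ht : 0 < t / 2 := by linarith
  rcases le_total s (t / 2) with h | h
  · refine le_add_of_le_of_nonneg ?_ (by positivity)
    exact mul_le_mul_of_nonneg_right
      (Real.rpow_le_rpow_of_nonpos ht (by linarith) (neg_nonpos.2 ha)) (by positivity)
  · refine le_add_of_nonneg_of_le (by positivity) ?_
    rw [mul_comm]
    exact mul_le_mul_of_nonneg_right
      (Real.rpow_le_rpow_of_nonpos ht h (neg_nonpos.2 hb)) (by positivity)

lemma intervalIntegrable_rpow_neg {b : ℝ} (hb : b < 1) (t : ℝ) :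
    IntervalIntegrable (fun s : ℝ => s ^ (-b)) volume 0 t :=
  intervalIntegral.intervalIntegrable_rpow' (neg_lt_neg hb)

lemma intervalIntegrable_sub_rpow_neg {a : ℝ} (ha : a < 1) (t : ℝ) :
    IntervalIntegrable (fun s : ℝ => (t - s) ^ (-a)) volume 0 t := by
  simpa only [sub_zero, sub_self] using
    ((intervalIntegrable_rpow_neg ha t).comp_sub_left t).symm

lemma integral_rpow_neg {b : ℝ} (hb : b < 1) (t : ℝ) :
    ∫ s in (0 : ℝ)..t, s ^ (-b) = t ^ (1 - b) / (1 - b) := by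
  rw [integral_rpow (Or.inl (neg_lt_neg hb)), Real.zero_rpow (by linarith), sub_zero,
    neg_add_eq_sub]

lemma integral_sub_rpow_neg {a : ℝ} (ha : a < 1) (t : ℝ) :
    ∫ s in (0 : ℝ)..t, (t - s) ^ (-a) = t ^ (1 - a) / (1 - a) := by
  rw [intervalIntegral.integral_comp_sub_left (fun s : ℝ => s ^ (-a)) t, sub_self, sub_zero,
    integral_rpow_neg ha]

lemma intervalIntegrable_betaMajorant {a b : ℝ} (ha : a < 1) (hb : b < 1) (t : ℝ) :
    IntervalIntegrable (betaMajorant a b t) volume 0 t :=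
  ((intervalIntegrable_rpow_neg hb t).const_mul _).add
    ((intervalIntegrable_sub_rpow_neg ha t).const_mul _)

lemma integral_betaMajorant {a b : ℝ} (ha : a < 1) (hb : b < 1) (t : ℝ) :
    ∫ s in (0 : ℝ)..t, betaMajorant a b t s =
      (t / 2) ^ (-a) * (t ^ (1 - b) / (1 - b)) + (t / 2) ^ (-b) * (t ^ (1 - a) / (1 - a)) := by
  unfold betaMajorant
  rw [intervalIntegral.integral_add ((intervalIntegrable_rpow_neg hb t).const_mul _)
      ((intervalIntegrable_sub_rpow_neg ha t).const_mul _),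
    intervalIntegral.integral_const_mul, intervalIntegral.integral_const_mul,
    integral_rpow_neg hb, integral_sub_rpow_neg ha]

lemma half_rpow_neg_le {a t : ℝ} (ht : 0 ≤ t) (ha : a ≤ 1) : (t / 2) ^ (-a) ≤ 2 * t ^ (-a) := by
  rw [Real.div_rpow ht two_pos.le, Real.rpow_neg two_pos.le, div_inv_eq_mul, mul_comm]
  gcongr
  exact Real.rpow_le_self_of_one_le one_le_two ha

lemma integral_betaMajorant_le {a b t : ℝ} (ha : a < 1) (hb : b < 1) (ht : 0 < t) :
    ∫ s in (0 : ℝ)..t, betaMajorant a b t s ≤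
      (2 / (1 - a) + 2 / (1 - b)) * t ^ (1 - a - b) := by
  have : 0 ≤ 1 - a := by linarith
  have : 0 ≤ 1 - b := by linarith
  have h_left : t ^ (-a) * t ^ (1 - b) = t ^ (1 - a - b) := by rw [← Real.rpow_add ht]; ring_nf
  have h_right : t ^ (-b) * t ^ (1 - a) = t ^ (1 - a - b) := by rw [← Real.rpow_add ht]; ring_nf
  rw [integral_betaMajorant ha hb]
  calc _ ≤ 2 * t ^ (-a) * (t ^ (1 - b) / (1 - b)) + 2 * t ^ (-b) * (t ^ (1 - a) / (1 - a)) := by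
        gcongr
        · exact half_rpow_neg_le ht.le ha.le
        · exact half_rpow_neg_le ht.le hb.le
    _ = 2 / (1 - b) * (t ^ (-a) * t ^ (1 - b)) + 2 / (1 - a) * (t ^ (-b) * t ^ (1 - a)) := by ring
    _ = (2 / (1 - a) + 2 / (1 - b)) * t ^ (1 - a - b) := by rw [h_left, h_right]; ring

lemma ae_mem_Ioc_of_forall_mem_Ioo {P : ℝ → Prop} {a b : ℝ} (h : ∀ s ∈ Ioo a b, P s) :
    ∀ᵐ s, s ∈ Ioc a b → P s := by
  filter_upwards [volume.ae_ne b] with s hs h_mem using h s ⟨h_mem.1, lt_of_le_of_ne h_mem.2 hs⟩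

lemma abs_integral_le_of_le_beta {a b C t : ℝ} (ha : a ∈ Ico 0 1) (hb : b ∈ Ico 0 1) (ht : 0 < t)
    (hC : 0 ≤ C) {F : ℝ → ℝ}
    (hF : ∀ s, 0 < s → s < t → |F s| ≤ C * ((t - s) ^ (-a) * s ^ (-b))) :
    |∫ s in (0 : ℝ)..t, F s| ≤ C * ((2 / (1 - a) + 2 / (1 - b)) * t ^ (1 - a - b)) := by
  have h_le : ∀ᵐ s, s ∈ Ioc 0 t → ‖F s‖ ≤ C * betaMajorant a b t s :=
    ae_mem_Ioc_of_forall_mem_Ioo fun s hs => (hF s hs.1 hs.2).trans <|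
      mul_le_mul_of_nonneg_left (le_betaMajorant ha.1 hb.1 hs.1 hs.2) hC
  refine (intervalIntegral.norm_integral_le_of_norm_le ht.le h_le
    ((intervalIntegrable_betaMajorant ha.2 hb.2 t).const_mul C)).trans ?_
  rw [intervalIntegral.integral_const_mul]
  exact mul_le_mul_of_nonneg_left (integral_betaMajorant_le ha.2 hb.2 ht) hC

lemma intervalIntegrable_one_add_rpow (r : ℝ) {t : ℝ} (ht : 0 ≤ t) :
    IntervalIntegrable (fun s : ℝ => (1 + s) ^ r) volume 0 t := by
  refine ContinuousOn.intervalIntegrable ?_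
  rw [uIcc_of_le ht]
  exact ContinuousOn.rpow_const (by fun_prop) fun s hs => Or.inl (by linarith [hs.1])

lemma integral_one_add_rpow_le {t : ℝ} (ht : 0 ≤ t) :
    ∫ s in (0 : ℝ)..t, (1 + s) ^ (-(5 / 4) : ℝ) ≤ 4 := by
  have h_nonneg : 0 ≤ (1 + t) ^ (-(5 / 4) + 1 : ℝ) := by positivity
  have h_mem : (0 : ℝ) ∉ uIcc (1 + 0) (1 + t) := by
    rw [uIcc_of_le (by linarith)]; exact fun h => by linarith [h.1]
  rw [intervalIntegral.integral_comp_add_left (fun x : ℝ => x ^ (-(5 / 4) : ℝ)) 1,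
    integral_rpow (Or.inr ⟨by norm_num, h_mem⟩), add_zero, Real.one_rpow,
    div_le_iff_of_neg (by norm_num)]
  linarith

/-- The weight `(t - s) ^ (-1/2)` restricted to recent times `t - s < √(1 + t)`. -/
def recentWeight (t s : ℝ) : ℝ :=
  (Iio √(1 + t)).indicator (fun r : ℝ => r ^ (-(1 / 2) : ℝ)) (t - s)

lemma recentWeight_nonneg {t s : ℝ} (hst : s ≤ t) : 0 ≤ recentWeight t s :=
  indicator_apply_nonneg fun _ => Real.rpow_nonneg (sub_nonneg.2 hst) _

lemma intervalIntegrable_recentWeight (t : ℝ) : IntervalIntegrable (recentWeight t) volume 0 t := by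
  have h := intervalIntegrable_rpow_neg (b := 1 / 2) (by norm_num) t
  rw [intervalIntegrable_iff] at h
  have h_cut := (intervalIntegrable_iff.2 (h.indicator (measurableSet_Iio (a := √(1 + t)))))
  have h_reflected := (h_cut.comp_sub_left t).symm
  rwa [sub_zero, sub_self] at h_reflected

lemma integral_recentWeight_le {t : ℝ} (ht : 0 ≤ t) :
    ∫ s in (0 : ℝ)..t, recentWeight t s ≤ 2 * (1 + t) ^ (1 / 4 : ℝ) := by
  have h_int := intervalIntegrable_rpow_neg (b := 1 / 2) (by norm_num) √(1 + t)
  rw [intervalIntegrable_iff, uIoc_of_le (by positivity)] at h_int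
  calc ∫ s in (0 : ℝ)..t, recentWeight t s
      = ∫ r in Ioc 0 t ∩ Iio √(1 + t), r ^ (-(1 / 2) : ℝ) := by
        unfold recentWeight
        rw [intervalIntegral.integral_comp_sub_left
            ((Iio √(1 + t)).indicator fun r : ℝ => r ^ (-(1 / 2) : ℝ)) t, sub_self, sub_zero,
          intervalIntegral.integral_of_le ht, setIntegral_indicator measurableSet_Iio]
    _ ≤ ∫ r in Ioc 0 √(1 + t), r ^ (-(1 / 2) : ℝ) := by
        refine setIntegral_mono_set h_int ?_ ?_
        · exact (ae_restrict_mem measurableSet_Ioc).mono fun r hr => Real.rpow_nonneg hr.1.le _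
        · exact LE.le.eventuallyLE
            fun r (hr : r ∈ Ioc 0 t ∩ Iio √(1 + t)) => ⟨hr.1.1, (mem_Iio.1 hr.2).le⟩
    _ = 2 * (1 + t) ^ (1 / 4 : ℝ) := by
        rw [← intervalIntegral.integral_of_le (by positivity), integral_rpow_neg (by norm_num),
          Real.sqrt_eq_rpow, ← Real.rpow_mul (by positivity)]
        norm_num
        ring

/-- The loss incurred when the envelope centred at `z + b s` is compared with the one at `z`. -/
def shiftConst (b : ℝ) : ℝ := (1 + 4 * b ^ 2) ^ (3 / 4 : ℝ)

lemma shiftConst_pos (b : ℝ) : 0 < shiftConst b := by unfold shiftConst; positivity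

/-- The hypothesis `h_far` forces `1 + t + z ^ 2 ≲ (1 + s) ^ 2`. -/
lemma one_add_rpow_le_of_shift {z b s t : ℝ} (hs : 0 ≤ s) (hst : s ≤ t)
    (h_far : 4 * (1 + t + (z + b * s) ^ 2) < 1 + t + z ^ 2) :
    (1 + s) ^ (-(3 / 2) : ℝ) * (1 + t) ^ (1 / 4 : ℝ) ≤ shiftConst b * envelope z t := by
  have h_weight : 1 + t + z ^ 2 ≤ (1 + 4 * b ^ 2) * (1 + s) ^ 2 := by
    have : b ^ 2 * s ^ 2 ≤ b ^ 2 * (1 + s) ^ 2 := by gcongr; linarith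
    nlinarith [sq_nonneg (z + b * s + b * s), sq_nonneg (1 + s)]
  have h := rpow_mul_rpow_le_envelope (hs.trans hst) (by positivity) (by positivity) h_weight
  rwa [← Real.rpow_natCast_mul (by positivity), mul_comm, Nat.cast_ofNat,
    show (2 * -(3 / 4) : ℝ) = -(3 / 2) by norm_num] at h

lemma one_add_rpow_mul_envelope_le {z b s t : ℝ} (hs : 0 ≤ s) (hst : s ≤ t) :
    (1 + s) ^ (-(5 / 4) : ℝ) * envelope (z + b * s) t ≤ (4 + shiftConst b) * envelope z t *
      ((1 + s) ^ (-(5 / 4) : ℝ) + envelope (z + b * s) t) := by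
  have ht : 0 ≤ t := hs.trans hst
  have h_env := envelope_pos ht z
  have h_shifted := envelope_pos ht (z + b * s)
  have h_const := shiftConst_pos b
  by_cases h_near : 1 + t + z ^ 2 ≤ 4 * (1 + t + (z + b * s) ^ 2)
  · calc _ ≤ (1 + s) ^ (-(5 / 4) : ℝ) * (4 * envelope z t) := by
          gcongr; exact envelope_le_of_weight_le ht le_rfl h_near
      _ = 4 * envelope z t * (1 + s) ^ (-(5 / 4) : ℝ) := by ring
      _ ≤ _ := by gcongr <;> linarith
  · have h_decay : (1 + s) ^ (-(5 / 4) : ℝ) ≤ shiftConst b * envelope z t := by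
      refine le_trans ?_ (one_add_rpow_le_of_shift hs hst (not_le.1 h_near))
      calc (1 + s) ^ (-(5 / 4) : ℝ) = (1 + s) ^ (-(3 / 2) : ℝ) * (1 + s) ^ (1 / 4 : ℝ) := by
            rw [← Real.rpow_add (by positivity)]; norm_num
        _ ≤ _ := by gcongr
    calc _ ≤ shiftConst b * envelope z t * envelope (z + b * s) t := by gcongr
      _ ≤ _ := by
          gcongr
          · linarith
          · exact le_add_of_nonneg_left (by positivity)

lemma sub_rpow_mul_one_add_rpow_le {s t r : ℝ} (hs : 0 < s) (hst : s < t) (hr : r ≤ -(1 / 2)) :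
    (t - s) ^ (-(1 / 2) : ℝ) * (1 + s) ^ r ≤ betaMajorant (1 / 2) (1 / 2) t s := by
  refine le_trans ?_ (le_betaMajorant (by norm_num) (by norm_num) hs hst)
  have : 0 < t - s := sub_pos.2 hst
  gcongr
  calc (1 + s) ^ r ≤ (1 + s) ^ (-(1 / 2) : ℝ) :=
        Real.rpow_le_rpow_of_exponent_le (by linarith) hr
    _ ≤ s ^ (-(1 / 2) : ℝ) := Real.rpow_le_rpow_of_nonpos hs (by linarith) (by norm_num)

lemma sub_rpow_mul_rpow_mul_envelope_le {w s t : ℝ} (ht : 0 ≤ t) (hst : s < t) :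
    (t - s) ^ (-(1 / 2) : ℝ) * ((1 + t) ^ (1 / 4 : ℝ) * envelope w t) ≤
      envelope w t + (1 + t) ^ (-(1 / 4) : ℝ) * recentWeight t s := by
  have h_env := envelope_pos ht w
  have : 0 < t - s := sub_pos.2 hst
  by_cases h_recent : t - s < √(1 + t)
  · refine le_add_of_nonneg_of_le h_env.le ?_
    rw [recentWeight, indicator_of_mem (mem_Iio.2 h_recent)]
    calc _ ≤ (t - s) ^ (-(1 / 2) : ℝ) * ((1 + t) ^ (1 / 4 : ℝ) * (1 + t) ^ (-(1 / 2) : ℝ)) := by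
          gcongr; exact envelope_le_rpow ht w
      _ = (1 + t) ^ (-(1 / 4) : ℝ) * (t - s) ^ (-(1 / 2) : ℝ) := by
          rw [← Real.rpow_add (by positivity)]; norm_num [mul_comm]
  · refine le_add_of_le_of_nonneg ?_
      (mul_nonneg (by positivity) (recentWeight_nonneg hst.le))
    have h_sqrt : √(1 + t) ^ (-(1 / 2) : ℝ) * (1 + t) ^ (1 / 4 : ℝ) = 1 := by
      rw [Real.sqrt_eq_rpow, ← Real.rpow_mul (by positivity), ← Real.rpow_add (by positivity)]
      norm_num
    calc _ ≤ √(1 + t) ^ (-(1 / 2) : ℝ) * ((1 + t) ^ (1 / 4 : ℝ) * envelope w t) := by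
          gcongr 1
          exact Real.rpow_le_rpow_of_nonpos (by positivity) (not_lt.1 h_recent) (by norm_num)
      _ = envelope w t := by rw [← mul_assoc, h_sqrt, one_mul]

lemma sub_rpow_mul_one_add_rpow_mul_envelope_le {z b s t : ℝ} (hs : 0 < s) (hst : s < t) :
    (t - s) ^ (-(1 / 2) : ℝ) * ((1 + s) ^ (-1 : ℝ) * envelope (z + b * s) t) ≤
      (4 + shiftConst b) * envelope z t * (betaMajorant (1 / 2) (1 / 2) t s +
        envelope (z + b * s) t + (1 + t) ^ (-(1 / 4) : ℝ) * recentWeight t s) := by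
  have ht : 0 < t := hs.trans hst
  have : 0 < t - s := sub_pos.2 hst
  have h_env := envelope_pos ht.le z
  have h_shifted := envelope_pos ht.le (z + b * s)
  have h_const := shiftConst_pos b
  have h_beta := sub_rpow_mul_one_add_rpow_le (r := -1) hs hst (by norm_num)
  have h_beta_nonneg := le_trans (by positivity) h_beta
  have h_recent : 0 ≤ (1 + t) ^ (-(1 / 4) : ℝ) * recentWeight t s :=
    mul_nonneg (by positivity) (recentWeight_nonneg hst.le)
  by_cases h_near : 1 + t + z ^ 2 ≤ 4 * (1 + t + (z + b * s) ^ 2)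
  · calc _ = (t - s) ^ (-(1 / 2) : ℝ) * (1 + s) ^ (-1 : ℝ) * envelope (z + b * s) t := by ring
      _ ≤ betaMajorant (1 / 2) (1 / 2) t s * (4 * envelope z t) := by
          gcongr; exact envelope_le_of_weight_le ht.le le_rfl h_near
      _ = 4 * envelope z t * betaMajorant (1 / 2) (1 / 2) t s := by ring
      _ ≤ _ := by gcongr <;> linarith
  · have h_decay : (1 + s) ^ (-1 : ℝ) ≤ shiftConst b * envelope z t * (1 + t) ^ (1 / 4 : ℝ) := by
      calc (1 + s) ^ (-1 : ℝ) = (1 + s) ^ (-(3 / 2) : ℝ) * (1 + s) ^ (1 / 2 : ℝ) := by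
            rw [← Real.rpow_add (by positivity)]; norm_num
        _ ≤ (1 + s) ^ (-(3 / 2) : ℝ) * (1 + t) ^ (1 / 2 : ℝ) := by gcongr
        _ = (1 + s) ^ (-(3 / 2) : ℝ) * (1 + t) ^ (1 / 4 : ℝ) * (1 + t) ^ (1 / 4 : ℝ) := by
            rw [mul_assoc, ← Real.rpow_add (by positivity : 0 < 1 + t)]; norm_num
        _ ≤ shiftConst b * envelope z t * (1 + t) ^ (1 / 4 : ℝ) :=
            mul_le_mul_of_nonneg_right
              (one_add_rpow_le_of_shift hs.le hst.le (not_le.1 h_near)) (by positivity)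
    calc _ ≤ (t - s) ^ (-(1 / 2) : ℝ) *
          (shiftConst b * envelope z t * (1 + t) ^ (1 / 4 : ℝ) * envelope (z + b * s) t) := by
          gcongr
      _ = shiftConst b * envelope z t *
          ((t - s) ^ (-(1 / 2) : ℝ) * ((1 + t) ^ (1 / 4 : ℝ) * envelope (z + b * s) t)) := by ring
      _ ≤ shiftConst b * envelope z t *
          (envelope (z + b * s) t + (1 + t) ^ (-(1 / 4) : ℝ) * recentWeight t s) := by
          gcongr; exact sub_rpow_mul_rpow_mul_envelope_le ht.le hst
      _ ≤ _ := by gcongr <;> linarith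

/-- The size, at time `t` and position `z`, of what a source acting at time `s` has contributed:
the first summand comes from the reaction terms, the second from the flux terms, and the second
component's envelope is displaced by the drift `b s`. -/
def sourceWeight (b z t s : ℝ) : ℝ :=
  (1 + s) ^ (-(5 / 4) : ℝ) * (envelope z t + envelope (z + b * s) t) +
    (t - s) ^ (-(1 / 2) : ℝ) *
      ((1 + s) ^ (-(1 / 2) : ℝ) * envelope z t + (1 + s) ^ (-1 : ℝ) * envelope (z + b * s) t)

/-- A function of `s`, with integral over `[0, t]` bounded uniformly in `t` and `z`, that dominates
the ratio `sourceWeight b z t s / envelope z t` up to a constant. -/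
def sourceMajorant (b z t s : ℝ) : ℝ :=
  (1 + s) ^ (-(5 / 4) : ℝ) + envelope (z + b * s) t + betaMajorant (1 / 2) (1 / 2) t s +
    (1 + t) ^ (-(1 / 4) : ℝ) * recentWeight t s

lemma intervalIntegrable_sourceMajorant {b t : ℝ} (hb : b ≠ 0) (ht : 0 ≤ t) (z : ℝ) :
    IntervalIntegrable (sourceMajorant b z t) volume 0 t :=
  (((intervalIntegrable_one_add_rpow _ ht).add
    (integrable_envelope_line ht hb z).intervalIntegrable).add
    (intervalIntegrable_betaMajorant (by norm_num) (by norm_num) t)).add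
    ((intervalIntegrable_recentWeight t).const_mul _)

lemma integral_sourceMajorant_le {b t : ℝ} (hb : b ≠ 0) (ht : 0 < t) (z : ℝ) :
    ∫ s in (0 : ℝ)..t, sourceMajorant b z t s ≤ 14 + |b⁻¹| * envelopeMass := by
  have h_decay := intervalIntegrable_one_add_rpow (-(5 / 4)) ht.le
  have h_line := integrable_envelope_line ht.le hb z
  have h_beta := intervalIntegrable_betaMajorant (a := 1 / 2) (b := 1 / 2)
    (by norm_num) (by norm_num) t
  have h_recent := (intervalIntegrable_recentWeight t).const_mul ((1 + t) ^ (-(1 / 4) : ℝ))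
  have h_line_le : ∫ s in (0 : ℝ)..t, envelope (z + b * s) t ≤ |b⁻¹| * envelopeMass := by
    rw [intervalIntegral.integral_of_le ht.le, ← integral_envelope_line ht.le z b]
    exact setIntegral_le_integral h_line (ae_of_all _ fun s => (envelope_pos ht.le _).le)
  have h_recent_le : ∫ s in (0 : ℝ)..t, (1 + t) ^ (-(1 / 4) : ℝ) * recentWeight t s ≤ 2 := by
    rw [intervalIntegral.integral_const_mul]
    calc _ ≤ (1 + t) ^ (-(1 / 4) : ℝ) * (2 * (1 + t) ^ (1 / 4 : ℝ)) := by
          gcongr; exact integral_recentWeight_le ht.le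
      _ = 2 := by rw [mul_left_comm, ← Real.rpow_add (by positivity)]; norm_num
  have h_line := h_line.intervalIntegrable (a := 0) (b := t)
  unfold sourceMajorant
  rw [intervalIntegral.integral_add ((h_decay.add h_line).add h_beta) h_recent,
    intervalIntegral.integral_add (h_decay.add h_line) h_beta,
    intervalIntegral.integral_add h_decay h_line]
  have h_beta_le := integral_betaMajorant_le (a := 1 / 2) (b := 1 / 2) (by norm_num)
    (by norm_num) ht
  norm_num at h_beta_le
  linarith [integral_one_add_rpow_le ht.le]

lemma sourceWeight_le {b z t s : ℝ} (hs : 0 < s) (hst : s < t) :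
    sourceWeight b z t s ≤
      (10 + 2 * shiftConst b) * envelope z t * sourceMajorant b z t s := by
  have ht : 0 < t := hs.trans hst
  have h_env := envelope_pos ht.le z
  have h_mixed := one_add_rpow_mul_envelope_le (z := z) (b := b) hs.le hst.le
  have h_flux := sub_rpow_mul_one_add_rpow_mul_envelope_le (z := z) (b := b) hs hst
  have h_beta := sub_rpow_mul_one_add_rpow_le (r := -(1 / 2)) hs hst le_rfl
  have h_const := shiftConst_pos b
  unfold sourceWeight sourceMajorant
  set a := (1 + s) ^ (-(5 / 4) : ℝ)
  set q := envelope z t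
  set q' := envelope (z + b * s) t
  set T := betaMajorant (1 / 2) (1 / 2) t s
  set I := (1 + t) ^ (-(1 / 4) : ℝ) * recentWeight t s
  have : 0 ≤ a := by positivity
  have hq' : 0 ≤ q' := (envelope_pos ht.le _).le
  have hT : 0 ≤ T :=
    (mul_nonneg (Real.rpow_nonneg (sub_nonneg.2 hst.le) _) (by positivity)).trans h_beta
  have hI : 0 ≤ I := mul_nonneg (by positivity) (recentWeight_nonneg hst.le)
  calc _ = a * q + a * q' + ((t - s) ^ (-(1 / 2) : ℝ) * (1 + s) ^ (-(1 / 2) : ℝ) * q +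
        (t - s) ^ (-(1 / 2) : ℝ) * ((1 + s) ^ (-1 : ℝ) * q')) := by ring
    _ ≤ a * q + (4 + shiftConst b) * q * (a + q') +
        (T * q + (4 + shiftConst b) * q * (T + q' + I)) := by gcongr
    _ = q * ((5 + shiftConst b) * a + (8 + 2 * shiftConst b) * q' + (5 + shiftConst b) * T +
        (4 + shiftConst b) * I) := by ring
    _ ≤ q * ((10 + 2 * shiftConst b) * a + (10 + 2 * shiftConst b) * q' +
        (10 + 2 * shiftConst b) * T + (10 + 2 * shiftConst b) * I) := by gcongr <;> linarith
    _ = _ := by ring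

/-- The constant with which the envelope reproduces itself under the Duhamel integral. -/
def duhamelConst (b : ℝ) : ℝ := (10 + 2 * shiftConst b) * (14 + |b⁻¹| * envelopeMass)

lemma abs_integral_le_envelope {z b t B : ℝ} (ht : 0 < t) (hb : b ≠ 0) (hB : 0 ≤ B) {F : ℝ → ℝ}
    (hF : ∀ s, 0 < s → s < t → |F s| ≤ B * sourceWeight b z t s) :
    |∫ s in (0 : ℝ)..t, F s| ≤ duhamelConst b * B * envelope z t := by
  have h_env := envelope_pos ht.le z
  have h_const := shiftConst_pos b
  have h_le : ∀ᵐ s, s ∈ Ioc 0 t → ‖F s‖ ≤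
      B * ((10 + 2 * shiftConst b) * envelope z t * sourceMajorant b z t s) :=
    ae_mem_Ioc_of_forall_mem_Ioo fun s hs => (hF s hs.1 hs.2).trans <|
      mul_le_mul_of_nonneg_left (sourceWeight_le hs.1 hs.2) hB
  refine (intervalIntegral.norm_integral_le_of_norm_le ht.le h_le
    (((intervalIntegrable_sourceMajorant hb ht.le z).const_mul _).const_mul _)).trans ?_
  rw [intervalIntegral.integral_const_mul, intervalIntegral.integral_const_mul]
  calc _ ≤ B * ((10 + 2 * shiftConst b) * envelope z t * (14 + |b⁻¹| * envelopeMass)) := by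
        gcongr; exact integral_sourceMajorant_le hb ht z
    _ = _ := by unfold duhamelConst; ring

lemma exp_neg_sq_div_le_envelope {M : ℝ} (hM : 1 ≤ M) (x : ℝ) :
    Real.exp (-(x ^ 2 / M)) ≤ M * envelope x 0 := by
  have hM_pos : 0 < M := zero_lt_one.trans_le hM
  have h_exp : 1 + x ^ 2 ≤ M * Real.exp (x ^ 2 / M) :=
    calc 1 + x ^ 2 ≤ M * (x ^ 2 / M + 1) := by rw [mul_add, mul_div_cancel₀ _ hM_pos.ne']; linarith
      _ ≤ M * Real.exp (x ^ 2 / M) := by gcongr; exact Real.add_one_le_exp _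
  have h_env : (1 + x ^ 2)⁻¹ ≤ envelope x 0 := by
    unfold envelope
    rw [add_zero, Real.one_rpow, one_mul, ← Real.rpow_neg_one]
    exact Real.rpow_le_rpow_of_exponent_le (by nlinarith [sq_nonneg x]) (by norm_num)
  calc Real.exp (-(x ^ 2 / M)) = M * (M * Real.exp (x ^ 2 / M))⁻¹ := by
        rw [Real.exp_neg, mul_inv, mul_inv_cancel_left₀ hM_pos.ne']
    _ ≤ M * (1 + x ^ 2)⁻¹ := by gcongr
    _ ≤ M * envelope x 0 := by gcongr

/-! ### Weakly singular time integrals -/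

lemma continuous_heatScale (d : ℝ) : Continuous (heatScale d) := by unfold heatScale; fun_prop

lemma continuousOn_heatOp {j : ℕ} (hj : j ≤ 2) {d : ℝ} (hd : 0 < d) (c : ℝ) {φ : ℝ → ℝ}
    (hφ : Continuous φ) {B : ℝ} (hB : ∀ y, |φ y| ≤ B) :
    ContinuousOn (fun p : ℝ × ℝ => heatOp j d c p.2 φ p.1) {p | 0 < p.2} := by
  intro p hp
  have h_scale := continuous_heatScale d
  have h_factor : ContinuousAt (fun p : ℝ × ℝ => (heatScale d p.2)⁻¹ ^ j) p :=
    ((h_scale.comp continuous_snd).continuousAt.inv₀ (heatScale_pos hd hp).ne').pow j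
  refine h_factor.continuousWithinAt.mul (continuousWithinAt_gaussDeriv_average (B := B) hj
    (Eventually.of_forall fun q => hφ.comp (by fun_prop))
    (Eventually.of_forall fun q y => hB _) fun y => Continuous.continuousWithinAt (by fun_prop))

lemma continuous_heatOp_zero (d c : ℝ) {φ : ℝ → ℝ} (hφ : Continuous φ) {B : ℝ}
    (hB : ∀ y, |φ y| ≤ B) : Continuous fun p : ℝ × ℝ => heatOp 0 d c p.2 φ p.1 := by
  have h_scale := continuous_heatScale d
  rw [← continuousOn_univ]
  intro p _
  simp only [heatOp, pow_zero, one_mul]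
  exact continuousWithinAt_gaussDeriv_average (B := B) (by norm_num)
    (Eventually.of_forall fun q => hφ.comp (by fun_prop))
    (Eventually.of_forall fun q y => hB _) fun y => Continuous.continuousWithinAt (by fun_prop)

lemma heatOp_zero_time (d c : ℝ) (φ : ℝ → ℝ) (x : ℝ) : heatOp 0 d c 0 φ x = φ x := by
  simp [heatOp, heatScale, integral_mul_const, gaussDeriv_zero, integral_gauss]

/-- The open region `{(x, t, s) | 0 < s < t}` on which Duhamel integrands live. -/
def timeTriangle : Set (ℝ × ℝ × ℝ) := {p | 0 < p.2.2 ∧ p.2.2 < p.2.1}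

lemma isOpen_timeTriangle : IsOpen timeTriangle :=
  (isOpen_lt continuous_const (continuous_snd.comp continuous_snd)).inter
    (isOpen_lt (continuous_snd.comp continuous_snd) (continuous_fst.comp continuous_snd))

/-- Functions `Ψ x t s`, continuous for `0 < s < t` and with integrable singularities of order `a`
at `s = t` and of order `b` at `s = 0`, locally uniformly in `t` and uniformly in `x`. -/
structure IsWeaklySingular (a b : ℝ) (Ψ : ℝ → ℝ → ℝ → ℝ) : Prop where
  left_mem : a ∈ Ico 0 1
  right_mem : b ∈ Ico 0 1
  continuousOn : ContinuousOn (fun p : ℝ × ℝ × ℝ => Ψ p.1 p.2.1 p.2.2) timeTriangle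
  bound : ∀ T, 0 < T → ∃ C, 0 ≤ C ∧ ∀ x t s, 0 < s → s < t → t ≤ T →
    |Ψ x t s| ≤ C * ((t - s) ^ (-a) * s ^ (-b))

namespace IsWeaklySingular

variable {a b a' b' : ℝ} {Ψ Ψ' : ℝ → ℝ → ℝ → ℝ}

lemma aestronglyMeasurable (h : IsWeaklySingular a b Ψ) (x t : ℝ) :
    AEStronglyMeasurable (Ψ x t) (volume.restrict (Ioc 0 t)) := by
  rw [← restrict_Ioo_eq_restrict_Ioc]
  refine ContinuousOn.aestronglyMeasurable ?_ measurableSet_Ioo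
  exact h.continuousOn.comp (f := fun s => (x, t, s)) (by fun_prop) fun s hs => hs

lemma exists_bound_betaMajorant (h : IsWeaklySingular a b Ψ) {T : ℝ} (hT : 0 < T) :
    ∃ C, 0 ≤ C ∧ ∀ x t s, 0 < s → s < t → t ≤ T → |Ψ x t s| ≤ C * betaMajorant a b t s := by
  obtain ⟨C, hC, h_bound⟩ := h.bound T hT
  refine ⟨C, hC, fun x t s hs hst htT => (h_bound x t s hs hst htT).trans ?_⟩
  exact mul_le_mul_of_nonneg_left (le_betaMajorant h.left_mem.1 h.right_mem.1 hs hst) hC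

lemma intervalIntegrable (h : IsWeaklySingular a b Ψ) (x : ℝ) {t : ℝ} (ht : 0 < t) :
    IntervalIntegrable (Ψ x t) volume 0 t := by
  obtain ⟨C, -, h_bound⟩ := h.exists_bound_betaMajorant ht
  have h_majorant := (intervalIntegrable_betaMajorant h.left_mem.2 h.right_mem.2 t).const_mul C
  refine h_majorant.mono_fun' ?_ ?_ <;> rw [uIoc_of_le ht.le]
  · exact h.aestronglyMeasurable x t
  · exact (ae_restrict_iff' measurableSet_Ioc).2 <|
      ae_mem_Ioc_of_forall_mem_Ioo fun s hs => h_bound x t s hs.1 hs.2 le_rfl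

lemma aestronglyMeasurable_rescaled (h : IsWeaklySingular a b Ψ) (x : ℝ) {t : ℝ} (ht : 0 < t) :
    AEStronglyMeasurable (fun θ => Ψ x t (t * θ)) (volume.restrict (Ioc 0 1)) := by
  rw [← restrict_Ioo_eq_restrict_Ioc]
  refine ContinuousOn.aestronglyMeasurable ?_ measurableSet_Ioo
  exact h.continuousOn.comp (f := fun θ => (x, t, t * θ)) (by fun_prop) fun θ hθ =>
    ⟨mul_pos ht hθ.1, mul_lt_of_lt_one_right ht hθ.2⟩

lemma exists_bound_rescaled (h : IsWeaklySingular a b Ψ) {t : ℝ} (ht : 0 < t) :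
    ∃ C, ∀ x r θ, t / 2 < r → r < 2 * t → θ ∈ Ioo (0 : ℝ) 1 →
      |Ψ x r (r * θ)| ≤ C * betaMajorant a b 1 θ := by
  obtain ⟨C, hC, h_bound⟩ := h.bound (2 * t) (by linarith)
  refine ⟨C * ((t / 2) ^ (-a) * (t / 2) ^ (-b)), fun x r θ h_lower h_upper hθ => ?_⟩
  have ht_half : 0 < t / 2 := half_pos ht
  have hr : 0 < r := ht_half.trans h_lower
  have hθ0 : 0 < θ := hθ.1
  have hθ1 : 0 < 1 - θ := sub_pos.2 hθ.2
  have ha : r ^ (-a) ≤ (t / 2) ^ (-a) :=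
    Real.rpow_le_rpow_of_nonpos ht_half h_lower.le (neg_nonpos.2 h.left_mem.1)
  have hb : r ^ (-b) ≤ (t / 2) ^ (-b) :=
    Real.rpow_le_rpow_of_nonpos ht_half h_lower.le (neg_nonpos.2 h.right_mem.1)
  calc |Ψ x r (r * θ)|
      ≤ C * ((r - r * θ) ^ (-a) * (r * θ) ^ (-b)) :=
        h_bound x r (r * θ) (by positivity) (mul_lt_of_lt_one_right hr hθ.2) h_upper.le
    _ = C * ((r ^ (-a) * r ^ (-b)) * ((1 - θ) ^ (-a) * θ ^ (-b))) := by
        rw [← mul_one_sub, Real.mul_rpow hr.le hθ1.le, Real.mul_rpow hr.le hθ0.le]; ring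
    _ ≤ C * (((t / 2) ^ (-a) * (t / 2) ^ (-b)) * betaMajorant a b 1 θ) := by
        gcongr; exact le_betaMajorant h.left_mem.1 h.right_mem.1 hθ0 hθ.2
    _ = _ := by ring

lemma continuousAt_rescaled (h : IsWeaklySingular a b Ψ) {p : ℝ × ℝ} (hp : 0 < p.2) {θ : ℝ}
    (hθ : θ ∈ Ioo (0 : ℝ) 1) : ContinuousAt (fun q : ℝ × ℝ => Ψ q.1 q.2 (q.2 * θ)) p := by
  have h_mem : (p.1, p.2, p.2 * θ) ∈ timeTriangle :=
    ⟨mul_pos hp hθ.1, mul_lt_of_lt_one_right hp hθ.2⟩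
  exact ContinuousAt.comp (f := fun q : ℝ × ℝ => (q.1, q.2, q.2 * θ)) (x := p)
    (h.continuousOn.continuousAt (isOpen_timeTriangle.mem_nhds h_mem)) (by fun_prop)

lemma continuousOn_integral (h : IsWeaklySingular a b Ψ) :
    ContinuousOn (fun p : ℝ × ℝ => ∫ s in (0 : ℝ)..p.2, Ψ p.1 p.2 s) {p | 0 < p.2} := by
  intro p hp
  have h_rescale : ∀ q : ℝ × ℝ,
      ∫ s in (0 : ℝ)..q.2, Ψ q.1 q.2 s = q.2 * ∫ θ in (0 : ℝ)..1, Ψ q.1 q.2 (q.2 * θ) := by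
    intro q
    simpa only [mul_zero, mul_one, smul_eq_mul] using
      (intervalIntegral.smul_integral_comp_mul_left (a := 0) (b := 1) (Ψ q.1 q.2) q.2).symm
  simp_rw [h_rescale]
  obtain ⟨C, h_bound⟩ := h.exists_bound_rescaled hp
  have h_near : ∀ᶠ q : ℝ × ℝ in 𝓝 p, q.2 ∈ Ioo (p.2 / 2) (2 * p.2) :=
    continuousAt_snd.eventually_mem (Ioo_mem_nhds (half_lt_self hp) (lt_two_mul_self hp))
  refine (continuousAt_snd.mul ?_).continuousWithinAt
  refine intervalIntegral.continuousAt_of_dominated_interval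
    (bound := fun θ => C * betaMajorant a b 1 θ) ?_ ?_
    ((intervalIntegrable_betaMajorant h.left_mem.2 h.right_mem.2 1).const_mul _) ?_
  · filter_upwards [h_near] with q hq
    rw [uIoc_of_le zero_le_one]
    exact h.aestronglyMeasurable_rescaled q.1 ((half_pos hp).trans hq.1)
  · filter_upwards [h_near] with q hq
    rw [uIoc_of_le zero_le_one]
    exact ae_mem_Ioc_of_forall_mem_Ioo fun θ hθ => h_bound q.1 q.2 θ hq.1 hq.2 hθ
  · rw [uIoc_of_le zero_le_one]
    exact ae_mem_Ioc_of_forall_mem_Ioo fun θ hθ => h.continuousAt_rescaled hp hθ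

lemma hasDerivAt_integral (h : IsWeaklySingular a b Ψ) (h' : IsWeaklySingular a' b' Ψ')
    (h_deriv : ∀ x t s, 0 < s → s < t → HasDerivAt (fun x => Ψ x t s) (Ψ' x t s) x) (x : ℝ)
    {t : ℝ} (ht : 0 < t) :
    HasDerivAt (fun x => ∫ s in (0 : ℝ)..t, Ψ x t s) (∫ s in (0 : ℝ)..t, Ψ' x t s) x := by
  obtain ⟨C, -, h_bound⟩ := h'.exists_bound_betaMajorant ht
  have h_meas := h.aestronglyMeasurable (t := t)
  have h_meas' := h'.aestronglyMeasurable x t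
  rw [← uIoc_of_le ht.le] at h_meas h_meas'
  refine (intervalIntegral.hasDerivAt_integral_of_dominated_loc_of_deriv_le (s := univ) univ_mem
    (F := fun x s => Ψ x t s) (F' := fun x s => Ψ' x t s)
    (bound := fun s => C * betaMajorant a' b' t s) (Eventually.of_forall h_meas)
    (h.intervalIntegrable x ht) h_meas' ?_
    ((intervalIntegrable_betaMajorant h'.left_mem.2 h'.right_mem.2 t).const_mul C) ?_).2
  · rw [uIoc_of_le ht.le]
    exact ae_mem_Ioc_of_forall_mem_Ioo fun s hs x _ => h_bound x t s hs.1 hs.2 le_rfl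
  · rw [uIoc_of_le ht.le]
    exact ae_mem_Ioc_of_forall_mem_Ioo fun s hs x _ => h_deriv x t s hs.1 hs.2

lemma weaken (h : IsWeaklySingular a b Ψ) (ha : a ≤ a') (ha' : a' < 1) (hb : b ≤ b')
    (hb' : b' < 1) : IsWeaklySingular a' b' Ψ := by
  refine ⟨⟨h.left_mem.1.trans ha, ha'⟩, ⟨h.right_mem.1.trans hb, hb'⟩, h.continuousOn,
    fun T hT => ?_⟩
  obtain ⟨C, hC, h_bound⟩ := h.bound T hT
  have h_rpow : ∀ {r p q : ℝ}, 0 < r → r ≤ T → p ≤ q → r ^ (-p) ≤ T ^ (q - p) * r ^ (-q) := by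
    intro r p q hr hrT hpq
    rw [show -p = (q - p) + -q by ring, Real.rpow_add hr]
    gcongr
  refine ⟨C * (T ^ (a' - a) * T ^ (b' - b)), by positivity, fun x t s hs hst htT => ?_⟩
  have hts : 0 < t - s := sub_pos.2 hst
  calc |Ψ x t s| ≤ C * ((t - s) ^ (-a) * s ^ (-b)) := h_bound x t s hs hst htT
    _ ≤ C * ((T ^ (a' - a) * (t - s) ^ (-a')) * (T ^ (b' - b) * s ^ (-b'))) := by
        gcongr
        · exact h_rpow hts (by linarith) ha
        · exact h_rpow hs (by linarith) hb
    _ = _ := by ring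

lemma linear_combination (h : IsWeaklySingular a b Ψ) (h' : IsWeaklySingular a b Ψ') (k l : ℝ) :
    IsWeaklySingular a b fun x t s => k * Ψ x t s + l * Ψ' x t s := by
  refine ⟨h.left_mem, h.right_mem,
    (continuousOn_const.mul h.continuousOn).add (continuousOn_const.mul h'.continuousOn),
    fun T hT => ?_⟩
  obtain ⟨C, hC, h_bound⟩ := h.bound T hT
  obtain ⟨C', hC', h_bound'⟩ := h'.bound T hT
  refine ⟨|k| * C + |l| * C', by positivity, fun x t s hs hst htT => ?_⟩
  calc |k * Ψ x t s + l * Ψ' x t s| ≤ |k| * |Ψ x t s| + |l| * |Ψ' x t s| := by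
        rw [← abs_mul, ← abs_mul]; exact abs_add_le _ _
    _ ≤ |k| * (C * ((t - s) ^ (-a) * s ^ (-b))) + |l| * (C' * ((t - s) ^ (-a) * s ^ (-b))) := by
        gcongr
        · exact h_bound x t s hs hst htT
        · exact h_bound' x t s hs hst htT
    _ = _ := by ring

end IsWeaklySingular

lemma integral_indicator_Ioo {a b : ℝ} (hab : a ≤ b) (f : ℝ → ℝ) :
    ∫ x, (Ioo a b).indicator f x = ∫ x in a..b, f x := by
  rw [integral_indicator measurableSet_Ioo, ← integral_Ioc_eq_integral_Ioo,
    intervalIntegral.integral_of_le hab]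

lemma integral_triangle_swap {f : ℝ → ℝ → ℝ} {t : ℝ} (ht : 0 ≤ t)
    (hf : Integrable ({p : ℝ × ℝ | 0 < p.2 ∧ p.2 < p.1 ∧ p.1 < t}.indicator
      fun p => f p.1 p.2)) :
    ∫ s in (0 : ℝ)..t, ∫ τ in s..t, f τ s = ∫ τ in (0 : ℝ)..t, ∫ s in (0 : ℝ)..τ, f τ s := by
  set F : ℝ × ℝ → ℝ := {p : ℝ × ℝ | 0 < p.2 ∧ p.2 < p.1 ∧ p.1 < t}.indicator fun p => f p.1 p.2
  have h_columns : ∀ s, ∫ τ, F (τ, s) = (Ioo 0 t).indicator (fun s => ∫ τ in s..t, f τ s) s := by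
    intro s
    by_cases hs : s ∈ Ioo 0 t
    · rw [indicator_of_mem hs, ← integral_indicator_Ioo hs.2.le]
      congr 1 with τ
      simp [F, indicator_apply, hs.1]
    · have h_zero : ∀ τ, F (τ, s) = 0 := fun τ =>
        indicator_of_notMem (fun h => hs ⟨h.1, h.2.1.trans h.2.2⟩) _
      simp [indicator_of_notMem hs, h_zero]
  have h_rows : ∀ τ, ∫ s, F (τ, s) =
      (Ioo 0 t).indicator (fun τ => ∫ s in (0 : ℝ)..τ, f τ s) τ := by
    intro τ
    by_cases hτ : τ ∈ Ioo 0 t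
    · rw [indicator_of_mem hτ, ← integral_indicator_Ioo hτ.1.le]
      congr 1 with s
      simp [F, indicator_apply, hτ.2]
    · have h_zero : ∀ s, F (τ, s) = 0 := fun s =>
        indicator_of_notMem (fun h => hτ ⟨h.1.trans h.2.1, h.2.2⟩) _
      simp [indicator_of_notMem hτ, h_zero]
  have h_swap := integral_integral_swap (f := fun τ s => F (τ, s)) hf
  simp_rw [h_columns, h_rows, integral_indicator_Ioo ht] at h_swap
  exact h_swap.symm

lemma integrable_indicator_rpow_neg {r : ℝ} (hr : r < 1) {t : ℝ} (ht : 0 ≤ t) :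
    Integrable ((Ioo 0 t).indicator fun s : ℝ => s ^ (-r)) := by
  have h := intervalIntegrable_rpow_neg hr t
  rw [intervalIntegrable_iff, uIoc_of_le ht] at h
  exact (h.mono_set Ioo_subset_Ioc_self).integrable_indicator measurableSet_Ioo

namespace IsWeaklySingular

variable {a b : ℝ} {Ψ : ℝ → ℝ → ℝ → ℝ}

/-- The weight `(τ - s) ^ (-a) * s ^ (-b)` is the integrand of a convolution of two integrable
functions, hence integrable on the triangle. -/
lemma integrable_triangle (h : IsWeaklySingular a b Ψ) (x : ℝ) {t : ℝ} (ht : 0 < t) :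
    Integrable ({p : ℝ × ℝ | 0 < p.2 ∧ p.2 < p.1 ∧ p.1 < t}.indicator
      fun p => Ψ x p.1 p.2) := by
  have h_open : IsOpen {p : ℝ × ℝ | 0 < p.2 ∧ p.2 < p.1 ∧ p.1 < t} :=
    (isOpen_lt continuous_const continuous_snd).inter
      ((isOpen_lt continuous_snd continuous_fst).inter (isOpen_lt continuous_fst continuous_const))
  obtain ⟨C, hC, h_bound⟩ := h.bound t ht
  have h_weight := (integrable_indicator_rpow_neg h.right_mem.2 ht.le).convolution_integrand
    (ContinuousLinearMap.mul ℝ ℝ) (integrable_indicator_rpow_neg h.left_mem.2 ht.le)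
  refine (h_weight.const_mul C).mono' ?_ (ae_of_all _ fun p => ?_)
  · rw [aestronglyMeasurable_indicator_iff h_open.measurableSet]
    refine ContinuousOn.aestronglyMeasurable ?_ h_open.measurableSet
    exact h.continuousOn.comp (f := fun p : ℝ × ℝ => (x, p.1, p.2)) (by fun_prop)
      fun p hp => ⟨hp.1, hp.2.1⟩
  rw [ContinuousLinearMap.mul_apply']
  by_cases hp : p ∈ {p : ℝ × ℝ | 0 < p.2 ∧ p.2 < p.1 ∧ p.1 < t}
  · have ⟨h_pos, h_lt, h_top⟩ := hp
    rw [indicator_of_mem hp,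
      indicator_of_mem (show p.2 ∈ Ioo 0 t from ⟨h_pos, h_lt.trans h_top⟩),
      indicator_of_mem (show p.1 - p.2 ∈ Ioo 0 t from ⟨by linarith, by linarith⟩),
      mul_comm (p.2 ^ (-b))]
    exact h_bound x p.1 p.2 h_pos h_lt h_top.le
  · rw [indicator_of_notMem hp, norm_zero]
    exact mul_nonneg hC (mul_nonneg
      (indicator_apply_nonneg fun h_mem => Real.rpow_nonneg h_mem.1.le _)
      (indicator_apply_nonneg fun h_mem => Real.rpow_nonneg h_mem.1.le _))

lemma integral_swap (h : IsWeaklySingular a b Ψ) (x : ℝ) {t : ℝ} (ht : 0 < t) :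
    ∫ s in (0 : ℝ)..t, ∫ τ in s..t, Ψ x τ s = ∫ τ in (0 : ℝ)..t, ∫ s in (0 : ℝ)..τ, Ψ x τ s :=
  integral_triangle_swap ht.le (h.integrable_triangle x ht)

end IsWeaklySingular

/-! ### The Duhamel integral -/

section Duhamel

/-- The integrand of the `j`-th `x`-derivative of the Duhamel integral with source `h`. -/
def duhamelIntegrand (j : ℕ) (d c : ℝ) (h : ℝ → ℝ → ℝ) (x t s : ℝ) : ℝ :=
  heatOp j d c (t - s) (fun y => h y s) x

/-- The `j`-th `x`-derivative of the solution of `w_t = d w_xx + c w_x + h` with zero data. -/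
def duhamel (j : ℕ) (d c : ℝ) (h : ℝ → ℝ → ℝ) (x t : ℝ) : ℝ :=
  ∫ s in (0 : ℝ)..t, duhamelIntegrand j d c h x t s

/-- Sources that are continuous for positive times and blow up at most like `t ^ (-1/2)`. -/
structure IsSource (H : ℝ) (h : ℝ → ℝ → ℝ) : Prop where
  continuousOn : ContinuousOn (fun p : ℝ × ℝ => h p.1 p.2) {p | 0 < p.2}
  bound : ∀ x s, 0 < s → |h x s| ≤ H * s ^ (-(1 / 2) : ℝ)

/-- Sources that are 1/2-Hölder in `x`, with constant at most of order `t ^ (-3/4)`, locally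
uniformly in time. -/
def IsHolderSource (h : ℝ → ℝ → ℝ) : Prop :=
  ∀ T, 0 < T → ∃ K, 0 ≤ K ∧ ∀ x y s, 0 < s → s ≤ T →
    |h x s - h y s| ≤ K * s ^ (-(3 / 4) : ℝ) * √|x - y|

variable {d H : ℝ} {h : ℝ → ℝ → ℝ}

lemma duhamel_zero_time (j : ℕ) (d c : ℝ) (h : ℝ → ℝ → ℝ) (x : ℝ) : duhamel j d c h x 0 = 0 :=
  intervalIntegral.integral_same

lemma duhamel_congr {j : ℕ} {c x t : ℝ} {h' : ℝ → ℝ → ℝ} (ht : 0 ≤ t)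
    (hh : ∀ y s, 0 < s → h y s = h' y s) : duhamel j d c h x t = duhamel j d c h' x t := by
  refine intervalIntegral.integral_congr_ae (ae_of_all _ fun s hs => ?_)
  rw [uIoc_of_le ht] at hs
  simp only [duhamelIntegrand, hh _ s hs.1]

namespace IsSource

lemma nonneg (hs : IsSource H h) : 0 ≤ H := by
  simpa using (abs_nonneg _).trans (hs.bound 0 1 one_pos)

lemma continuous_slice (hs : IsSource H h) {s : ℝ} (h_pos : 0 < s) : Continuous fun y => h y s :=
  hs.continuousOn.comp_continuous (f := fun y => (y, s)) (by fun_prop) fun _ => h_pos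

lemma intervalIntegrable (hs : IsSource H h) (x : ℝ) {t : ℝ} (ht : 0 < t) :
    IntervalIntegrable (h x) volume 0 t := by
  have h_weight := (intervalIntegrable_rpow_neg (b := 1 / 2) (by norm_num) t).const_mul H
  refine h_weight.mono_fun' ?_ ?_ <;> rw [uIoc_of_le ht.le]
  · exact ContinuousOn.aestronglyMeasurable (hs.continuousOn.comp (f := fun s => (x, s))
      (by fun_prop) fun s hs => hs.1) measurableSet_Ioc
  · exact (ae_restrict_iff' measurableSet_Ioc).2 (ae_of_all _ fun s h_mem => hs.bound x s h_mem.1)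

lemma abs_duhamelIntegrand_le {j : ℕ} (hj : j ≤ 2) (hd : 0 < d) (c : ℝ) (hs : IsSource H h)
    (x : ℝ) {s t : ℝ} (h_pos : 0 < s) (hst : s < t) : |duhamelIntegrand j d c h x t s| ≤
      heatConst d * H * ((t - s) ^ (-((j : ℝ) / 2)) * s ^ (-(1 / 2) : ℝ)) := by
  have h_bound := abs_heatOp_le (c := c) hj hd (sub_nonneg.2 hst.le)
    (fun y => hs.bound y s h_pos) x
  rw [neg_div] at h_bound
  exact h_bound.trans_eq (by ring)

lemma continuousOn_duhamelIntegrand {j : ℕ} (hj : j ≤ 2) (hd : 0 < d) (c : ℝ)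
    (hs : IsSource H h) :
    ContinuousOn (fun p : ℝ × ℝ × ℝ => duhamelIntegrand j d c h p.1 p.2.1 p.2.2)
      timeTriangle := by
  intro p ⟨h_pos, h_lt⟩
  have hH := hs.nonneg
  have h_scale : Continuous fun p : ℝ × ℝ × ℝ => heatScale d (p.2.1 - p.2.2) :=
    (continuous_heatScale d).comp (by fun_prop)
  have h_factor : ContinuousAt (fun p : ℝ × ℝ × ℝ => (heatScale d (p.2.1 - p.2.2))⁻¹ ^ j) p :=
    (h_scale.continuousAt.inv₀ (heatScale_pos hd (sub_pos.2 h_lt)).ne').pow j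
  have h_away : ∀ᶠ q : ℝ × ℝ × ℝ in 𝓝[timeTriangle] p, p.2.2 / 2 < q.2.2 :=
    mem_nhdsWithin_of_mem_nhds <| (continuous_snd.comp continuous_snd).continuousAt.eventually_mem
      (Ioi_mem_nhds (half_lt_self h_pos))
  refine h_factor.continuousWithinAt.mul (continuousWithinAt_gaussDeriv_average
    (B := H * (p.2.2 / 2) ^ (-(1 / 2) : ℝ)) hj ?_ ?_ fun y => ?_)
  · filter_upwards [h_away] with q hq
    exact (hs.continuous_slice ((half_pos h_pos).trans hq)).comp (by fun_prop)
  · filter_upwards [h_away] with q hq y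
    refine (hs.bound _ _ ((half_pos h_pos).trans hq)).trans ?_
    gcongr H * ?_
    exact Real.rpow_le_rpow_of_nonpos (half_pos h_pos) hq.le (by norm_num)
  · refine (ContinuousAt.comp (x := p) (g := fun q : ℝ × ℝ => h q.1 q.2)
      (f := fun q : ℝ × ℝ × ℝ =>
        (q.1 + c * (q.2.1 - q.2.2) + heatScale d (q.2.1 - q.2.2) * y, q.2.2)) ?_
      (Continuous.continuousAt (by fun_prop))).continuousWithinAt
    exact hs.continuousOn.continuousAt
      ((isOpen_lt continuous_const continuous_snd).mem_nhds h_pos)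

lemma isWeaklySingular_zero (hs : IsSource H h) (hd : 0 < d) (c : ℝ) :
    IsWeaklySingular 0 (1 / 2) (duhamelIntegrand 0 d c h) where
  left_mem := by norm_num
  right_mem := by norm_num
  continuousOn := hs.continuousOn_duhamelIntegrand (by norm_num) hd c
  bound _ _ := ⟨heatConst d * H, mul_nonneg (heatConst_pos d).le hs.nonneg,
    fun x t s h_pos hst _ => by
      simpa using hs.abs_duhamelIntegrand_le (j := 0) (by norm_num) hd c x h_pos hst⟩

lemma isWeaklySingular_one (hs : IsSource H h) (hd : 0 < d) (c : ℝ) :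
    IsWeaklySingular (1 / 2) (1 / 2) (duhamelIntegrand 1 d c h) where
  left_mem := by norm_num
  right_mem := by norm_num
  continuousOn := hs.continuousOn_duhamelIntegrand (by norm_num) hd c
  bound _ _ := ⟨heatConst d * H, mul_nonneg (heatConst_pos d).le hs.nonneg,
    fun x t s h_pos hst _ => by
      simpa using hs.abs_duhamelIntegrand_le (j := 1) (by norm_num) hd c x h_pos hst⟩

lemma isWeaklySingular_two (hs : IsSource H h) (hh : IsHolderSource h) (hd : 0 < d) (c : ℝ) :
    IsWeaklySingular (3 / 4) (3 / 4) (duhamelIntegrand 2 d c h) where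
  left_mem := by norm_num
  right_mem := by norm_num
  continuousOn := hs.continuousOn_duhamelIntegrand le_rfl hd c
  bound T hT := by
    obtain ⟨K, hK, h_holder⟩ := hh T hT
    refine ⟨heatConst d * K, mul_nonneg (heatConst_pos d).le hK, fun x t s h_pos hst htT => ?_⟩
    exact (abs_heatOp_two_le_of_holder hd (sub_nonneg.2 hst.le) (hs.continuous_slice h_pos)
      (fun y => hs.bound y s h_pos) (fun a b => h_holder a b s h_pos (hst.le.trans htT))
      x).trans_eq (by ring)

lemma hasDerivAt_duhamelIntegrand {j : ℕ} (hj : j ≤ 1) (hs : IsSource H h) (hd : 0 < d) (c : ℝ)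
    (x t s : ℝ) (h_pos : 0 < s) (hst : s < t) :
    HasDerivAt (fun x => duhamelIntegrand j d c h x t s) (duhamelIntegrand (j + 1) d c h x t s) x :=
  hasDerivAt_heatOp hj hd (sub_pos.2 hst) (hs.continuous_slice h_pos)
    (fun y => hs.bound y s h_pos) x

lemma hasDerivAt_duhamel_zero (hs : IsSource H h) (hd : 0 < d) (c x : ℝ) {t : ℝ} (ht : 0 < t) :
    HasDerivAt (fun x => duhamel 0 d c h x t) (duhamel 1 d c h x t) x :=
  (hs.isWeaklySingular_zero hd c).hasDerivAt_integral (hs.isWeaklySingular_one hd c)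
    (hs.hasDerivAt_duhamelIntegrand zero_le_one hd c) x ht

lemma hasDerivAt_duhamel_one (hs : IsSource H h) (hh : IsHolderSource h) (hd : 0 < d) (c x : ℝ)
    {t : ℝ} (ht : 0 < t) : HasDerivAt (fun x => duhamel 1 d c h x t) (duhamel 2 d c h x t) x :=
  (hs.isWeaklySingular_one hd c).hasDerivAt_integral (hs.isWeaklySingular_two hh hd c)
    (hs.hasDerivAt_duhamelIntegrand le_rfl hd c) x ht

lemma abs_duhamel_zero_le (hs : IsSource H h) (hd : 0 < d) (c x : ℝ) {t : ℝ} (ht : 0 < t) :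
    |duhamel 0 d c h x t| ≤ heatConst d * H * (6 * t ^ (1 / 2 : ℝ)) := by
  have h_bound := abs_integral_le_of_le_beta (a := 0) (b := 1 / 2) (by norm_num) (by norm_num) ht
    (mul_nonneg (heatConst_pos d).le hs.nonneg) (F := duhamelIntegrand 0 d c h x t)
    fun s h_pos hst => by
      simpa using hs.abs_duhamelIntegrand_le (j := 0) (by norm_num) hd c x h_pos hst
  norm_num at h_bound ⊢
  exact h_bound

lemma continuousOn_duhamel_zero (hs : IsSource H h) (hd : 0 < d) (c : ℝ) :
    ContinuousOn (fun p : ℝ × ℝ => duhamel 0 d c h p.1 p.2) {p | 0 ≤ p.2} := by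
  rintro ⟨x, t⟩ (ht : 0 ≤ t)
  rcases ht.lt_or_eq with ht | rfl
  · exact ((hs.isWeaklySingular_zero hd c).continuousOn_integral.continuousAt
      ((isOpen_lt continuous_const continuous_snd).mem_nhds ht)).continuousWithinAt
  · have h_weight : Continuous fun p : ℝ × ℝ => heatConst d * H * (6 * p.2 ^ (1 / 2 : ℝ)) :=
      continuous_const.mul
        (continuous_const.mul (continuous_snd.rpow_const fun _ => Or.inr (by norm_num)))
    have h_vanish : Tendsto (fun p : ℝ × ℝ => heatConst d * H * (6 * p.2 ^ (1 / 2 : ℝ)))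
        (𝓝[{p | 0 ≤ p.2}] (x, 0)) (𝓝 0) := by
      simpa using (h_weight.tendsto (x, 0)).mono_left nhdsWithin_le_nhds
    rw [ContinuousWithinAt, duhamel_zero_time]
    refine squeeze_zero_norm' ?_ h_vanish
    filter_upwards [self_mem_nhdsWithin] with p (hp : 0 ≤ p.2)
    rcases hp.lt_or_eq with hp | hp
    · exact hs.abs_duhamel_zero_le hd c p.1 hp
    · simp [← hp, duhamel_zero_time]

lemma abs_duhamel_one_le (hs : IsSource H h) (hd : 0 < d) (c x : ℝ) {t : ℝ} (ht : 0 < t) :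
    |duhamel 1 d c h x t| ≤ heatConst d * H * 8 := by
  have h_bound := abs_integral_le_of_le_beta (a := 1 / 2) (b := 1 / 2) (by norm_num)
    (by norm_num) ht (mul_nonneg (heatConst_pos d).le hs.nonneg)
    (F := duhamelIntegrand 1 d c h x t) fun s h_pos hst => by
      simpa using hs.abs_duhamelIntegrand_le (j := 1) (by norm_num) hd c x h_pos hst
  norm_num at h_bound ⊢
  exact h_bound

lemma abs_duhamel_one_sub_le (hs : IsSource H h) (hd : 0 < d) (c x x' : ℝ) {t : ℝ} (ht : 0 < t) :
    |duhamel 1 d c h x t - duhamel 1 d c h x' t| ≤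
      24 * heatConst d * H * √|x - x'| * t ^ (-(1 / 4) : ℝ) := by
  have hC := heatConst_pos d
  have hH := hs.nonneg
  have h_integrable := fun x => (hs.isWeaklySingular_one hd c).intervalIntegrable x ht
  have h_bound := abs_integral_le_of_le_beta (a := 3 / 4) (b := 1 / 2) (by norm_num)
    (by norm_num) ht (C := 2 * heatConst d * H * √|x - x'|) (by positivity)
    (F := fun s => duhamelIntegrand 1 d c h x t s - duhamelIntegrand 1 d c h x' t s)
    fun s h_pos hst => (abs_heatOp_one_sub_le (c := c) hd (sub_pos.2 hst)
      (hs.continuous_slice h_pos) (fun y => hs.bound y s h_pos) x x').trans_eq (by ring)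
  rw [intervalIntegral.integral_sub (h_integrable x) (h_integrable x')] at h_bound
  refine h_bound.trans_eq ?_
  norm_num
  ring

lemma isWeaklySingular_generator (hs : IsSource H h) (hh : IsHolderSource h) (hd : 0 < d)
    (c : ℝ) : IsWeaklySingular (3 / 4) (3 / 4) fun x t s =>
      d * duhamelIntegrand 2 d c h x t s + c * duhamelIntegrand 1 d c h x t s :=
  (hs.isWeaklySingular_two hh hd c).linear_combination ((hs.isWeaklySingular_one hd c).weaken
    (by norm_num) (by norm_num) (by norm_num) (by norm_num)) d c

lemma hasDerivAt_duhamelIntegrand_time (hs : IsSource H h) (hd : 0 < d) (c x : ℝ) {s τ : ℝ}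
    (h_pos : 0 < s) (hsτ : s < τ) : HasDerivAt (fun τ => duhamelIntegrand 0 d c h x τ s)
      (d * duhamelIntegrand 2 d c h x τ s + c * duhamelIntegrand 1 d c h x τ s) τ :=
  (hasDerivAt_heatOp_time (c := c) hd (sub_pos.2 hsτ) (hs.continuous_slice h_pos)
    (fun y => hs.bound y s h_pos) x).comp_sub_const τ s

lemma integral_generator_duhamelIntegrand (hs : IsSource H h) (hh : IsHolderSource h)
    (hd : 0 < d) (c x : ℝ) {s t : ℝ} (h_pos : 0 < s) (hst : s < t) :
    ∫ τ in s..t, (d * duhamelIntegrand 2 d c h x τ s + c * duhamelIntegrand 1 d c h x τ s) =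
      duhamelIntegrand 0 d c h x t s - h x s := by
  have h_singular := hs.isWeaklySingular_generator hh hd c
  obtain ⟨C, -, h_bound⟩ := h_singular.bound t (h_pos.trans hst)
  have h_initial : duhamelIntegrand 0 d c h x s s = h x s := by
    rw [duhamelIntegrand, sub_self, heatOp_zero_time]
  rw [← h_initial]
  refine intervalIntegral.integral_eq_sub_of_hasDerivAt_of_le hst.le ?_
    (fun τ hτ => hs.hasDerivAt_duhamelIntegrand_time hd c x h_pos hτ.1) ?_
  · exact ((continuous_heatOp_zero d c (hs.continuous_slice h_pos)
      fun y => hs.bound y s h_pos).comp (f := fun τ => (x, τ - s)) (by fun_prop)).continuousOn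
  · have h_weight : IntervalIntegrable (fun τ : ℝ => (τ - s) ^ (-(3 / 4) : ℝ)) volume s t := by
      simpa using
        (intervalIntegrable_rpow_neg (b := 3 / 4) (by norm_num) (t - s)).comp_sub_right s
    refine (h_weight.const_mul (C * s ^ (-(3 / 4) : ℝ))).mono_fun' ?_ ?_ <;>
      rw [uIoc_of_le hst.le]
    · exact ContinuousOn.aestronglyMeasurable (h_singular.continuousOn.comp
        (f := fun τ => (x, τ, s)) (by fun_prop) fun τ hτ => ⟨h_pos, hτ.1⟩) measurableSet_Ioc
    · refine (ae_restrict_iff' measurableSet_Ioc).2 (ae_of_all _ fun τ hτ => ?_)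
      exact (h_bound x τ s h_pos hτ.1 hτ.2).trans_eq (by ring)

/-- Integrate the equation for the slice issued at time `s` from `s` to `t`, then exchange the order
of integration. -/
lemma duhamel_zero_eq (hs : IsSource H h) (hh : IsHolderSource h) (hd : 0 < d) (c x : ℝ) {t : ℝ}
    (ht : 0 < t) : duhamel 0 d c h x t = (∫ s in (0 : ℝ)..t, h x s) +
      ∫ s in (0 : ℝ)..t, (d * duhamel 2 d c h x s + c * duhamel 1 d c h x s) := by
  have h_swap := (hs.isWeaklySingular_generator hh hd c).integral_swap x ht
  have h_slices : ∫ s in (0 : ℝ)..t, (∫ τ in s..t,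
      (d * duhamelIntegrand 2 d c h x τ s + c * duhamelIntegrand 1 d c h x τ s)) =
      ∫ s in (0 : ℝ)..t, (duhamelIntegrand 0 d c h x t s - h x s) := by
    refine intervalIntegral.integral_congr_ae ?_
    rw [uIoc_of_le ht.le]
    exact ae_mem_Ioc_of_forall_mem_Ioo fun s hs' =>
      hs.integral_generator_duhamelIntegrand hh hd c x hs'.1 hs'.2
  have h_times : ∫ τ in (0 : ℝ)..t, (∫ s in (0 : ℝ)..τ,
      (d * duhamelIntegrand 2 d c h x τ s + c * duhamelIntegrand 1 d c h x τ s)) =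
      ∫ s in (0 : ℝ)..t, (d * duhamel 2 d c h x s + c * duhamel 1 d c h x s) := by
    refine intervalIntegral.integral_congr_ae (ae_of_all _ fun τ hτ => ?_)
    rw [uIoc_of_le ht.le] at hτ
    rw [intervalIntegral.integral_add
      (((hs.isWeaklySingular_two hh hd c).intervalIntegrable x hτ.1).const_mul _)
      (((hs.isWeaklySingular_one hd c).intervalIntegrable x hτ.1).const_mul _),
      intervalIntegral.integral_const_mul, intervalIntegral.integral_const_mul, duhamel, duhamel]
  rw [h_slices, h_times, intervalIntegral.integral_sub
    ((hs.isWeaklySingular_zero hd c).intervalIntegrable x ht) (hs.intervalIntegrable x ht)]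
    at h_swap
  exact sub_eq_iff_eq_add'.1 h_swap

lemma continuousOn_generator_duhamel (hs : IsSource H h) (hh : IsHolderSource h) (hd : 0 < d)
    (c x : ℝ) :
    ContinuousOn (fun s => d * duhamel 2 d c h x s + c * duhamel 1 d c h x s) (Ioi 0) := by
  have h_line : ContinuousOn (fun s : ℝ => (x, s)) (Ioi 0) := by fun_prop
  exact (continuousOn_const.mul
    ((hs.isWeaklySingular_two hh hd c).continuousOn_integral.comp h_line fun s hs => hs)).add
    (continuousOn_const.mul
      ((hs.isWeaklySingular_one hd c).continuousOn_integral.comp h_line fun s hs => hs))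

lemma intervalIntegrable_generator_duhamel (hs : IsSource H h) (hh : IsHolderSource h)
    (hd : 0 < d) (c x : ℝ) {t : ℝ} (ht : 0 < t) :
    IntervalIntegrable (fun s => d * duhamel 2 d c h x s + c * duhamel 1 d c h x s)
      volume 0 t := by
  obtain ⟨C, hC, h_bound⟩ := (hs.isWeaklySingular_two hh hd c).bound t ht
  have h_two : ∀ s ∈ Ioc 0 t, |duhamel 2 d c h x s| ≤ C * (16 * s ^ (-(1 / 2) : ℝ)) := by
    intro s h_mem
    have h := abs_integral_le_of_le_beta (a := 3 / 4) (b := 3 / 4) (by norm_num) (by norm_num)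
      h_mem.1 hC (F := duhamelIntegrand 2 d c h x s)
      fun r hr hrs => h_bound x s r hr hrs h_mem.2
    norm_num at h ⊢
    exact h
  have h_weight := ((intervalIntegrable_rpow_neg (b := 1 / 2) (by norm_num) t).const_mul
    (|d| * (C * 16))).add (intervalIntegrable_const (c := |c| * (heatConst d * H * 8)))
  refine h_weight.mono_fun' ?_ ?_ <;> rw [uIoc_of_le ht.le]
  · exact ((hs.continuousOn_generator_duhamel hh hd c x).mono fun s hs => hs.1).aestronglyMeasurable
      measurableSet_Ioc
  · refine (ae_restrict_iff' measurableSet_Ioc).2 (ae_of_all _ fun s h_mem => ?_)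
    calc |d * duhamel 2 d c h x s + c * duhamel 1 d c h x s|
        ≤ |d| * |duhamel 2 d c h x s| + |c| * |duhamel 1 d c h x s| := by
          rw [← abs_mul, ← abs_mul]; exact abs_add_le _ _
      _ ≤ |d| * (C * (16 * s ^ (-(1 / 2) : ℝ))) + |c| * (heatConst d * H * 8) := by
          gcongr
          · exact h_two s h_mem
          · exact hs.abs_duhamel_one_le hd c x h_mem.1
      _ = _ := by ring

end IsSource

lemma hasDerivAt_integral_of_continuousOn_Ioi {F : ℝ → ℝ} (hF : ContinuousOn F (Ioi 0)) {t : ℝ}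
    (ht : 0 < t) (h_int : IntervalIntegrable F volume 0 t) :
    HasDerivAt (fun t => ∫ s in (0 : ℝ)..t, F s) (F t) t :=
  intervalIntegral.integral_hasDerivAt_right h_int
    (hF.stronglyMeasurableAtFilter isOpen_Ioi t ht) (hF.continuousAt (Ioi_mem_nhds ht))

lemma IsSource.hasDerivAt_duhamel_time (hs : IsSource H h) (hh : IsHolderSource h) (hd : 0 < d)
    (c x : ℝ) {t : ℝ} (ht : 0 < t) : HasDerivAt (fun t => duhamel 0 d c h x t)
      (h x t + (d * duhamel 2 d c h x t + c * duhamel 1 d c h x t)) t := by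
  have h_source : ContinuousOn (h x) (Ioi 0) :=
    hs.continuousOn.comp (f := fun s => (x, s)) (by fun_prop) fun s hs => hs
  refine ((hasDerivAt_integral_of_continuousOn_Ioi h_source ht (hs.intervalIntegrable x ht)).add
    (hasDerivAt_integral_of_continuousOn_Ioi (hs.continuousOn_generator_duhamel hh hd c x) ht
      (hs.intervalIntegrable_generator_duhamel hh hd c x ht))).congr_of_eventuallyEq ?_
  filter_upwards [Ioi_mem_nhds ht] with τ hτ
  exact hs.duhamel_zero_eq hh hd c x hτ

end Duhamel

/-! ### Controlled jets -/

/-- The constant of the action of the heat operators on the envelope. -/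
def heatEnvelopeConst (d : ℝ) : ℝ :=
  48 * convConst d * (Real.pi + envelopeMass) * (1 + (√(2 * d))⁻¹) ^ 2

lemma heatEnvelopeConst_pos {d : ℝ} (hd : 0 < d) : 0 < heatEnvelopeConst d := by
  have := convConst_pos hd
  have := envelopeMass_nonneg
  unfold heatEnvelopeConst
  positivity

lemma integrable_abs_gaussDeriv_mul_envelope {j : ℕ} (hj : j ≤ 2) (z σ : ℝ) {s : ℝ}
    (hs : 0 ≤ s) : Integrable fun y => |gaussDeriv j y| * envelope (z + σ * y) s := by
  have h_line : Continuous fun y => envelope (z + σ * y) s :=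
    (continuous_envelope hs).comp (by fun_prop)
  refine (integrable_gaussDeriv_mul hj h_line.aestronglyMeasurable (B := 1)
    fun y => ?_).abs.congr (ae_of_all _ fun y => ?_)
  · rw [abs_of_pos (envelope_pos hs _)]
    exact envelope_le_one hs _
  · simp only [abs_mul, abs_of_pos (envelope_pos hs _)]

lemma integral_abs_gaussDeriv_mul_envelope_le {j : ℕ} (hj : j ≤ 2) {d s θ : ℝ} (hd : 0 < d)
    (hs : 0 ≤ s) (hθ : 0 < θ) (z : ℝ) :
    ∫ y, |gaussDeriv j y| * envelope (z + heatScale d θ * y) s ≤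
      48 * convConst d * (Real.pi + envelopeMass) * envelope z (s + θ) := by
  have h_signed := abs_integral_gaussDeriv_mul_le_envelope hj hd hs hθ zero_le_one (z := z)
    (φ := fun y => SignType.sign (gaussDeriv j y) * envelope (z + heatScale d θ * y) s)
    fun y => by
      rw [one_mul, abs_mul, abs_of_pos (envelope_pos hs _)]
      refine mul_le_of_le_one_left (envelope_pos hs _).le ?_
      rcases SignType.sign (gaussDeriv j y) with _ | _ | _ <;> simp
  simp only [← mul_assoc, self_mul_sign, mul_one] at h_signed
  exact (le_abs_self _).trans h_signed

lemma abs_heatOp_le_envelope {j : ℕ} (hj : j ≤ 2) {d c s θ : ℝ} (hd : 0 < d) (hs : 0 ≤ s)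
    (hθ : 0 < θ) {φ : ℝ → ℝ} {a a' B B' : ℝ} (hB : 0 ≤ B) (hB' : 0 ≤ B')
    (hφ : ∀ y, |φ y| ≤ B * envelope (y + a) s + B' * envelope (y + a') s) (x : ℝ) :
    |heatOp j d c θ φ x| ≤ heatEnvelopeConst d * θ ^ (-(j : ℝ) / 2) *
      (B * envelope (x + c * θ + a) (s + θ) + B' * envelope (x + c * θ + a') (s + θ)) := by
  have h_left := mul_le_mul_of_nonneg_left
    (integral_abs_gaussDeriv_mul_envelope_le hj hd hs hθ (x + c * θ + a)) hB
  have h_right := mul_le_mul_of_nonneg_left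
    (integral_abs_gaussDeriv_mul_envelope_le hj hd hs hθ (x + c * θ + a')) hB'
  have h_average := norm_integral_le_of_norm_le
    (f := fun y => gaussDeriv j y * φ (x + c * θ + heatScale d θ * y))
    (((integrable_abs_gaussDeriv_mul_envelope hj (x + c * θ + a) (heatScale d θ) hs).const_mul
      B).add ((integrable_abs_gaussDeriv_mul_envelope hj (x + c * θ + a') (heatScale d θ)
      hs).const_mul B')) (ae_of_all _ fun y => by
        rw [Real.norm_eq_abs, abs_mul]
        refine (mul_le_mul_of_nonneg_left (hφ _) (abs_nonneg _)).trans_eq ?_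
        simp only [Pi.add_apply, add_right_comm _ (heatScale d θ * y)]
        ring)
  rw [Real.norm_eq_abs] at h_average
  simp only [Pi.add_apply] at h_average
  rw [integral_add ((integrable_abs_gaussDeriv_mul_envelope hj _ _ hs).const_mul B)
    ((integrable_abs_gaussDeriv_mul_envelope hj _ _ hs).const_mul B'), integral_const_mul,
    integral_const_mul] at h_average
  have h_scale := inv_heatScale_rpow_le hd hθ.le (Nat.cast_nonneg j) (by exact_mod_cast hj)
  rw [Real.rpow_natCast] at h_scale
  rw [heatOp, abs_mul, abs_of_nonneg (by have := heatScale_nonneg d θ; positivity)]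
  refine (mul_le_mul h_scale (h_average.trans (add_le_add h_left h_right)) (abs_nonneg _)
    (by positivity)).trans_eq ?_
  unfold heatEnvelopeConst
  ring

/-- Candidate solutions with their `x`-derivatives: `X j i x t` is the `j`-th `x`-derivative of
the component `i` at `(x, t)`, where `false` stands for `u` and `true` for `v`. -/
abbrev Jet := ℕ → Bool → ℝ → ℝ → ℝ

/-- The pair of `j`-th `x`-derivatives of both components at `(x, t)`. -/
def pairAt (X : Jet) (j : ℕ) (x t : ℝ) : ℝ × ℝ := (X j false x t, X j true x t)

/-- The source term `f_i(u, v) + ∂_x (g_i(u, v))` of the equation of the component `i`. -/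
def source (f g : Bool → ℝ × ℝ → ℝ) (X : Jet) (i : Bool) (x t : ℝ) : ℝ :=
  f i (pairAt X 0 x t) + fderiv ℝ (g i) (pairAt X 0 x t) (pairAt X 1 x t)

/-- The coordinate of a pair that corresponds to the component `i`. -/
def component (i : Bool) (w : ℝ × ℝ) : ℝ := cond i w.2 w.1

lemma component_pairAt (X : Jet) (i : Bool) (j : ℕ) (x t : ℝ) :
    component i (pairAt X j x t) = X j i x t := by
  cases i <;> rfl

lemma abs_component_le_norm (i : Bool) (w : ℝ × ℝ) : |component i w| ≤ ‖w‖ := by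
  cases i
  · exact norm_fst_le w
  · exact norm_snd_le w

lemma norm_pairAt_le {X : Jet} {j : ℕ} {x t B : ℝ} (h : ∀ i, |X j i x t| ≤ B) :
    ‖pairAt X j x t‖ ≤ B :=
  norm_prod_le_iff.2 ⟨h false, h true⟩

lemma norm_pairAt_sub_le {X Y : Jet} {j : ℕ} {x t x' t' B : ℝ}
    (h : ∀ i, |X j i x t - Y j i x' t'| ≤ B) : ‖pairAt X j x t - pairAt Y j x' t'‖ ≤ B :=
  norm_prod_le_iff.2 ⟨h false, h true⟩

/-- The hypotheses on the coefficients of the system, with the bounds on the nonlinearities valid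
on the ball of radius `r` (in the maximum norm). Both equations are treated simultaneously. -/
structure AdmissibleSystem (d c : Bool → ℝ) (f g : Bool → ℝ × ℝ → ℝ) (K L r : ℝ) : Prop where
  diffusion_pos : ∀ i, 0 < d i
  speed_sub_ne_zero : ∀ i, c (!i) - c i ≠ 0
  K_nonneg : 0 ≤ K
  L_nonneg : 0 ≤ L
  radius_pos : 0 < r
  radius_le_one : r ≤ 1
  abs_reaction_le : ∀ i w, ‖w‖ ≤ r → |f i w| ≤ K * (|component i w| ^ 4 +
    |component i w| * |component (!i) w| + |component (!i) w| ^ 4)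
  abs_flux_le : ∀ i w, ‖w‖ ≤ r → |g i w| ≤ K * (|component i w| ^ 2 +
    |component i w| * |component (!i) w| + |component (!i) w| ^ 3)
  abs_reaction_sub_le : ∀ i w w', ‖w‖ ≤ r → ‖w'‖ ≤ r → |f i w - f i w'| ≤ L * ‖w - w'‖
  norm_fderiv_flux_sub_le : ∀ i w w', ‖w‖ ≤ r → ‖w'‖ ≤ r →
    ‖fderiv ℝ (g i) w - fderiv ℝ (g i) w'‖ ≤ L * ‖w - w'‖
  fderiv_flux_zero : ∀ i, fderiv ℝ (g i) 0 = 0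
  continuous_reaction : ∀ i, Continuous (f i)
  contDiff_flux : ∀ i, ContDiff ℝ 1 (g i)

namespace AdmissibleSystem

variable {d c : Bool → ℝ} {f g : Bool → ℝ × ℝ → ℝ} {K L r : ℝ}

lemma norm_fderiv_flux_le (hP : AdmissibleSystem d c f g K L r) (i : Bool) {w : ℝ × ℝ}
    (hw : ‖w‖ ≤ r) : ‖fderiv ℝ (g i) w‖ ≤ L * ‖w‖ := by
  simpa only [hP.fderiv_flux_zero, sub_zero] using
    hP.norm_fderiv_flux_sub_le i w 0 hw (by simpa only [norm_zero] using hP.radius_pos.le)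

lemma abs_reaction_le_sq (hP : AdmissibleSystem d c f g K L r) (i : Bool) {w : ℝ × ℝ}
    (hw : ‖w‖ ≤ r) : |f i w| ≤ 3 * K * ‖w‖ ^ 2 := by
  have h_own := abs_component_le_norm i w
  have h_other := abs_component_le_norm (!i) w
  have h_pow : ‖w‖ ^ 4 ≤ ‖w‖ ^ 2 :=
    pow_le_pow_of_le_one (norm_nonneg _) (hw.trans hP.radius_le_one) (by norm_num)
  have := hP.K_nonneg
  calc |f i w| ≤ _ := hP.abs_reaction_le i w hw
    _ ≤ K * (‖w‖ ^ 4 + ‖w‖ * ‖w‖ + ‖w‖ ^ 4) := by gcongr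
    _ ≤ K * (‖w‖ ^ 2 + ‖w‖ * ‖w‖ + ‖w‖ ^ 2) := by gcongr
    _ = _ := by ring

end AdmissibleSystem

/-- The admissible growth of the `x`-derivatives of a solution as `t → 0`. -/
def gradientWeight (t : ℝ) : ℝ := 1 + t ^ (-(1 / 2) : ℝ)

lemma one_add_rpow_neg_half_le {t : ℝ} (ht : 0 < t) :
    (1 + t) ^ (-(1 / 2) : ℝ) ≤ t ^ (-(1 / 2) : ℝ) :=
  Real.rpow_le_rpow_of_nonpos ht (by linarith) (by norm_num)

lemma one_add_rpow_neg_half_le_one {t : ℝ} (ht : 0 < t) : (1 + t) ^ (-(1 / 2) : ℝ) ≤ 1 :=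
  Real.rpow_le_one_of_one_le_of_nonpos (by linarith) (by norm_num)

lemma one_add_rpow_mul_gradientWeight_le {t : ℝ} (ht : 0 < t) :
    (1 + t) ^ (-(1 / 2) : ℝ) * gradientWeight t ≤ 2 * t ^ (-(1 / 2) : ℝ) := by
  have : 0 < t ^ (-(1 / 2) : ℝ) := by positivity
  unfold gradientWeight
  nlinarith [one_add_rpow_neg_half_le ht, one_add_rpow_neg_half_le_one ht]

/-- The set on which the Duhamel map is a contraction: each component is dominated by `η` times
the envelope moving with its own speed, and has a continuous `x`-derivative with at most
a `t ^ (-1/2)` singularity. -/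
structure IsControlled (c : Bool → ℝ) (η : ℝ) (X : Jet) : Prop where
  continuousOn : ∀ j, j ≤ 1 → ∀ i,
    ContinuousOn (fun p : ℝ × ℝ => X j i p.1 p.2) {p | 0 < p.2}
  abs_le_envelope : ∀ i x t, 0 < t → |X 0 i x t| ≤ η * envelope (x + c i * t) t
  abs_deriv_le : ∀ i x t, 0 < t → |X 1 i x t| ≤ gradientWeight t
  hasDerivAt : ∀ i x t, 0 < t → HasDerivAt (fun x => X 0 i x t) (X 1 i x t) x

namespace IsControlled

variable {d c : Bool → ℝ} {f g : Bool → ℝ × ℝ → ℝ} {K L r η : ℝ} {X : Jet}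

lemma nonneg (hX : IsControlled c η X) : 0 ≤ η :=
  nonneg_of_mul_nonneg_left ((abs_nonneg _).trans (hX.abs_le_envelope false 0 1 one_pos))
    (envelope_pos zero_le_one _)

lemma norm_pairAt_zero_le (hX : IsControlled c η X) (x : ℝ) {t : ℝ} (ht : 0 < t) :
    ‖pairAt X 0 x t‖ ≤ η * (1 + t) ^ (-(1 / 2) : ℝ) :=
  norm_pairAt_le fun i => (hX.abs_le_envelope i x t ht).trans
    (mul_le_mul_of_nonneg_left (envelope_le_rpow ht.le _) hX.nonneg)

lemma norm_pairAt_zero_le_self (hX : IsControlled c η X) (x : ℝ) {t : ℝ} (ht : 0 < t) :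
    ‖pairAt X 0 x t‖ ≤ η :=
  (hX.norm_pairAt_zero_le x ht).trans
    (mul_le_of_le_one_right hX.nonneg (one_add_rpow_neg_half_le_one ht))

lemma norm_pairAt_one_le (hX : IsControlled c η X) (x : ℝ) {t : ℝ} (ht : 0 < t) :
    ‖pairAt X 1 x t‖ ≤ gradientWeight t :=
  norm_pairAt_le fun i => hX.abs_deriv_le i x t ht

lemma continuousOn_pairAt (hX : IsControlled c η X) {j : ℕ} (hj : j ≤ 1) :
    ContinuousOn (fun p : ℝ × ℝ => pairAt X j p.1 p.2) {p | 0 < p.2} :=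
  (hX.continuousOn j hj false).prodMk (hX.continuousOn j hj true)

lemma hasDerivAt_pairAt (hX : IsControlled c η X) (x : ℝ) {t : ℝ} (ht : 0 < t) :
    HasDerivAt (fun x => pairAt X 0 x t) (pairAt X 1 x t) x :=
  (hX.hasDerivAt false x t ht).prodMk (hX.hasDerivAt true x t ht)

lemma hasDerivAt_flux (hX : IsControlled c η X) (hP : AdmissibleSystem d c f g K L r) (i : Bool)
    (x : ℝ) {t : ℝ} (ht : 0 < t) : HasDerivAt (fun x => g i (pairAt X 0 x t))
      (fderiv ℝ (g i) (pairAt X 0 x t) (pairAt X 1 x t)) x :=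
  ((hP.contDiff_flux i).differentiable one_ne_zero _).hasFDerivAt.comp_hasDerivAt x
    (hX.hasDerivAt_pairAt x ht)

lemma abs_reaction_le (hX : IsControlled c η X) (hP : AdmissibleSystem d c f g K L r)
    (hη : η ≤ r) (i : Bool) (x : ℝ) {t : ℝ} (ht : 0 < t) :
    |f i (pairAt X 0 x t)| ≤ 3 * K * η * t ^ (-(1 / 2) : ℝ) := by
  have h_pair := hX.norm_pairAt_zero_le x ht
  have h_ball := (hX.norm_pairAt_zero_le_self x ht).trans hη
  have hK := hP.K_nonneg
  have hη0 := hX.nonneg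
  calc |f i (pairAt X 0 x t)| ≤ 3 * K * ‖pairAt X 0 x t‖ ^ 2 := hP.abs_reaction_le_sq i h_ball
    _ ≤ 3 * K * ‖pairAt X 0 x t‖ := by
      gcongr
      exact pow_le_of_le_one (norm_nonneg _) (h_ball.trans hP.radius_le_one) two_ne_zero
    _ ≤ 3 * K * (η * t ^ (-(1 / 2) : ℝ)) := by
      gcongr
      exact h_pair.trans (mul_le_mul_of_nonneg_left (one_add_rpow_neg_half_le ht) hη0)
    _ = _ := by ring

lemma abs_flux_deriv_le (hX : IsControlled c η X) (hP : AdmissibleSystem d c f g K L r)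
    (hη : η ≤ r) (i : Bool) (x : ℝ) {t : ℝ} (ht : 0 < t) :
    |fderiv ℝ (g i) (pairAt X 0 x t) (pairAt X 1 x t)| ≤ 2 * L * η * t ^ (-(1 / 2) : ℝ) := by
  have hL := hP.L_nonneg
  have hη0 := hX.nonneg
  have h_fderiv : ‖fderiv ℝ (g i) (pairAt X 0 x t)‖ ≤ L * (η * (1 + t) ^ (-(1 / 2) : ℝ)) :=
    (hP.norm_fderiv_flux_le i ((hX.norm_pairAt_zero_le_self x ht).trans hη)).trans
      (mul_le_mul_of_nonneg_left (hX.norm_pairAt_zero_le x ht) hL)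
  calc |fderiv ℝ (g i) (pairAt X 0 x t) (pairAt X 1 x t)|
      ≤ L * (η * (1 + t) ^ (-(1 / 2) : ℝ)) * gradientWeight t :=
        ContinuousLinearMap.le_of_opNorm_le_of_le _ h_fderiv (hX.norm_pairAt_one_le x ht)
    _ = L * η * ((1 + t) ^ (-(1 / 2) : ℝ) * gradientWeight t) := by ring
    _ ≤ L * η * (2 * t ^ (-(1 / 2) : ℝ)) :=
      mul_le_mul_of_nonneg_left (one_add_rpow_mul_gradientWeight_le ht) (by positivity)
    _ = _ := by ring

lemma isSource_reaction (hX : IsControlled c η X) (hP : AdmissibleSystem d c f g K L r)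
    (hη : η ≤ r) (i : Bool) : IsSource (3 * K * η) fun x t => f i (pairAt X 0 x t) where
  continuousOn :=
    (hP.continuous_reaction i).comp_continuousOn (hX.continuousOn_pairAt zero_le_one)
  bound x _ ht := hX.abs_reaction_le hP hη i x ht

lemma isSource_flux_deriv (hX : IsControlled c η X) (hP : AdmissibleSystem d c f g K L r)
    (hη : η ≤ r) (i : Bool) :
    IsSource (2 * L * η) fun x t => fderiv ℝ (g i) (pairAt X 0 x t) (pairAt X 1 x t) where
  continuousOn := (((hP.contDiff_flux i).continuous_fderiv one_ne_zero).comp_continuousOn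
    (hX.continuousOn_pairAt zero_le_one)).clm_apply (hX.continuousOn_pairAt le_rfl)
  bound x _ ht := hX.abs_flux_deriv_le hP hη i x ht

lemma isSource_source (hX : IsControlled c η X) (hP : AdmissibleSystem d c f g K L r)
    (hη : η ≤ r) (i : Bool) : IsSource ((3 * K + 2 * L) * η) (source f g X i) where
  continuousOn := (hX.isSource_reaction hP hη i).continuousOn.add
    (hX.isSource_flux_deriv hP hη i).continuousOn
  bound x t ht := by
    refine (abs_add_le _ _).trans ((add_le_add (hX.abs_reaction_le hP hη i x ht)
      (hX.abs_flux_deriv_le hP hη i x ht)).trans_eq ?_)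
    ring

end IsControlled

/-! ### The Duhamel map -/

/-- The constant of the bound of the heat evolution of `source` by the moving envelopes; `b` is
the difference of the two speeds. -/
def sourceConst (d K b : ℝ) : ℝ := heatEnvelopeConst d * (K * (1 + productConst b))

lemma sourceConst_nonneg {d K : ℝ} (hd : 0 < d) (hK : 0 ≤ K) (b : ℝ) : 0 ≤ sourceConst d K b := by
  have := productConst_nonneg b
  have := heatEnvelopeConst_pos hd
  unfold sourceConst
  positivity

section SourceEnvelope

variable {d c : Bool → ℝ} {f g : Bool → ℝ × ℝ → ℝ} {K L r η : ℝ} {X : Jet}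

namespace IsControlled

lemma abs_mul_le (hX : IsControlled c η X) {i : Bool} (hc : c (!i) - c i ≠ 0) (x : ℝ) {s : ℝ}
    (hs : 0 < s) : |X 0 i x s| * |X 0 (!i) x s| ≤
      η ^ 2 * (productConst (c (!i) - c i) * (1 + s) ^ (-(5 / 4) : ℝ) *
        (envelope (x + c i * s) s + envelope (x + c (!i) * s) s)) := by
  have h_env := envelope_pos hs.le (x + c i * s)
  have hη := hX.nonneg
  have h_product := envelope_mul_envelope_le (z := x + c i * s) hs.le hc
  rw [show x + c i * s + (c (!i) - c i) * s = x + c (!i) * s by ring] at h_product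
  calc |X 0 i x s| * |X 0 (!i) x s|
      ≤ η * envelope (x + c i * s) s * (η * envelope (x + c (!i) * s) s) :=
        mul_le_mul (hX.abs_le_envelope i x s hs) (hX.abs_le_envelope (!i) x s hs) (abs_nonneg _)
          (by positivity)
    _ = η ^ 2 * (envelope (x + c i * s) s * envelope (x + c (!i) * s) s) := by ring
    _ ≤ _ := mul_le_mul_of_nonneg_left h_product (by positivity)

lemma abs_pow_le (hX : IsControlled c η X) (hη : η ≤ 1) (i : Bool) (x : ℝ) {s : ℝ} (hs : 0 < s)
    {n : ℕ} {a : ℝ} (ha : a ≤ (n + 1) / 2) :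
    |X 0 i x s| ^ (n + 2) ≤ η ^ 2 * ((1 + s) ^ (-a) * envelope (x + c i * s) s) := by
  have h_env := envelope_pos hs.le (x + c i * s)
  have h_decay : envelope (x + c i * s) s ^ (n + 1) ≤ (1 + s) ^ (-a) := by
    calc envelope (x + c i * s) s ^ (n + 1) ≤ ((1 + s) ^ (-(1 / 2) : ℝ)) ^ (n + 1) := by
          gcongr
          exact envelope_le_rpow hs.le _
      _ = (1 + s) ^ (-((n + 1) / 2) : ℝ) := by
        rw [← Real.rpow_natCast, ← Real.rpow_mul (by positivity)]
        push_cast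
        ring_nf
      _ ≤ _ := Real.rpow_le_rpow_of_exponent_le (by linarith) (neg_le_neg ha)
  have hη0 := hX.nonneg
  calc |X 0 i x s| ^ (n + 2) ≤ (η * envelope (x + c i * s) s) ^ (n + 2) := by
        gcongr
        exact hX.abs_le_envelope i x s hs
    _ = η ^ (n + 2) * (envelope (x + c i * s) s ^ (n + 1) * envelope (x + c i * s) s) := by ring
    _ ≤ _ := by
      have : η ^ (n + 2) ≤ η ^ 2 := pow_le_pow_of_le_one hη0 hη (by lia)
      gcongr

lemma abs_reaction_le_envelope (hX : IsControlled c η X)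
    (hP : AdmissibleSystem d c f g K L r) (hη : η ≤ r) (i : Bool) (x : ℝ) {s : ℝ} (hs : 0 < s) :
    |f i (pairAt X 0 x s)| ≤ K * (1 + productConst (c (!i) - c i)) * η ^ 2 *
      (1 + s) ^ (-(5 / 4) : ℝ) * (envelope (x + c i * s) s + envelope (x + c (!i) * s) s) := by
  have h_pow := fun i => hX.abs_pow_le (hη.trans hP.radius_le_one) i x hs (n := 2) (a := 5 / 4)
    (by norm_num)
  have h_mixed := hX.abs_mul_le (hP.speed_sub_ne_zero i) x hs
  have h_taylor := hP.abs_reaction_le i _ ((hX.norm_pairAt_zero_le_self x hs).trans hη)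
  simp only [component_pairAt] at h_taylor
  have hK := hP.K_nonneg
  calc |f i (pairAt X 0 x s)| ≤ _ := h_taylor
    _ ≤ K * (η ^ 2 * ((1 + s) ^ (-(5 / 4) : ℝ) * envelope (x + c i * s) s) +
        η ^ 2 * (productConst (c (!i) - c i) * (1 + s) ^ (-(5 / 4) : ℝ) *
          (envelope (x + c i * s) s + envelope (x + c (!i) * s) s)) +
        η ^ 2 * ((1 + s) ^ (-(5 / 4) : ℝ) * envelope (x + c (!i) * s) s)) :=
      mul_le_mul_of_nonneg_left (add_le_add (add_le_add (h_pow i) h_mixed) (h_pow !i)) hK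
    _ = _ := by ring

lemma abs_flux_le_envelope (hX : IsControlled c η X) (hP : AdmissibleSystem d c f g K L r)
    (hη : η ≤ r) (i : Bool) (x : ℝ) {s : ℝ} (hs : 0 < s) :
    |g i (pairAt X 0 x s)| ≤ K * (1 + productConst (c (!i) - c i)) * η ^ 2 *
      ((1 + s) ^ (-(1 / 2) : ℝ) * envelope (x + c i * s) s +
        (1 + s) ^ (-1 : ℝ) * envelope (x + c (!i) * s) s) := by
  have h_own := hX.abs_pow_le (hη.trans hP.radius_le_one) i x hs (n := 0) (a := 1 / 2)
    (by norm_num)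
  have h_other := hX.abs_pow_le (hη.trans hP.radius_le_one) (!i) x hs (n := 1) (a := 1)
    (by norm_num)
  have h_mixed := hX.abs_mul_le (hP.speed_sub_ne_zero i) x hs
  have h_env := envelope_pos hs.le (x + c i * s)
  have h_env' := envelope_pos hs.le (x + c (!i) * s)
  have h_const := productConst_nonneg (c (!i) - c i)
  have h_half : (1 + s) ^ (-(5 / 4) : ℝ) ≤ (1 + s) ^ (-(1 / 2) : ℝ) :=
    Real.rpow_le_rpow_of_exponent_le (by linarith) (by norm_num)
  have h_one : (1 + s) ^ (-(5 / 4) : ℝ) ≤ (1 + s) ^ (-1 : ℝ) :=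
    Real.rpow_le_rpow_of_exponent_le (by linarith) (by norm_num)
  have h_taylor := hP.abs_flux_le i _ ((hX.norm_pairAt_zero_le_self x hs).trans hη)
  simp only [component_pairAt] at h_taylor
  have hK := hP.K_nonneg
  calc |g i (pairAt X 0 x s)| ≤ _ := h_taylor
    _ ≤ K * (η ^ 2 * ((1 + s) ^ (-(1 / 2) : ℝ) * envelope (x + c i * s) s) +
        η ^ 2 * (productConst (c (!i) - c i) *
          ((1 + s) ^ (-(1 / 2) : ℝ) * envelope (x + c i * s) s +
            (1 + s) ^ (-1 : ℝ) * envelope (x + c (!i) * s) s)) +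
        η ^ 2 * ((1 + s) ^ (-1 : ℝ) * envelope (x + c (!i) * s) s)) := by
      refine mul_le_mul_of_nonneg_left
        (add_le_add (add_le_add h_own (h_mixed.trans ?_)) h_other) hK
      rw [mul_assoc (productConst _), mul_add ((1 + s) ^ (-(5 / 4) : ℝ))]
      gcongr
    _ = _ := by ring

lemma duhamelIntegrand_source (hX : IsControlled c η X) (hP : AdmissibleSystem d c f g K L r)
    (hη : η ≤ r) (i : Bool) (x : ℝ) {s t : ℝ} (hs : 0 < s) (hst : s < t) :
    duhamelIntegrand 0 (d i) (c i) (source f g X i) x t s =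
      heatOp 0 (d i) (c i) (t - s) (fun y => f i (pairAt X 0 y s)) x +
        heatOp 1 (d i) (c i) (t - s) (fun y => g i (pairAt X 0 y s)) x := by
  have h_reaction := hX.isSource_reaction hP hη i
  have h_flux := hX.isSource_flux_deriv hP hη i
  have h_const := productConst_nonneg (c (!i) - c i)
  have hK := hP.K_nonneg
  have h_bdd := fun y => (hX.abs_flux_le_envelope hP hη i y hs).trans
    (mul_le_mul_of_nonneg_left (add_le_add
      (mul_le_of_le_one_right (by positivity) (envelope_le_one hs.le _))
      (mul_le_of_le_one_right (by positivity) (envelope_le_one hs.le _))) (by positivity))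
  rw [← heatOp_zero_deriv (hP.diffusion_pos i) (sub_pos.2 hst) (h_flux.continuous_slice hs)
      h_bdd (fun y => h_flux.bound y s hs) (fun y => hX.hasDerivAt_flux hP i y hs),
    ← heatOp_add zero_le_two (h_reaction.continuous_slice hs) (fun y => h_reaction.bound y s hs)
      (h_flux.continuous_slice hs) (fun y => h_flux.bound y s hs)]
  rfl

lemma abs_duhamelIntegrand_source_le (hX : IsControlled c η X)
    (hP : AdmissibleSystem d c f g K L r) (hη : η ≤ r) (i : Bool) (x : ℝ) {s t : ℝ} (hs : 0 < s)
    (hst : s < t) : |duhamelIntegrand 0 (d i) (c i) (source f g X i) x t s| ≤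
      sourceConst (d i) K (c (!i) - c i) * η ^ 2 *
        sourceWeight (c (!i) - c i) (x + c i * t) t s := by
  have hθ : 0 < t - s := sub_pos.2 hst
  have h_const := productConst_nonneg (c (!i) - c i)
  have hK := hP.K_nonneg
  set C := K * (1 + productConst (c (!i) - c i)) * η ^ 2 with hC
  have h_reaction := abs_heatOp_le_envelope (j := 0) (c := c i) zero_le_two (hP.diffusion_pos i)
    hs.le hθ (a := c i * s) (a' := c (!i) * s)
    (B := C * (1 + s) ^ (-(5 / 4) : ℝ)) (B' := C * (1 + s) ^ (-(5 / 4) : ℝ))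
    (by positivity) (by positivity)
    (fun y => (hX.abs_reaction_le_envelope hP hη i y hs).trans_eq (mul_add _ _ _)) x
  have h_flux := abs_heatOp_le_envelope (j := 1) (c := c i) one_le_two (hP.diffusion_pos i)
    hs.le hθ (a := c i * s) (a' := c (!i) * s)
    (B := C * (1 + s) ^ (-(1 / 2) : ℝ)) (B' := C * (1 + s) ^ (-1 : ℝ))
    (by positivity) (by positivity)
    (fun y => (hX.abs_flux_le_envelope hP hη i y hs).trans_eq (by ring)) x
  have h_own : x + c i * (t - s) + c i * s = x + c i * t := by ring
  have h_other : x + c i * (t - s) + c (!i) * s = x + c i * t + (c (!i) - c i) * s := by ring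
  rw [h_own, h_other, add_sub_cancel, Nat.cast_zero, neg_zero, zero_div, Real.rpow_zero]
    at h_reaction
  rw [h_own, h_other, add_sub_cancel, Nat.cast_one, neg_div] at h_flux
  rw [hX.duhamelIntegrand_source hP hη i x hs hst]
  refine (abs_add_le _ _).trans ((add_le_add h_reaction h_flux).trans_eq ?_)
  rw [hC, sourceConst, sourceWeight]
  ring

end IsControlled

end SourceEnvelope

/-- The Duhamel map of the system with initial data `u₀`. -/
def picardMap (d c : Bool → ℝ) (f g : Bool → ℝ × ℝ → ℝ) (u₀ : Bool → ℝ → ℝ) (X : Jet) : Jet :=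
  fun j i x t => heatOp j (d i) (c i) t (u₀ i) x + duhamel j (d i) (c i) (source f g X i) x t

/-- Initial data of size `δ` relative to the envelope, where `δ` and the size `η` of the solution
are so small that the Duhamel map preserves `IsControlled c η`. -/
structure SmallData (d c : Bool → ℝ) (K L η δ : ℝ) (u₀ : Bool → ℝ → ℝ) : Prop where
  data_le : δ ≤ η
  duhamel_small : ∀ i,
    duhamelConst (c (!i) - c i) * sourceConst (d i) K (c (!i) - c i) * η ≤ 1 / 2
  data_small : ∀ i, heatEnvelopeConst (d i) * δ ≤ η / 2
  data_deriv_small : ∀ i, heatConst (d i) * δ ≤ 1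
  duhamel_deriv_small : ∀ i, heatConst (d i) * ((3 * K + 2 * L) * η) * 8 ≤ 1
  continuous : ∀ i, Continuous (u₀ i)
  abs_le_envelope : ∀ i x, |u₀ i x| ≤ δ * envelope x 0

section PicardMap

variable {d c : Bool → ℝ} {f g : Bool → ℝ × ℝ → ℝ} {K L r η δ : ℝ} {u₀ : Bool → ℝ → ℝ} {X : Jet}

namespace SmallData

lemma nonneg (hS : SmallData d c K L η δ u₀) : 0 ≤ δ :=
  nonneg_of_mul_nonneg_left ((abs_nonneg _).trans (hS.abs_le_envelope false 0))
    (envelope_pos le_rfl _)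

lemma radius_nonneg (hS : SmallData d c K L η δ u₀) : 0 ≤ η :=
  hS.nonneg.trans hS.data_le

lemma abs_le (hS : SmallData d c K L η δ u₀) (i : Bool) (x : ℝ) : |u₀ i x| ≤ δ :=
  (hS.abs_le_envelope i x).trans (mul_le_of_le_one_right hS.nonneg (envelope_le_one le_rfl x))

lemma abs_heatOp_zero_le (hS : SmallData d c K L η δ u₀) (i : Bool) (hd : 0 < d i) (x : ℝ)
    {t : ℝ} (ht : 0 < t) :
    |heatOp 0 (d i) (c i) t (u₀ i) x| ≤ η / 2 * envelope (x + c i * t) t := by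
  have h_heat := abs_heatOp_le_envelope (j := 0) (c := c i) zero_le_two hd le_rfl ht hS.nonneg
    le_rfl (a := 0) (a' := 0) (fun y => by
      simpa only [add_zero, zero_mul] using hS.abs_le_envelope i y) x
  simp only [Nat.cast_zero, neg_zero, zero_div, Real.rpow_zero, mul_one, zero_mul, add_zero,
    zero_add, ← mul_assoc] at h_heat
  exact h_heat.trans (mul_le_mul_of_nonneg_right (hS.data_small i) (envelope_pos ht.le _).le)

end SmallData

namespace IsControlled

lemma abs_duhamel_zero_le (hX : IsControlled c η X) (hP : AdmissibleSystem d c f g K L r)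
    (hη : η ≤ r) (hS : SmallData d c K L η δ u₀) (i : Bool) (x : ℝ) {t : ℝ} (ht : 0 < t) :
    |duhamel 0 (d i) (c i) (source f g X i) x t| ≤ η / 2 * envelope (x + c i * t) t := by
  have h_env := envelope_pos ht.le (x + c i * t)
  have h_const := sourceConst_nonneg (hP.diffusion_pos i) hP.K_nonneg (c (!i) - c i)
  refine (abs_integral_le_envelope ht (hP.speed_sub_ne_zero i) (by positivity) fun s hs hst =>
    hX.abs_duhamelIntegrand_source_le hP hη i x hs hst).trans ?_
  refine mul_le_mul_of_nonneg_right ?_ h_env.le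
  nlinarith [hS.duhamel_small i, hX.nonneg]

lemma picardMap (hX : IsControlled c η X) (hP : AdmissibleSystem d c f g K L r) (hη : η ≤ r)
    (hS : SmallData d c K L η δ u₀) : IsControlled c η (picardMap d c f g u₀ X) where
  continuousOn j hj i := by
    have h_source := hX.isSource_source hP hη i
    refine (continuousOn_heatOp (hj.trans one_le_two) (hP.diffusion_pos i) (c i) (hS.continuous i)
      (hS.abs_le i)).add ?_
    interval_cases j
    · exact (h_source.isWeaklySingular_zero (hP.diffusion_pos i) (c i)).continuousOn_integral
    · exact (h_source.isWeaklySingular_one (hP.diffusion_pos i) (c i)).continuousOn_integral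
  abs_le_envelope i x t ht := by
    refine (abs_add_le _ _).trans ((add_le_add (hS.abs_heatOp_zero_le i (hP.diffusion_pos i) x ht)
      (hX.abs_duhamel_zero_le hP hη hS i x ht)).trans_eq ?_)
    ring
  abs_deriv_le i x t ht := by
    have h_heat := abs_heatOp_le (j := 1) (c := c i) one_le_two (hP.diffusion_pos i) ht.le
      (hS.abs_le i) x
    have h_duhamel := (hX.isSource_source hP hη i).abs_duhamel_one_le (hP.diffusion_pos i) (c i)
      x ht
    rw [Nat.cast_one, neg_div] at h_heat
    have : 0 < t ^ (-(1 / 2) : ℝ) := by positivity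
    refine (abs_add_le _ _).trans ((add_le_add h_heat h_duhamel).trans ?_)
    unfold gradientWeight
    nlinarith [hS.data_deriv_small i, hS.duhamel_deriv_small i]
  hasDerivAt i x t ht :=
    (hasDerivAt_heatOp zero_le_one (hP.diffusion_pos i) ht (hS.continuous i) (hS.abs_le i)
      x).add
      ((hX.isSource_source hP hη i).hasDerivAt_duhamel_zero (hP.diffusion_pos i) (c i) x ht)

end IsControlled

end PicardMap

/-! ### Contraction -/

lemma exp_neg_le_rpow {y : ℝ} (hy : 0 < y) : Real.exp (-y) ≤ y ^ (-(1 / 4) : ℝ) := by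
  rw [Real.rpow_def_of_pos hy, Real.exp_le_exp]
  linarith [Real.log_le_sub_one_of_pos hy]

lemma exp_mul_le_of_lt {lam s t : ℝ} (hlam : 0 < lam) (hst : s < t) :
    Real.exp (lam * s) ≤
      Real.exp (lam * t) * (lam ^ (-(1 / 4) : ℝ) * (t - s) ^ (-(1 / 4) : ℝ)) := by
  have hθ : 0 < t - s := sub_pos.2 hst
  calc Real.exp (lam * s) = Real.exp (lam * t) * Real.exp (-(lam * (t - s))) := by
        rw [← Real.exp_add]
        ring_nf
    _ ≤ Real.exp (lam * t) * (lam * (t - s)) ^ (-(1 / 4) : ℝ) := by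
      gcongr
      exact exp_neg_le_rpow (mul_pos hlam hθ)
    _ = _ := by rw [Real.mul_rpow hlam.le hθ.le]

lemma one_le_rpow_mul_rpow_neg {a s T : ℝ} (ha : 0 ≤ a) (hs : 0 < s) (hT : s ≤ T) :
    1 ≤ T ^ a * s ^ (-a) := by
  rw [Real.rpow_neg hs.le, ← div_eq_mul_inv, one_le_div (by positivity)]
  gcongr

lemma gradientWeight_le {s T : ℝ} (hs : 0 < s) (hT : s ≤ T) :
    gradientWeight s ≤ (1 + T ^ (1 / 2 : ℝ)) * s ^ (-(1 / 2) : ℝ) := by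
  unfold gradientWeight
  linarith [one_le_rpow_mul_rpow_neg (a := 1 / 2) (by norm_num) hs hT]

lemma one_add_gradientWeight_le {s T : ℝ} (hs : 0 < s) (hT : s ≤ T) :
    1 + gradientWeight s ≤ 2 * ((1 + T ^ (1 / 2 : ℝ)) * s ^ (-(1 / 2) : ℝ)) := by
  have : 0 < s ^ (-(1 / 2) : ℝ) := by positivity
  have h_weight := gradientWeight_le hs hT
  unfold gradientWeight at h_weight ⊢
  linarith

/-- The weight of the `j`-th derivatives in the metric of Bielecki type, with parameter `lam`,
for which the Duhamel map is a contraction. -/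
def bieleckiWeight (lam : ℝ) (j : ℕ) (t : ℝ) : ℝ := t ^ (-(j : ℝ) / 2) * Real.exp (lam * t)

lemma bieleckiWeight_zero (lam t : ℝ) : bieleckiWeight lam 0 t = Real.exp (lam * t) := by
  rw [bieleckiWeight, Nat.cast_zero, neg_zero, zero_div, Real.rpow_zero, one_mul]

lemma bieleckiWeight_one (lam t : ℝ) :
    bieleckiWeight lam 1 t = t ^ (-(1 / 2) : ℝ) * Real.exp (lam * t) := by
  rw [bieleckiWeight, Nat.cast_one, neg_div]

lemma bieleckiWeight_nonneg (lam : ℝ) (j : ℕ) {t : ℝ} (ht : 0 < t) :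
    0 ≤ bieleckiWeight lam j t := by
  unfold bieleckiWeight
  positivity

namespace IsSource

variable {d H H' : ℝ} {h h' : ℝ → ℝ → ℝ}

lemma intervalIntegrable_duhamelIntegrand (hs : IsSource H h) {j : ℕ} (hj : j ≤ 1) (hd : 0 < d)
    (c x : ℝ) {t : ℝ} (ht : 0 < t) :
    IntervalIntegrable (fun s => duhamelIntegrand j d c h x t s) volume 0 t := by
  interval_cases j
  · exact (hs.isWeaklySingular_zero hd c).intervalIntegrable x ht
  · exact (hs.isWeaklySingular_one hd c).intervalIntegrable x ht

lemma abs_duhamelIntegrand_sub_le (hs : IsSource H h) (hs' : IsSource H' h') {j : ℕ} (hj : j ≤ 2)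
    (hd : 0 < d) (c : ℝ) {lam A s t : ℝ} (hlam : 0 < lam) (hA : 0 ≤ A) (h_pos : 0 < s)
    (hst : s < t) (hsub : ∀ y, |h y s - h' y s| ≤ A * bieleckiWeight lam 1 s) (x : ℝ) :
    |duhamelIntegrand j d c h x t s - duhamelIntegrand j d c h' x t s| ≤
      heatConst d * A * (Real.exp (lam * t) * lam ^ (-(1 / 4) : ℝ)) *
        ((t - s) ^ (-((j : ℝ) / 2 + 1 / 4)) * s ^ (-(1 / 2) : ℝ)) := by
  have hθ : 0 < t - s := sub_pos.2 hst
  have h_const := heatConst_pos d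
  have h_exponent : (t - s) ^ (-((j : ℝ) / 2 + 1 / 4)) =
      (t - s) ^ (-(j : ℝ) / 2) * (t - s) ^ (-(1 / 4) : ℝ) := by
    rw [← Real.rpow_add hθ]
    ring_nf
  unfold duhamelIntegrand
  rw [← heatOp_sub hj (hs.continuous_slice h_pos) (fun y => hs.bound y s h_pos)
    (hs'.continuous_slice h_pos) (fun y => hs'.bound y s h_pos)]
  calc _ ≤ heatConst d * (t - s) ^ (-(j : ℝ) / 2) * (A * bieleckiWeight lam 1 s) :=
        abs_heatOp_le hj hd hθ.le hsub x
    _ ≤ heatConst d * (t - s) ^ (-(j : ℝ) / 2) * (A * (s ^ (-(1 / 2) : ℝ) *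
        (Real.exp (lam * t) * (lam ^ (-(1 / 4) : ℝ) * (t - s) ^ (-(1 / 4) : ℝ))))) := by
      rw [bieleckiWeight_one]
      gcongr
      exact exp_mul_le_of_lt hlam hst
    _ = _ := by
      rw [h_exponent]
      ring

lemma abs_duhamel_sub_le (hs : IsSource H h) (hs' : IsSource H' h') {j : ℕ} (hj : j ≤ 1)
    (hd : 0 < d) (c : ℝ) {lam A t T : ℝ} (hlam : 0 < lam) (hA : 0 ≤ A) (ht : 0 < t) (htT : t ≤ T)
    (hsub : ∀ y s, 0 < s → s ≤ T → |h y s - h' y s| ≤ A * bieleckiWeight lam 1 s) (x : ℝ) :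
    |duhamel j d c h x t - duhamel j d c h' x t| ≤
      12 * heatConst d * A * T ^ (1 / 4 : ℝ) * lam ^ (-(1 / 4) : ℝ) * bieleckiWeight lam j t := by
  have hj_real : (j : ℝ) ≤ 1 := by exact_mod_cast hj
  have : (0 : ℝ) ≤ j := Nat.cast_nonneg j
  have h_const := heatConst_pos d
  have h_beta := abs_integral_le_of_le_beta (a := (j : ℝ) / 2 + 1 / 4) (b := 1 / 2)
    ⟨by linarith, by linarith⟩ (by norm_num) ht (by positivity)
    fun s h_pos hst => hs.abs_duhamelIntegrand_sub_le hs' (hj.trans one_le_two) hd c hlam hA h_pos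
      hst (fun y => hsub y s h_pos (hst.le.trans htT)) x
  have h_power : t ^ (1 - ((j : ℝ) / 2 + 1 / 4) - 1 / 2) =
      t ^ (1 / 4 : ℝ) * t ^ (-(j : ℝ) / 2) := by
    rw [← Real.rpow_add ht]
    ring_nf
  have h_twelve : 2 / (1 - ((j : ℝ) / 2 + 1 / 4)) + 2 / (1 - 1 / 2) ≤ 12 := by
    have : 2 / (1 - ((j : ℝ) / 2 + 1 / 4)) ≤ 2 / (1 / 4) :=
      div_le_div_of_nonneg_left (by norm_num) (by norm_num) (by linarith)
    linarith
  unfold duhamel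
  rw [← intervalIntegral.integral_sub (hs.intervalIntegrable_duhamelIntegrand hj hd c x ht)
    (hs'.intervalIntegrable_duhamelIntegrand hj hd c x ht)]
  calc _ ≤ _ := h_beta
    _ ≤ heatConst d * A * (Real.exp (lam * t) * lam ^ (-(1 / 4) : ℝ)) *
        (12 * (T ^ (1 / 4 : ℝ) * t ^ (-(j : ℝ) / 2))) := by
      rw [h_power]
      gcongr
    _ = _ := by
      unfold bieleckiWeight
      ring

end IsSource

/-- Up to time `T` the jets `X` and `Y` have distance at most `D` in the Bielecki metric. -/
def CloseUpTo (T lam D : ℝ) (X Y : Jet) : Prop :=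
  ∀ j, j ≤ 1 → ∀ i x t, 0 < t → t ≤ T → |X j i x t - Y j i x t| ≤ D * bieleckiWeight lam j t

section Contraction

variable {d c : Bool → ℝ} {f g : Bool → ℝ × ℝ → ℝ} {K L r η : ℝ} {X Y : Jet}

lemma IsControlled.abs_source_sub_le (hX : IsControlled c η X) (hY : IsControlled c η Y)
    (hP : AdmissibleSystem d c f g K L r) (hη : η ≤ r) (i : Bool) (x y : ℝ) {s : ℝ}
    (hs : 0 < s) : |source f g X i x s - source f g Y i y s| ≤
      L * (1 + gradientWeight s) * ‖pairAt X 0 x s - pairAt Y 0 y s‖ +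
        L * ‖pairAt X 1 x s - pairAt Y 1 y s‖ := by
  have hL := hP.L_nonneg
  have h_ball := (hX.norm_pairAt_zero_le_self x hs).trans hη
  have h_ball' := (hY.norm_pairAt_zero_le_self y hs).trans hη
  have h_reaction := hP.abs_reaction_sub_le i _ _ h_ball h_ball'
  have h_coefficient := ContinuousLinearMap.le_of_opNorm_le_of_le _
    (hP.norm_fderiv_flux_sub_le i _ _ h_ball h_ball') (hX.norm_pairAt_one_le x hs)
  have h_gradient := ContinuousLinearMap.le_of_opNorm_le _
    ((hP.norm_fderiv_flux_le i h_ball').trans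
      (mul_le_of_le_one_right hL (h_ball'.trans hP.radius_le_one)))
    (pairAt X 1 x s - pairAt Y 1 y s)
  rw [sub_apply] at h_coefficient
  rw [map_sub] at h_gradient
  have h_split : source f g X i x s - source f g Y i y s =
      (f i (pairAt X 0 x s) - f i (pairAt Y 0 y s)) +
      (fderiv ℝ (g i) (pairAt X 0 x s) (pairAt X 1 x s) -
        fderiv ℝ (g i) (pairAt Y 0 y s) (pairAt X 1 x s)) +
      (fderiv ℝ (g i) (pairAt Y 0 y s) (pairAt X 1 x s) -
        fderiv ℝ (g i) (pairAt Y 0 y s) (pairAt Y 1 y s)) := by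
    unfold source
    ring
  rw [h_split]
  refine (abs_add_three _ _ _).trans
    ((add_le_add (add_le_add h_reaction h_coefficient) h_gradient).trans_eq ?_)
  ring

namespace CloseUpTo

variable {T lam D : ℝ}

lemma abs_source_sub_le (hC : CloseUpTo T lam D X Y) (hX : IsControlled c η X)
    (hY : IsControlled c η Y) (hP : AdmissibleSystem d c f g K L r) (hη : η ≤ r) (hD : 0 ≤ D)
    (i : Bool) (x : ℝ) {s : ℝ} (hs : 0 < s) (hT : s ≤ T) :
    |source f g X i x s - source f g Y i x s| ≤
      3 * L * (1 + T ^ (1 / 2 : ℝ)) * D * bieleckiWeight lam 1 s := by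
  have hL := hP.L_nonneg
  have h_zero : ‖pairAt X 0 x s - pairAt Y 0 x s‖ ≤ D * bieleckiWeight lam 0 s :=
    norm_pairAt_sub_le fun i => hC 0 zero_le_one i x s hs hT
  have h_one : ‖pairAt X 1 x s - pairAt Y 1 x s‖ ≤ D * bieleckiWeight lam 1 s :=
    norm_pairAt_sub_le fun i => hC 1 le_rfl i x s hs hT
  have h_weight := one_add_gradientWeight_le hs hT
  have h_power : 0 < s ^ (-(1 / 2) : ℝ) := by positivity
  have h_time : 0 ≤ T ^ (1 / 2 : ℝ) := Real.rpow_nonneg (hs.le.trans hT) _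
  rw [bieleckiWeight_zero] at h_zero
  rw [bieleckiWeight_one] at h_one ⊢
  calc _ ≤ _ := hX.abs_source_sub_le hY hP hη i x x hs
    _ ≤ L * (2 * ((1 + T ^ (1 / 2 : ℝ)) * s ^ (-(1 / 2) : ℝ))) * (D * Real.exp (lam * s)) +
        L * (D * ((1 + T ^ (1 / 2 : ℝ)) * s ^ (-(1 / 2) : ℝ) * Real.exp (lam * s))) := by
      gcongr
      refine h_one.trans ?_
      gcongr
      exact le_mul_of_one_le_left h_power.le (by linarith)
    _ = _ := by ring

lemma abs_picardMap_sub_le (hC : CloseUpTo T lam D X Y) (hX : IsControlled c η X)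
    (hY : IsControlled c η Y) (hP : AdmissibleSystem d c f g K L r) (hη : η ≤ r) (hD : 0 ≤ D)
    (hlam : 0 < lam) (u₀ : Bool → ℝ → ℝ) {j : ℕ} (hj : j ≤ 1) (i : Bool) (x : ℝ) {t : ℝ}
    (ht : 0 < t) (htT : t ≤ T) :
    |picardMap d c f g u₀ X j i x t - picardMap d c f g u₀ Y j i x t| ≤
      36 * heatConst (d i) * L * (1 + T ^ (1 / 2 : ℝ)) * T ^ (1 / 4 : ℝ) * lam ^ (-(1 / 4) : ℝ) *
        D * bieleckiWeight lam j t := by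
  have hL := hP.L_nonneg
  have hT : 0 < T := ht.trans_le htT
  unfold picardMap
  rw [add_sub_add_left_eq_sub]
  refine ((hX.isSource_source hP hη i).abs_duhamel_sub_le (hY.isSource_source hP hη i) hj
    (hP.diffusion_pos i) (c i) hlam (by positivity) ht htT
    (fun y s hs hsT => hC.abs_source_sub_le hX hY hP hη hD i y hs hsT) x).trans_eq ?_
  ring

end CloseUpTo

lemma exists_pos_mul_rpow_le_half {A : ℝ} (hA : 0 ≤ A) :
    ∃ lam : ℝ, 0 < lam ∧ A * lam ^ (-(1 / 4) : ℝ) ≤ 1 / 2 := by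
  refine ⟨(2 * (A + 1)) ^ (4 : ℝ), by positivity, ?_⟩
  rw [← Real.rpow_mul (by positivity), show (4 : ℝ) * -(1 / 4) = -1 by norm_num,
    Real.rpow_neg_one, ← div_eq_mul_inv, div_le_iff₀ (by positivity)]
  linarith

lemma AdmissibleSystem.exists_picardMap_contracting (hP : AdmissibleSystem d c f g K L r)
    (hη : η ≤ r) (u₀ : Bool → ℝ → ℝ) {T : ℝ} (hT : 0 < T) :
    ∃ lam, 0 < lam ∧ ∀ X Y, IsControlled c η X → IsControlled c η Y → ∀ D, 0 ≤ D →
      CloseUpTo T lam D X Y →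
      CloseUpTo T lam (D / 2) (picardMap d c f g u₀ X) (picardMap d c f g u₀ Y) := by
  have hL := hP.L_nonneg
  have h_const := heatConst_pos (d true)
  have h_const' := heatConst_pos (d false)
  obtain ⟨lam, hlam, h_half⟩ := exists_pos_mul_rpow_le_half (A := 36 * (heatConst (d true) +
    heatConst (d false)) * L * (1 + T ^ (1 / 2 : ℝ)) * T ^ (1 / 4 : ℝ)) (by positivity)
  refine ⟨lam, hlam, fun X Y hX hY D hD hC j hj i x t ht htT =>
    (hC.abs_picardMap_sub_le hX hY hP hη hD hlam u₀ hj i x ht htT).trans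
      (mul_le_mul_of_nonneg_right ?_ (bieleckiWeight_nonneg lam j ht))⟩
  have h_max : heatConst (d i) ≤ heatConst (d true) + heatConst (d false) := by
    cases i <;> linarith
  calc _ ≤ 36 * (heatConst (d true) + heatConst (d false)) * L * (1 + T ^ (1 / 2 : ℝ)) *
        T ^ (1 / 4 : ℝ) * lam ^ (-(1 / 4) : ℝ) * D := by gcongr
    _ ≤ 1 / 2 * D := by gcongr
    _ = _ := by ring

end Contraction

/-! ### The fixed point -/

/-- The Picard iterates of the Duhamel map, starting from the zero jet. -/
def picardIterate (d c : Bool → ℝ) (f g : Bool → ℝ × ℝ → ℝ) (u₀ : Bool → ℝ → ℝ) : ℕ → Jet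
  | 0 => fun _ _ _ _ => 0
  | n + 1 => picardMap d c f g u₀ (picardIterate d c f g u₀ n)

section Limit

variable {c : Bool → ℝ} {η T lam C : ℝ} {I : ℕ → Jet} {X : Jet}

lemma isControlled_zero (c : Bool → ℝ) (hη : 0 ≤ η) : IsControlled c η fun _ _ _ _ => 0 where
  continuousOn _ _ _ := continuousOn_const
  abs_le_envelope _ _ t ht := by
    rw [abs_zero]
    exact mul_nonneg hη (envelope_pos ht.le _).le
  abs_deriv_le _ _ t ht := by
    rw [abs_zero]
    unfold gradientWeight
    positivity
  hasDerivAt _ x _ _ := hasDerivAt_const x 0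

lemma bieleckiWeight_le {a t : ℝ} (hlam : 0 ≤ lam) (j : ℕ) (ha : 0 < a) (hat : a ≤ t)
    (htT : t ≤ T) : bieleckiWeight lam j t ≤ a ^ (-(j : ℝ) / 2) * Real.exp (lam * T) := by
  have h_exponent : -(j : ℝ) / 2 ≤ 0 := by
    have : (0 : ℝ) ≤ j := Nat.cast_nonneg j
    linarith
  exact mul_le_mul (Real.rpow_le_rpow_of_nonpos ha hat h_exponent)
    (Real.exp_le_exp.2 (mul_le_mul_of_nonneg_left htT hlam)) (Real.exp_pos _).le (by positivity)

lemma tendsto_div_two_pow (A : ℝ) : Tendsto (fun n : ℕ => A / 2 ^ n) atTop (𝓝 0) :=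
  tendsto_const_nhds.div_atTop (tendsto_pow_atTop_atTop_of_one_lt one_lt_two)

lemma exists_closeUpTo_limit {lam C : ℝ → ℝ}
    (hI : ∀ T, 0 < T → ∀ n, CloseUpTo T (lam T) (C T / 2 ^ n) (I n) (I (n + 1))) :
    ∃ X, ∀ T, 0 < T → ∀ n, CloseUpTo T (lam T) (2 * C T / 2 ^ n) (I n) X := by
  have h_dist : ∀ T, 0 < T → ∀ j, j ≤ 1 → ∀ i x t, 0 < t → t ≤ T → ∀ n,
      dist (I n j i x t) (I (n + 1) j i x t) ≤
        2 * C T * bieleckiWeight (lam T) j t / 2 / 2 ^ n := by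
    intro T hT j hj i x t ht htT n
    rw [Real.dist_eq]
    refine (hI T hT n j hj i x t ht htT).trans_eq ?_
    ring
  have h_limit : ∀ j, j ≤ 1 → ∀ i x t, 0 < t → ∃ a, Tendsto (fun n => I n j i x t) atTop (𝓝 a) :=
    fun j hj i x t ht => cauchySeq_tendsto_of_complete
      (cauchySeq_of_le_geometric_two (h_dist t ht j hj i x t ht le_rfl))
  choose! X hX using h_limit
  refine ⟨X, fun T hT n j hj i x t ht htT => ?_⟩
  rw [← Real.dist_eq]
  refine (dist_le_of_le_geometric_two_of_tendsto (h_dist T hT j hj i x t ht htT)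
    (hX j hj i x t ht) n).trans_eq ?_
  ring

lemma tendstoUniformlyOn_of_closeUpTo (hI : ∀ n, CloseUpTo T lam (C / 2 ^ n) (I n) X)
    (hlam : 0 ≤ lam) (hC : 0 ≤ C) {a : ℝ} (ha : 0 < a) {j : ℕ} (hj : j ≤ 1) (i : Bool) :
    TendstoUniformlyOn (fun n (q : ℝ × ℝ) => I n j i q.1 q.2) (fun q => X j i q.1 q.2) atTop
      {q | a ≤ q.2 ∧ q.2 ≤ T} := by
  rw [Metric.tendstoUniformlyOn_iff]
  intro ε hε
  filter_upwards [(tendsto_div_two_pow (C * (a ^ (-(j : ℝ) / 2) * Real.exp (lam * T)))).eventually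
    (gt_mem_nhds hε)] with n hn q hq
  rw [dist_comm, Real.dist_eq]
  refine (hI n j hj i q.1 q.2 (ha.trans_le hq.1) hq.2).trans_lt (lt_of_le_of_lt ?_ hn)
  calc C / 2 ^ n * bieleckiWeight lam j q.2
      ≤ C / 2 ^ n * (a ^ (-(j : ℝ) / 2) * Real.exp (lam * T)) :=
        mul_le_mul_of_nonneg_left (bieleckiWeight_le hlam j ha hq.1 hq.2) (by positivity)
    _ = _ := by ring

lemma isControlled_of_tendstoUniformlyOn (hI : ∀ n, IsControlled c η (I n))
    (hX : ∀ a T, 0 < a → 0 < T → ∀ j, j ≤ 1 → ∀ i,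
      TendstoUniformlyOn (fun n (q : ℝ × ℝ) => I n j i q.1 q.2) (fun q => X j i q.1 q.2) atTop
        {q | a ≤ q.2 ∧ q.2 ≤ T}) : IsControlled c η X := by
  have h_pointwise : ∀ j, j ≤ 1 → ∀ i x t, 0 < t →
      Tendsto (fun n => I n j i x t) atTop (𝓝 (X j i x t)) := fun j hj i x t ht =>
    (hX t t ht ht j hj i).tendsto_at (x := (x, t)) ⟨le_rfl, le_rfl⟩
  refine ⟨fun j hj i => ?_, fun i x t ht => ?_, fun i x t ht => ?_, fun i x t ht => ?_⟩
  · have h_locally : TendstoLocallyUniformlyOn (fun n (q : ℝ × ℝ) => I n j i q.1 q.2)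
        (fun q => X j i q.1 q.2) atTop {q | 0 < q.2} := by
      refine tendstoLocallyUniformlyOn_of_forall_exists_nhds fun q hq => ?_
      have hq_pos : 0 < q.2 := hq
      have h_slab : {p : ℝ × ℝ | q.2 / 2 ≤ p.2 ∧ p.2 ≤ 2 * q.2} ∈ 𝓝 q :=
        continuous_snd.continuousAt.preimage_mem_nhds
          (Icc_mem_nhds (by linarith) (by linarith))
      exact ⟨_, mem_nhdsWithin_of_mem_nhds h_slab,
        hX _ _ (by positivity) (by positivity) j hj i⟩
    exact h_locally.continuousOn (Frequently.of_forall fun n => (hI n).continuousOn j hj i)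
  · exact le_of_tendsto (h_pointwise 0 zero_le_one i x t ht).abs
      (Eventually.of_forall fun n => (hI n).abs_le_envelope i x t ht)
  · exact le_of_tendsto (h_pointwise 1 le_rfl i x t ht).abs
      (Eventually.of_forall fun n => (hI n).abs_deriv_le i x t ht)
  · have h_line : TendstoUniformlyOn (fun n x => I n 1 i x t) (fun x => X 1 i x t) atTop univ :=
      ((hX t t ht ht 1 le_rfl i).comp fun x : ℝ => (x, t)).mono fun x _ => ⟨le_rfl, le_rfl⟩
    exact hasDerivAt_of_tendstoUniformlyOn isOpen_univ h_line
      (Eventually.of_forall fun n x _ => (hI n).hasDerivAt i x t ht)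
      (fun x _ => h_pointwise 0 zero_le_one i x t ht) (mem_univ x)

end Limit

section FixedPoint

variable {d c : Bool → ℝ} {f g : Bool → ℝ × ℝ → ℝ} {K L r η δ : ℝ} {u₀ : Bool → ℝ → ℝ}

lemma SmallData.isControlled_picardIterate (hS : SmallData d c K L η δ u₀)
    (hP : AdmissibleSystem d c f g K L r) (hη : η ≤ r) (n : ℕ) :
    IsControlled c η (picardIterate d c f g u₀ n) := by
  induction n with
  | zero => exact isControlled_zero c hS.radius_nonneg
  | succ n ih => exact ih.picardMap hP hη hS

lemma IsControlled.closeUpTo_zero {X : Jet} {T lam : ℝ} (hX : IsControlled c η X) (hη : η ≤ 1)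
    (hlam : 0 ≤ lam) :
    CloseUpTo T lam (1 + T ^ (1 / 2 : ℝ)) (fun _ _ _ _ => 0) X := by
  intro j hj i x t ht htT
  have h_exp : 1 ≤ Real.exp (lam * t) := Real.one_le_exp (by positivity)
  have h_time : 0 ≤ T ^ (1 / 2 : ℝ) := Real.rpow_nonneg (ht.le.trans htT) _
  rw [zero_sub, abs_neg]
  interval_cases j
  · have h_value := (hX.abs_le_envelope i x t ht).trans
      (mul_le_of_le_one_right hX.nonneg (envelope_le_one ht.le _))
    rw [bieleckiWeight_zero]
    exact (h_value.trans hη).trans (one_le_mul_of_one_le_of_one_le (by linarith) h_exp)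
  · rw [bieleckiWeight_one, ← mul_assoc]
    exact ((hX.abs_deriv_le i x t ht).trans (gradientWeight_le ht htT)).trans
      (le_mul_of_one_le_right (by positivity) h_exp)

lemma SmallData.closeUpTo_picardIterate (hS : SmallData d c K L η δ u₀)
    (hP : AdmissibleSystem d c f g K L r) (hη : η ≤ r) {T lam : ℝ} (hT : 0 ≤ T) (hlam : 0 ≤ lam)
    (h_contracting : ∀ X Y, IsControlled c η X → IsControlled c η Y → ∀ D, 0 ≤ D →
      CloseUpTo T lam D X Y →
      CloseUpTo T lam (D / 2) (picardMap d c f g u₀ X) (picardMap d c f g u₀ Y)) (n : ℕ) :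
    CloseUpTo T lam ((1 + T ^ (1 / 2 : ℝ)) / 2 ^ n) (picardIterate d c f g u₀ n)
      (picardIterate d c f g u₀ (n + 1)) := by
  have h_iterate := hS.isControlled_picardIterate hP hη
  induction n with
  | zero =>
    rw [pow_zero, div_one]
    exact (h_iterate 1).closeUpTo_zero (hη.trans hP.radius_le_one) hlam
  | succ n ih =>
    rw [pow_succ, ← div_div]
    exact h_contracting _ _ (h_iterate n) (h_iterate (n + 1)) _ (by positivity) ih

lemma SmallData.exists_fixedPoint (hS : SmallData d c K L η δ u₀)
    (hP : AdmissibleSystem d c f g K L r) (hη : η ≤ r) :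
    ∃ X, IsControlled c η X ∧
      ∀ j, j ≤ 1 → ∀ i x t, 0 < t → X j i x t = picardMap d c f g u₀ X j i x t := by
  have h_iterate := hS.isControlled_picardIterate hP hη
  choose! lam hlam h_contracting using fun (T : ℝ) (hT : 0 < T) =>
    hP.exists_picardMap_contracting hη u₀ hT
  obtain ⟨X, h_close⟩ := exists_closeUpTo_limit (I := picardIterate d c f g u₀) fun T hT =>
    hS.closeUpTo_picardIterate hP hη hT.le (hlam T hT).le (h_contracting T hT)
  have h_uniform : ∀ a T, 0 < a → 0 < T → ∀ j, j ≤ 1 → ∀ i,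
      TendstoUniformlyOn (fun n (q : ℝ × ℝ) => picardIterate d c f g u₀ n j i q.1 q.2)
        (fun q => X j i q.1 q.2) atTop {q | a ≤ q.2 ∧ q.2 ≤ T} := fun a T ha hT j hj i =>
    tendstoUniformlyOn_of_closeUpTo (h_close T hT) (hlam T hT).le (by positivity) ha hj i
  have hX := isControlled_of_tendstoUniformlyOn h_iterate h_uniform
  refine ⟨X, hX, fun j hj i x t ht => ?_⟩
  have h_shifted : ∀ n, CloseUpTo t (lam t) (2 * (1 + t ^ (1 / 2 : ℝ)) / 2 / 2 ^ n)
      (picardIterate d c f g u₀ (n + 1)) (picardMap d c f g u₀ X) := fun n => by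
    rw [div_right_comm]
    exact h_contracting t ht _ X (h_iterate n) hX _ (by positivity) (h_close t ht n)
  have h_image := (tendstoUniformlyOn_of_closeUpTo h_shifted (hlam t ht).le (by positivity) ht hj
    i).tendsto_at (x := (x, t)) ⟨le_rfl, le_rfl⟩
  exact tendsto_nhds_unique (((h_uniform t t ht ht j hj i).tendsto_at (x := (x, t))
    ⟨le_rfl, le_rfl⟩).comp (tendsto_add_atTop_nat 1)) h_image

end FixedPoint

/-! ### Regularity of mild solutions -/

/-- Controlled jets all of whose entries agree with those of their own image under the Duhamel
map: these are the mild solutions with initial data `u₀`. -/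
structure IsMildSolution (d c : Bool → ℝ) (f g : Bool → ℝ × ℝ → ℝ) (u₀ : Bool → ℝ → ℝ) (η : ℝ)
    (X : Jet) : Prop extends IsControlled c η X where
  eq_picardMap : ∀ j i x t, 0 ≤ t → X j i x t = picardMap d c f g u₀ X j i x t

section MildSolution

variable {d c : Bool → ℝ} {f g : Bool → ℝ × ℝ → ℝ} {K L r η δ : ℝ} {u₀ : Bool → ℝ → ℝ} {X : Jet}

lemma SmallData.exists_isMildSolution (hS : SmallData d c K L η δ u₀)
    (hP : AdmissibleSystem d c f g K L r) (hη : η ≤ r) :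
    ∃ X, IsMildSolution d c f g u₀ η X := by
  obtain ⟨X, hX, h_fixed⟩ := hS.exists_fixedPoint hP hη
  have h_source : ∀ i y s, 0 < s →
      source f g X i y s = source f g (picardMap d c f g u₀ X) i y s := fun i y s hs => by
    simp only [source, pairAt, h_fixed 0 zero_le_one _ y s hs, h_fixed 1 le_rfl _ y s hs]
  exact ⟨picardMap d c f g u₀ X, hX.picardMap hP hη hS, fun j i x t ht =>
    congrArg (heatOp j (d i) (c i) t (u₀ i) x + ·) (duhamel_congr ht (h_source i))⟩

lemma rpow_neg_half_mul_rpow_neg_quarter {s : ℝ} (hs : 0 < s) :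
    s ^ (-(1 / 2) : ℝ) * s ^ (-(1 / 4) : ℝ) = s ^ (-(3 / 4) : ℝ) := by
  rw [← Real.rpow_add hs]
  norm_num

lemma rpow_neg_quarter_le {s T : ℝ} (hs : 0 < s) (hT : s ≤ T) :
    s ^ (-(1 / 4) : ℝ) ≤ T ^ (1 / 2 : ℝ) * s ^ (-(3 / 4) : ℝ) := by
  rw [← rpow_neg_half_mul_rpow_neg_quarter hs, ← mul_assoc]
  exact le_mul_of_one_le_left (by positivity) (one_le_rpow_mul_rpow_neg (by norm_num) hs hT)

/-- Interpolation between the sup bound of the values and the bound of their derivatives. -/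
lemma IsControlled.norm_pairAt_zero_sub_le (hX : IsControlled c η X) (hη : η ≤ 1) (x y : ℝ)
    {s T : ℝ} (hs : 0 < s) (hT : s ≤ T) : ‖pairAt X 0 x s - pairAt X 0 y s‖ ≤
      √(2 * (1 + T ^ (1 / 2 : ℝ))) * s ^ (-(1 / 4) : ℝ) * √|x - y| := by
  have hT_pos : 0 < T := hs.trans_le hT
  have h_sup : ‖pairAt X 0 x s - pairAt X 0 y s‖ ≤ 2 := by
    linarith [norm_sub_le (pairAt X 0 x s) (pairAt X 0 y s), hX.norm_pairAt_zero_le_self x hs,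
      hX.norm_pairAt_zero_le_self y hs]
  have h_lipschitz : ‖pairAt X 0 x s - pairAt X 0 y s‖ ≤
      (1 + T ^ (1 / 2 : ℝ)) * s ^ (-(1 / 2) : ℝ) * |x - y| :=
    convex_univ.norm_image_sub_le_of_norm_hasDerivWithin_le
      (fun x _ => (hX.hasDerivAt_pairAt x hs).hasDerivWithinAt)
      (fun x _ => (hX.norm_pairAt_one_le x hs).trans (gradientWeight_le hs hT))
      (mem_univ y) (mem_univ x)
  have h_root : √(s ^ (-(1 / 2) : ℝ)) = s ^ (-(1 / 4) : ℝ) := by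
    rw [Real.sqrt_eq_rpow, ← Real.rpow_mul hs.le]
    norm_num
  refine (le_sqrt_mul (norm_nonneg _) h_sup h_lipschitz).trans_eq ?_
  rw [← h_root, ← Real.sqrt_mul (by positivity), ← Real.sqrt_mul (by positivity)]
  ring_nf

namespace IsMildSolution

lemma apply_zero_time (hX : IsMildSolution d c f g u₀ η X) (i : Bool) (x : ℝ) :
    X 0 i x 0 = u₀ i x := by
  rw [hX.eq_picardMap 0 i x 0 le_rfl, picardMap, heatOp_zero_time, duhamel_zero_time, add_zero]

lemma abs_deriv_sub_le (hX : IsMildSolution d c f g u₀ η X)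
    (hP : AdmissibleSystem d c f g K L r) (hη : η ≤ r) (hS : SmallData d c K L η δ u₀) (i : Bool)
    (x y : ℝ) {s T : ℝ} (hs : 0 < s) (hT : s ≤ T) : |X 1 i x s - X 1 i y s| ≤
      heatConst (d i) * (2 * δ + 24 * ((3 * K + 2 * L) * η) * T ^ (1 / 2 : ℝ)) *
        s ^ (-(3 / 4) : ℝ) * √|x - y| := by
  have h_const := heatConst_pos (d i)
  have h_source := hX.isSource_source hP hη i
  have h_size := h_source.nonneg
  rw [hX.eq_picardMap 1 i x s hs.le, hX.eq_picardMap 1 i y s hs.le, picardMap, picardMap,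
    add_sub_add_comm]
  calc _ ≤ _ := (abs_add_le _ _).trans (add_le_add
        (abs_heatOp_one_sub_le (hP.diffusion_pos i) hs (hS.continuous i) (hS.abs_le i) x y)
        (h_source.abs_duhamel_one_sub_le (hP.diffusion_pos i) (c i) x y hs))
    _ ≤ 2 * heatConst (d i) * s ^ (-(3 / 4) : ℝ) * δ * √|x - y| +
        24 * heatConst (d i) * ((3 * K + 2 * L) * η) * √|x - y| *
          (T ^ (1 / 2 : ℝ) * s ^ (-(3 / 4) : ℝ)) := by
      gcongr
      exact rpow_neg_quarter_le hs hT
    _ = _ := by ring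

lemma exists_norm_pairAt_one_sub_le (hX : IsMildSolution d c f g u₀ η X)
    (hP : AdmissibleSystem d c f g K L r) (hη : η ≤ r) (hS : SmallData d c K L η δ u₀) {T : ℝ}
    (hT : 0 < T) : ∃ B, 0 ≤ B ∧ ∀ x y s, 0 < s → s ≤ T →
      ‖pairAt X 1 x s - pairAt X 1 y s‖ ≤ B * s ^ (-(3 / 4) : ℝ) * √|x - y| := by
  have h_const := heatConst_pos (d true)
  have h_const' := heatConst_pos (d false)
  have h_size := (hX.isSource_source hP hη true).nonneg
  have hδ := hS.nonneg
  refine ⟨(heatConst (d true) + heatConst (d false)) *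
    (2 * δ + 24 * ((3 * K + 2 * L) * η) * T ^ (1 / 2 : ℝ)), by positivity,
    fun x y s hs hsT => norm_pairAt_sub_le fun i =>
      (hX.abs_deriv_sub_le hP hη hS i x y hs hsT).trans ?_⟩
  gcongr
  cases i <;> linarith

lemma isHolderSource_source (hX : IsMildSolution d c f g u₀ η X)
    (hP : AdmissibleSystem d c f g K L r) (hη : η ≤ r) (hS : SmallData d c K L η δ u₀)
    (i : Bool) : IsHolderSource (source f g X i) := by
  intro T hT
  have hL := hP.L_nonneg
  obtain ⟨B, hB, h_one⟩ := hX.exists_norm_pairAt_one_sub_le hP hη hS hT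
  set C := 1 + T ^ (1 / 2 : ℝ)
  have : 0 ≤ C := by positivity
  refine ⟨L * (2 * C) * √(2 * C) + L * B, by positivity, fun x y s hs hsT => ?_⟩
  calc _ ≤ _ := hX.abs_source_sub_le hX.toIsControlled hP hη i x y hs
    _ ≤ L * (2 * (C * s ^ (-(1 / 2) : ℝ))) * (√(2 * C) * s ^ (-(1 / 4) : ℝ) * √|x - y|) +
        L * (B * s ^ (-(3 / 4) : ℝ) * √|x - y|) := by
      gcongr
      · exact one_add_gradientWeight_le hs hsT
      · exact hX.norm_pairAt_zero_sub_le (hη.trans hP.radius_le_one) x y hs hsT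
      · exact h_one x y s hs hsT
    _ = _ := by
      rw [← rpow_neg_half_mul_rpow_neg_quarter hs]
      ring

lemma continuousOn_of_nonneg (hX : IsMildSolution d c f g u₀ η X)
    (hP : AdmissibleSystem d c f g K L r) (hη : η ≤ r) (hS : SmallData d c K L η δ u₀)
    (i : Bool) : ContinuousOn (fun p : ℝ × ℝ => X 0 i p.1 p.2) {p | 0 ≤ p.2} :=
  ((continuous_heatOp_zero (d i) (c i) (hS.continuous i) (hS.abs_le i)).continuousOn.add
    ((hX.isSource_source hP hη i).continuousOn_duhamel_zero (hP.diffusion_pos i) (c i))).congr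
    fun p hp => hX.eq_picardMap 0 i p.1 p.2 hp

lemma abs_le_envelope_of_nonneg (hX : IsMildSolution d c f g u₀ η X)
    (hS : SmallData d c K L η δ u₀) (i : Bool) (x : ℝ) {t : ℝ} (ht : 0 ≤ t) :
    |X 0 i x t| ≤ η * envelope (x + c i * t) t := by
  rcases ht.lt_or_eq with ht | rfl
  · exact hX.abs_le_envelope i x t ht
  · rw [hX.apply_zero_time, mul_zero, add_zero]
    exact (hS.abs_le_envelope i x).trans
      (mul_le_mul_of_nonneg_right hS.data_le (envelope_pos le_rfl x).le)

lemma continuousOn_two (hX : IsMildSolution d c f g u₀ η X)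
    (hP : AdmissibleSystem d c f g K L r) (hη : η ≤ r) (hS : SmallData d c K L η δ u₀)
    (i : Bool) : ContinuousOn (fun p : ℝ × ℝ => X 2 i p.1 p.2) {p | 0 < p.2} :=
  ((continuousOn_heatOp le_rfl (hP.diffusion_pos i) (c i) (hS.continuous i) (hS.abs_le i)).add
    ((hX.isSource_source hP hη i).isWeaklySingular_two (hX.isHolderSource_source hP hη hS i)
      (hP.diffusion_pos i) (c i)).continuousOn_integral).congr
    fun p hp => hX.eq_picardMap 2 i p.1 p.2 (le_of_lt hp)

lemma hasDerivAt_one (hX : IsMildSolution d c f g u₀ η X) (hP : AdmissibleSystem d c f g K L r)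
    (hη : η ≤ r) (hS : SmallData d c K L η δ u₀) (i : Bool) (x : ℝ) {t : ℝ} (ht : 0 < t) :
    HasDerivAt (fun x => X 1 i x t) (X 2 i x t) x := by
  simp only [fun j x => hX.eq_picardMap j i x t ht.le]
  exact (hasDerivAt_heatOp le_rfl (hP.diffusion_pos i) ht (hS.continuous i) (hS.abs_le i) x).add
    ((hX.isSource_source hP hη i).hasDerivAt_duhamel_one (hX.isHolderSource_source hP hη hS i)
      (hP.diffusion_pos i) (c i) x ht)

lemma hasDerivAt_time (hX : IsMildSolution d c f g u₀ η X) (hP : AdmissibleSystem d c f g K L r)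
    (hη : η ≤ r) (hS : SmallData d c K L η δ u₀) (i : Bool) (x : ℝ) {t : ℝ} (ht : 0 < t) :
    HasDerivAt (fun t => X 0 i x t)
      (d i * X 2 i x t + c i * X 1 i x t + source f g X i x t) t := by
  have h_heat := hasDerivAt_heatOp_time (c := c i) (hP.diffusion_pos i) ht (hS.continuous i)
    (hS.abs_le i) x
  have h_duhamel := (hX.isSource_source hP hη i).hasDerivAt_duhamel_time
    (hX.isHolderSource_source hP hη hS i) (hP.diffusion_pos i) (c i) x ht
  have h_eventually : (fun t => X 0 i x t) =ᶠ[𝓝 t] fun t => picardMap d c f g u₀ X 0 i x t := by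
    filter_upwards [lt_mem_nhds ht] with s hs using hX.eq_picardMap 0 i x s (le_of_lt hs)
  refine ((h_heat.add h_duhamel).congr_of_eventuallyEq h_eventually).congr_deriv ?_
  rw [hX.eq_picardMap 2 i x t ht.le, hX.eq_picardMap 1 i x t ht.le]
  unfold picardMap
  ring

lemma continuousOn_time_deriv (hX : IsMildSolution d c f g u₀ η X)
    (hP : AdmissibleSystem d c f g K L r) (hη : η ≤ r) (hS : SmallData d c K L η δ u₀)
    (i : Bool) : ContinuousOn (fun p : ℝ × ℝ =>
      d i * X 2 i p.1 p.2 + c i * X 1 i p.1 p.2 + source f g X i p.1 p.2) {p | 0 < p.2} :=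
  ((continuousOn_const.mul (hX.continuousOn_two hP hη hS i)).add
    (continuousOn_const.mul (hX.continuousOn 1 le_rfl i))).add
    (hX.isSource_source hP hη i).continuousOn

end IsMildSolution

end MildSolution

/-! ### Classical solutions and small data -/

section Assembly

variable {d c : Bool → ℝ} {f g : Bool → ℝ × ℝ → ℝ} {K L r η δ : ℝ} {u₀ : Bool → ℝ → ℝ} {X : Jet}

lemma exists_lipschitz_on_ball {ι E G : Type*} [Finite ι] [NormedAddCommGroup E]
    [NormedSpace ℝ E] [ProperSpace E] [NormedAddCommGroup G] [NormedSpace ℝ G] {F : ι → E → G}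
    (hF : ∀ i, ContDiff ℝ 1 (F i)) (r : ℝ) :
    ∃ L : ℝ, 0 ≤ L ∧ ∀ i w w', ‖w‖ ≤ r → ‖w'‖ ≤ r → ‖F i w - F i w'‖ ≤ L * ‖w - w'‖ := by
  cases nonempty_fintype ι
  have h_ball := fun i => (hF i).contDiffOn.exists_lipschitzOnWith one_ne_zero
    (convex_closedBall (0 : E) r) (isCompact_closedBall 0 r)
  choose L hL using h_ball
  refine ⟨(∑ i, L i : NNReal), NNReal.coe_nonneg _, fun i w w' hw hw' => ?_⟩
  have h_lipschitz := (hL i).norm_sub_le (mem_closedBall_zero_iff.2 hw)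
    (mem_closedBall_zero_iff.2 hw')
  exact h_lipschitz.trans (mul_le_mul_of_nonneg_right (NNReal.coe_le_coe.2
    (Finset.single_le_sum (fun _ _ => zero_le) (Finset.mem_univ i))) (norm_nonneg _))

lemma fderiv_zero_of_abs_le_sq {E : Type*} [NormedAddCommGroup E] [NormedSpace ℝ E] {G : E → ℝ}
    (hr : 0 < r) (hG : ∀ w, ‖w‖ ≤ r → |G w| ≤ K * ‖w‖ ^ 2) : fderiv ℝ G 0 = 0 := by
  have h_quadratic : G =O[𝓝 0] fun w => ‖w - 0‖ ^ 2 := by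
    refine Asymptotics.IsBigO.of_bound K ?_
    filter_upwards [Metric.closedBall_mem_nhds (0 : E) hr] with w hw
    simpa using hG w (mem_closedBall_zero_iff.1 hw)
  exact (h_quadratic.hasFDerivAt one_lt_two).fderiv

lemma exists_admissibleSystem (hd : ∀ i, 0 < d i) (hc : ∀ i, c (!i) - c i ≠ 0) (hr : 0 < r)
    (hf : ∀ i, ContDiff ℝ 1 (f i)) (hg : ∀ i, ContDiff ℝ 2 (g i))
    (h_reaction : ∀ i w, ‖w‖ ≤ r → |f i w| ≤ K * (|component i w| ^ 4 +
      |component i w| * |component (!i) w| + |component (!i) w| ^ 4))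
    (h_flux : ∀ i w, ‖w‖ ≤ r → |g i w| ≤ K * (|component i w| ^ 2 +
      |component i w| * |component (!i) w| + |component (!i) w| ^ 3)) :
    ∃ L, AdmissibleSystem d c f g K L (min r 1) := by
  have hK : 0 ≤ K := by
    have h_bound := h_reaction false (r, r) (by simp [Prod.norm_def, abs_of_pos hr])
    simp only [component, Bool.not_false, cond_false, cond_true] at h_bound
    exact nonneg_of_mul_nonneg_left ((abs_nonneg _).trans h_bound) (by positivity)
  have h_left : min r 1 ≤ r := min_le_left r 1
  obtain ⟨L, hL, h_lipschitz⟩ := exists_lipschitz_on_ball hf (min r 1)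
  obtain ⟨L', hL', h_lipschitz'⟩ :=
    exists_lipschitz_on_ball (fun i => (hg i).fderiv_right one_add_one_eq_two.le) (min r 1)
  refine ⟨L + L', hd, hc, hK, by positivity, lt_min hr one_pos, min_le_right r 1,
    fun i w hw => h_reaction i w (hw.trans h_left), fun i w hw => h_flux i w (hw.trans h_left),
    fun i w w' hw hw' => (h_lipschitz i w w' hw hw').trans ?_,
    fun i w w' hw hw' => (h_lipschitz' i w w' hw hw').trans ?_,
    fun i => fderiv_zero_of_abs_le_sq (K := 3 * K) (lt_min hr one_pos) fun w hw => ?_,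
    fun i => (hf i).continuous, fun i => (hg i).of_le one_le_two⟩
  · exact mul_le_mul_of_nonneg_right (le_add_of_nonneg_right hL') (norm_nonneg _)
  · exact mul_le_mul_of_nonneg_right (le_add_of_nonneg_left hL) (norm_nonneg _)
  · have h_own := abs_component_le_norm i w
    have h_other := abs_component_le_norm (!i) w
    have : ‖w‖ ^ 3 ≤ ‖w‖ ^ 2 :=
      pow_le_pow_of_le_one (norm_nonneg _) (hw.trans (min_le_right r 1)) (by norm_num)
    calc |g i w| ≤ _ := h_flux i w (hw.trans h_left)
      _ ≤ K * (‖w‖ ^ 2 + ‖w‖ * ‖w‖ + ‖w‖ ^ 3) := by gcongr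
      _ ≤ K * (‖w‖ ^ 2 + ‖w‖ * ‖w‖ + ‖w‖ ^ 2) := by gcongr
      _ = _ := by ring

lemma eventually_mul_le (A : ℝ) {B : ℝ} (hB : 0 < B) : ∀ᶠ x in 𝓝[>] (0 : ℝ), A * x ≤ B := by
  have h_lim : Tendsto (fun x => A * x) (𝓝 0) (𝓝 0) := by
    simpa using (continuous_const_mul A).tendsto 0
  exact (h_lim.mono_left nhdsWithin_le_nhds).eventually_le_const hB

lemma AdmissibleSystem.exists_smallData (hP : AdmissibleSystem d c f g K L r) {ε : ℝ}
    (hε : 0 < ε) : ∃ η δ, 0 < δ ∧ η ≤ r ∧ 2 * η ≤ ε ∧ 2 * envelopeMass * η ≤ ε ∧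
      ∀ u₀ : Bool → ℝ → ℝ, (∀ i, Continuous (u₀ i)) → (∀ i x, |u₀ i x| ≤ δ * envelope x 0) →
        SmallData d c K L η δ u₀ := by
  have h_radius := (eventually_mul_le 1 hP.radius_pos).and <| (eventually_mul_le 2 hε).and <|
    (eventually_mul_le (2 * envelopeMass) hε).and <|
    (eventually_all.2 fun i => eventually_mul_le
      (duhamelConst (c (!i) - c i) * sourceConst (d i) K (c (!i) - c i)) one_half_pos).and <|
    (eventually_all.2 fun i =>
      eventually_mul_le (heatConst (d i) * (3 * K + 2 * L) * 8) one_pos).and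
    self_mem_nhdsWithin
  obtain ⟨η, h_le, h_sup, h_mass, h_duhamel, h_deriv, hη⟩ := h_radius.exists
  have h_data := (eventually_mul_le 1 hη).and <|
    (eventually_all.2 fun i => eventually_mul_le (heatEnvelopeConst (d i)) (half_pos hη)).and <|
    (eventually_all.2 fun i => eventually_mul_le (heatConst (d i)) one_pos).and
    self_mem_nhdsWithin
  obtain ⟨δ, hδη, h_heat, h_heat_deriv, hδ⟩ := h_data.exists
  rw [one_mul] at h_le hδη
  exact ⟨η, δ, hδ, h_le, h_sup, h_mass, fun u₀ hu₀ h_env =>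
    ⟨hδη, h_duhamel, h_heat, h_heat_deriv, fun i => by linarith [h_deriv i], hu₀, h_env⟩⟩

lemma integrable_mul_envelope_add (η a : ℝ) {t : ℝ} (ht : 0 ≤ t) :
    Integrable fun x => η * envelope (x + a) t :=
  ((integrable_envelope ht).comp_add_right a).const_mul η

lemma integral_mul_envelope_add (η a : ℝ) {t : ℝ} (ht : 0 ≤ t) :
    ∫ x, η * envelope (x + a) t = η * envelopeMass := by
  rw [integral_const_mul, integral_add_right_eq_self (fun x => envelope x t), integral_envelope ht]

namespace IsMildSolution

lemma continuous_slice (hX : IsMildSolution d c f g u₀ η X)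
    (hP : AdmissibleSystem d c f g K L r) (hη : η ≤ r) (hS : SmallData d c K L η δ u₀) (i : Bool)
    {t : ℝ} (ht : 0 ≤ t) : Continuous fun x => X 0 i x t :=
  (hX.continuousOn_of_nonneg hP hη hS i).comp_continuous (f := fun x => (x, t)) (by fun_prop)
    fun _ => ht

lemma isClassicalSolution (hX : IsMildSolution d c f g u₀ η X)
    (hP : AdmissibleSystem d c f g K L r) (hη : η ≤ r) (hS : SmallData d c K L η δ u₀) :
    IsClassicalSolution (d false) (d true) (c false) (c true) (f false) (f true) (g false)
      (g true) ⊤ (u₀ false) (u₀ true) (X 0 false) (X 0 true) := by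
  have h_le : ∀ i x t, 0 ≤ t → |X 0 i x t| ≤ η := fun i x t ht =>
    (hX.abs_le_envelope_of_nonneg hS i x ht).trans
      (mul_le_of_le_one_right hX.nonneg (envelope_le_one ht _))
  have h_time := hX.continuousOn_time_deriv hP hη hS
  have h_one := hX.continuousOn 1 le_rfl
  have h_two := hX.continuousOn_two hP hη hS
  refine ⟨hX.apply_zero_time false, hX.apply_zero_time true,
    ((hX.continuousOn_of_nonneg hP hη hS false).prodMk
      (hX.continuousOn_of_nonneg hP hη hS true)).mono fun p hp => hp.1,
    fun _ _ _ => ⟨η + η, fun x t ht _ => add_le_add (h_le false x t ht) (h_le true x t ht)⟩,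
    _, _, X 1 false, X 1 true, X 2 false, X 2 true, _, _,
    fun x t ht _ => ⟨hX.hasDerivAt_time hP hη hS false x ht, hX.hasDerivAt false x t ht,
      hX.hasDerivAt_one hP hη hS false x ht, hX.hasDerivAt_flux hP false x ht,
      hX.hasDerivAt_time hP hη hS true x ht, hX.hasDerivAt true x t ht,
      hX.hasDerivAt_one hP hη hS true x ht, hX.hasDerivAt_flux hP true x ht,
      (add_assoc _ _ _).symm, (add_assoc _ _ _).symm⟩,
    ((h_time false).prodMk ((h_one false).prodMk ((h_two false).prodMk
      ((h_time true).prodMk ((h_one true).prodMk (h_two true)))))).mono fun p hp => hp.1⟩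

lemma sum_abs_le (hX : IsMildSolution d c f g u₀ η X) (hS : SmallData d c K L η δ u₀) (x : ℝ)
    {t : ℝ} (ht : 0 ≤ t) : |X 0 false x t| + |X 0 true x t| ≤
      η * envelope (x + c false * t) t + η * envelope (x + c true * t) t :=
  add_le_add (hX.abs_le_envelope_of_nonneg hS false x ht)
    (hX.abs_le_envelope_of_nonneg hS true x ht)

lemma sum_abs_le_div_sqrt (hX : IsMildSolution d c f g u₀ η X) (hS : SmallData d c K L η δ u₀)
    (x : ℝ) {t : ℝ} (ht : 0 ≤ t) : |X 0 false x t| + |X 0 true x t| ≤ 2 * η / √(1 + t) := by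
  have h_env := fun z => mul_le_mul_of_nonneg_left (envelope_le_rpow ht z) hX.nonneg
  refine (hX.sum_abs_le hS x ht).trans ((add_le_add (h_env _) (h_env _)).trans_eq ?_)
  rw [Real.rpow_neg (by positivity), ← Real.sqrt_eq_rpow]
  ring

lemma integrable_sum_abs (hX : IsMildSolution d c f g u₀ η X)
    (hP : AdmissibleSystem d c f g K L r) (hη : η ≤ r) (hS : SmallData d c K L η δ u₀) {t : ℝ}
    (ht : 0 ≤ t) : Integrable fun x => |X 0 false x t| + |X 0 true x t| := by
  have h_cont := fun i => hX.continuous_slice hP hη hS i ht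
  have h_int := fun a => integrable_mul_envelope_add η a ht
  refine ((h_int (c false * t)).add (h_int (c true * t))).mono'
    ((h_cont false).abs.add (h_cont true).abs).aestronglyMeasurable (ae_of_all _ fun x => ?_)
  rw [Real.norm_of_nonneg (by positivity)]
  exact hX.sum_abs_le hS x ht

lemma integral_sum_abs_le (hX : IsMildSolution d c f g u₀ η X)
    (hP : AdmissibleSystem d c f g K L r) (hη : η ≤ r) (hS : SmallData d c K L η δ u₀) {t : ℝ}
    (ht : 0 ≤ t) : ∫ x, (|X 0 false x t| + |X 0 true x t|) ≤ 2 * envelopeMass * η := by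
  have h_int := fun a => integrable_mul_envelope_add η a ht
  calc ∫ x, (|X 0 false x t| + |X 0 true x t|)
      ≤ ∫ x, (η * envelope (x + c false * t) t + η * envelope (x + c true * t) t) :=
        integral_mono (hX.integrable_sum_abs hP hη hS ht) ((h_int _).add (h_int _))
          fun x => hX.sum_abs_le hS x ht
    _ = η * envelopeMass + η * envelopeMass := by
      rw [integral_add (h_int _) (h_int _), integral_mul_envelope_add η _ ht,
        integral_mul_envelope_add η _ ht]
    _ = _ := by ring

end IsMildSolution

end Assembly

lemma continuous_of_holderCont {α : ℝ} (hα : 0 < α) {u : ℝ → ℝ} (hu : HolderCont α u) :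
    Continuous u := by
  obtain ⟨C, hC⟩ := hu
  refine continuous_iff_continuousAt.2 fun y => tendsto_iff_dist_tendsto_zero.2 ?_
  have h_modulus : Continuous fun x => C * |x - y| ^ α :=
    continuous_const.mul (Continuous.rpow_const (by fun_prop) fun _ => Or.inr hα.le)
  have h_lim := h_modulus.tendsto y
  rw [sub_self, abs_zero, Real.zero_rpow hα.ne', mul_zero] at h_lim
  exact squeeze_zero (fun _ => dist_nonneg) (fun x => hC x y) h_lim

lemma abs_le_envelope_of_gaussian {M δ a x : ℝ} (hM : 1 ≤ M)
    (h : |a| * Real.exp (x ^ 2 / M) < δ / M) : |a| ≤ δ * envelope x 0 := by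
  have : 0 < M := zero_lt_one.trans_le hM
  have h_nonneg : 0 ≤ δ / M := (by positivity : 0 ≤ |a| * Real.exp (x ^ 2 / M)).trans h.le
  calc |a| = |a| * Real.exp (x ^ 2 / M) * Real.exp (-(x ^ 2 / M)) := by
        rw [mul_assoc, ← Real.exp_add, add_neg_cancel, Real.exp_zero, mul_one]
    _ ≤ δ / M * (M * envelope x 0) := by
      gcongr
      exact exp_neg_sq_div_le_envelope hM x
    _ = δ * envelope x 0 := by field_simp

end GRD

theorem global_existence_irrelevant_couplings_general
    (d₁ d₂ c₁ c₂ : ℝ) (hd₁ : 0 < d₁) (hd₂ : 0 < d₂) (hc : c₁ ≠ c₂) (f₁ f₂ g₁ g₂ : ℝ × ℝ → ℝ)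
    (hf₁ : ContDiff ℝ 1 f₁) (hf₂ : ContDiff ℝ 1 f₂) (hg₁ : ContDiff ℝ 2 g₁) (hg₂ : ContDiff ℝ 2 g₂)
    (C₀ r₀ : ℝ) (hr₀ : 0 < r₀)
    (hnl : ∀ u v : ℝ, |u| ≤ r₀ → |v| ≤ r₀ →
      |f₁ (u, v)| ≤ C₀ * (|u| ^ 4 + |u| * |v| + |v| ^ 4) ∧
      |g₁ (u, v)| ≤ C₀ * (|u| ^ 2 + |u| * |v| + |v| ^ 3) ∧
      |f₂ (u, v)| ≤ C₀ * (|v| ^ 4 + |u| * |v| + |u| ^ 4) ∧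
      |g₂ (u, v)| ≤ C₀ * (|v| ^ 2 + |u| * |v| + |u| ^ 3)) (ε : ℝ) (hε : 0 < ε) :
    ∃ δ : ℝ, 0 < δ ∧ ∀ u₀ v₀ : ℝ → ℝ, Continuous u₀ → Continuous v₀ →
      (∀ x : ℝ, |u₀ x| ≤ δ * GRD.envelope x 0) → (∀ x : ℝ, |v₀ x| ≤ δ * GRD.envelope x 0) →
      ∃ u v : ℝ → ℝ → ℝ, IsClassicalSolution d₁ d₂ c₁ c₂ f₁ f₂ g₁ g₂ ⊤ u₀ v₀ u v ∧
        ∀ t : ℝ, 0 ≤ t → (∀ x : ℝ, |u x t| + |v x t| ≤ ε / √(1 + t)) ∧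
          Integrable (fun x : ℝ => |u x t| + |v x t|) ∧ ∫ x : ℝ, (|u x t| + |v x t|) ≤ ε := by
  have h_bounds := fun w : ℝ × ℝ => fun hw : ‖w‖ ≤ r₀ =>
    hnl w.1 w.2 ((norm_fst_le w).trans hw) ((norm_snd_le w).trans hw)
  obtain ⟨L, hP⟩ := GRD.exists_admissibleSystem (d := (cond · d₂ d₁)) (c := (cond · c₂ c₁))
    (f := (cond · f₂ f₁)) (g := (cond · g₂ g₁)) (K := C₀) (Bool.rec hd₁ hd₂)
    (Bool.rec (sub_ne_zero.2 hc.symm) (sub_ne_zero.2 hc)) hr₀ (Bool.rec hf₁ hf₂)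
    (Bool.rec hg₁ hg₂) (Bool.rec (fun w hw => (h_bounds w hw).1) fun w hw =>
      mul_comm |w.1| |w.2| ▸ (h_bounds w hw).2.2.1)
    (Bool.rec (fun w hw => (h_bounds w hw).2.1) fun w hw =>
      mul_comm |w.1| |w.2| ▸ (h_bounds w hw).2.2.2)
  obtain ⟨η, δ, hδ, hη, h_sup, h_mass, h_small⟩ := hP.exists_smallData hε
  refine ⟨δ, hδ, fun u₀ v₀ hu₀ hv₀ h_u h_v => ?_⟩
  have hS := h_small (cond · v₀ u₀) (Bool.rec hu₀ hv₀) (Bool.rec h_u h_v)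
  obtain ⟨X, hX⟩ := hS.exists_isMildSolution hP hη
  exact ⟨X 0 false, X 0 true, hX.isClassicalSolution hP hη hS, fun t ht =>
    ⟨fun x => (hX.sum_abs_le_div_sqrt hS x ht).trans (by gcongr),
      hX.integrable_sum_abs hP hη hS ht, (hX.integral_sum_abs_le hP hη hS ht).trans h_mass⟩⟩

/-- Theorem 1.4: global existence and decay allowing for irrelevant nonlinear
couplings which are not of mix-type. -/
theorem global_existence_irrelevant_couplings
    (α d₁ d₂ c₁ c₂ : ℝ) (hα : α ∈ Set.Ioo (0 : ℝ) 1)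
    (hd₁ : 0 < d₁) (hd₂ : 0 < d₂) (hc : c₁ ≠ c₂)
    (f₁ f₂ g₁ g₂ : ℝ × ℝ → ℝ)
    (hf₁ : IsC2Holder α f₁) (hf₂ : IsC2Holder α f₂)
    (hg₁ : IsC2Holder α g₁) (hg₂ : IsC2Holder α g₂)
    (C₀ r₀ : ℝ) (hC₀ : 1 < C₀) (hr₀ : 0 < r₀)
    (hnl : ∀ u v : ℝ, |u| ≤ r₀ → |v| ≤ r₀ →
      |f₁ (u, v)| ≤ C₀ * (|u| ^ 4 + |u| * |v| + |v| ^ 4) ∧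
      |g₁ (u, v)| ≤ C₀ * (|u| ^ 2 + |u| * |v| + |v| ^ 3) ∧
      |f₂ (u, v)| ≤ C₀ * (|v| ^ 4 + |u| * |v| + |u| ^ 4) ∧
      |g₂ (u, v)| ≤ C₀ * (|v| ^ 2 + |u| * |v| + |u| ^ 3)) :
    ∃ M₀ : ℝ, 1 ≤ M₀ ∧
      ∀ M : ℝ, M₀ ≤ M → ∀ ε : ℝ, 0 < ε → ∃ δ : ℝ, 0 < δ ∧
        ∀ u₀ v₀ : ℝ → ℝ,
          (∃ B : ℝ, ∀ x : ℝ, |u₀ x| ≤ B) → (∃ B : ℝ, ∀ x : ℝ, |v₀ x| ≤ B) →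
          HolderCont α u₀ → HolderCont α v₀ →
          (∀ x : ℝ, |u₀ x| * Real.exp (x ^ 2 / M) < δ) →
          (∀ x : ℝ, |v₀ x| * Real.exp (x ^ 2 / M) < δ) →
          ∃ u v : ℝ → ℝ → ℝ,
            IsClassicalSolution d₁ d₂ c₁ c₂ f₁ f₂ g₁ g₂ ⊤ u₀ v₀ u v ∧
            ∀ t : ℝ, 0 ≤ t →
              (∀ x : ℝ, |u x t| + |v x t| ≤ ε / Real.sqrt (1 + t)) ∧
              Integrable (fun x : ℝ => |u x t| + |v x t|) ∧
              (∫ x : ℝ, (|u x t| + |v x t|)) ≤ ε := by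
  refine ⟨1, le_rfl, fun M hM ε hε => ?_⟩
  obtain ⟨δ, hδ, h_solution⟩ := global_existence_irrelevant_couplings_general d₁ d₂ c₁ c₂ hd₁ hd₂
    hc f₁ f₂ g₁ g₂ (hf₁.1.of_le one_le_two) (hf₂.1.of_le one_le_two) hg₁.1 hg₂.1 C₀ r₀ hr₀ hnl ε hε
  exact ⟨δ / M, div_pos hδ (zero_lt_one.trans_le hM), fun u₀ v₀ _ _ hu₀ hv₀ h_u h_v =>
    h_solution u₀ v₀ (GRD.continuous_of_holderCont hα.1 hu₀)
      (GRD.continuous_of_holderCont hα.1 hv₀) (fun x => GRD.abs_le_envelope_of_gaussian hM (h_u x))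
      fun x => GRD.abs_le_envelope_of_gaussian hM (h_v x)⟩
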